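/- arXiv:2105.08406 — 3 statements merged into one kernel-verified Lean document; each statement's English description precedes it below -/
import Mathlib

section
/- The 12 points (526,446,232), (0,756,64), (612,660,342), (708,638,193), (546,563,134), (616,622,174), (414,0,370), (548,594,151), (884,1334,722), (452,668,180), (587,659,156), (579,692,0) in ℝ³ are in general position and contain no 7 points in convex position; hence g⁽³⁾(7) ≥ 13. -/
/-!
Both claims reduce to signs of determinants. If `D` is the determinant of the matrix with rows
`(1, p i)`, then `D ≠ 0` makes the points `p i` affinely independent, and by Cramer's rule the
barycentric coordinates of a point `x` with respect to them are `D i / D`, where `D i` is obtained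
from `D` by putting `x` in the place of `p i`. The given points are integral, so these signs are
computed over `ℤ`.

For the absence of 7-gons, 82 of the five-point subsets that consist of a tetrahedron and a point in
its interior already suffice: five points never meet all of them, so the complement of any five
points, that is, any set of seven points, contains one of them.
-/

/-- A finite set `S` of points in `ℝ^d` is in *general position* if every
`(d+1)`-element subset of `S` is affinely independent. -/
def InGeneralPosition (d : ℕ) (S : Finset (Fin d → ℝ)) : Prop :=
  ∀ T ⊆ S, T.card = d + 1 → AffineIndependent ℝ ((↑) : T → (Fin d → ℝ))

/-- A finite set of points is in *convex position* if no point of the set lies in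
the convex hull of the other points of the set. -/
def InConvexPosition (d : ℕ) (X : Finset (Fin d → ℝ)) : Prop :=
  ∀ p ∈ X, p ∉ convexHull ℝ (↑(X.erase p) : Set (Fin d → ℝ))

/-- The explicit 12-point configuration in ℝ³ witnessing `g⁽³⁾(7) ≥ 13`. -/
noncomputable def witnessSet : Finset (Fin 3 → ℝ) :=
  { ![526, 446, 232], ![0, 756, 64], ![612, 660, 342], ![708, 638, 193],
    ![546, 563, 134], ![616, 622, 174], ![414, 0, 370], ![548, 594, 151],
    ![884, 1334, 722], ![452, 668, 180], ![587, 659, 156], ![579, 692, 0] }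

open Finset Function

section SimplexDet

variable {d : ℕ}

/-- The square matrix whose rows are the homogeneous coordinates `(1, p i)` of the points `p i`. -/
def homogeneousMatrix {R : Type*} [CommRing R] (p : Fin (d + 1) → Fin d → R) :
    Matrix (Fin (d + 1)) (Fin (d + 1)) R :=
  Matrix.of fun i ↦ Matrix.vecCons 1 (p i)

/-- `d!` times the signed volume of the simplex with vertices `p i`. -/
def simplexDet {R : Type*} [CommRing R] (p : Fin (d + 1) → Fin d → R) : R :=
  (homogeneousMatrix p).det

/-- The point `x` lies in the interior of the nondegenerate simplex with vertices `p i`: every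
barycentric coordinate `simplexDet (update p i x) / simplexDet p` of `x` is positive. The quotient
is replaced by a product so that the condition makes sense, and can be evaluated, over `ℤ`. -/
def MemSimplexInterior {R : Type*} [CommRing R] [LT R] (p : Fin (d + 1) → Fin d → R)
    (x : Fin d → R) : Prop :=
  ∀ i, 0 < simplexDet (update p i x) * simplexDet p

section CommRing

variable {R S : Type*} [CommRing R] [CommRing S]

lemma simplexDet_map (f : R →+* S) (p : Fin (d + 1) → Fin d → R) :
    simplexDet ((f ∘ ·) ∘ p) = f (simplexDet p) := by
  rw [simplexDet, simplexDet, RingHom.map_det]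
  congr 1
  ext i j
  cases j using Fin.cases <;> simp [homogeneousMatrix]

lemma MemSimplexInterior.map [Preorder R] [Preorder S] {f : R →+* S} (hf : StrictMono f)
    {p : Fin (d + 1) → Fin d → R} {x : Fin d → R} (h : MemSimplexInterior p x) :
    MemSimplexInterior ((f ∘ ·) ∘ p) (f ∘ x) := by
  intro i
  rw [← comp_update (f ∘ ·), simplexDet_map, simplexDet_map, ← map_mul, ← map_zero f]
  exact hf (h i)

lemma MemSimplexInterior.ne [NeZero d] [Preorder R] {p : Fin (d + 1) → Fin d → R} {x : Fin d → R}
    (h : MemSimplexInterior p x) (j : Fin (d + 1)) : p j ≠ x := by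
  rintro rfl
  obtain ⟨i, hij⟩ := exists_ne j
  have hdet : simplexDet (update p i (p j)) = 0 :=
    Matrix.det_zero_of_row_eq hij (by ext k; simp [homogeneousMatrix, hij.symm])
  simpa [hdet] using h i

lemma updateRow_homogeneousMatrix (p : Fin (d + 1) → Fin d → R) (i : Fin (d + 1))
    (x : Fin d → R) :
    (homogeneousMatrix p).updateRow i (Matrix.vecCons 1 x) = homogeneousMatrix (update p i x) := by
  ext j k
  by_cases hji : j = i <;> simp [homogeneousMatrix, Matrix.updateRow_apply, update_apply, hji]

/-- Cramer's rule for the barycentric coordinates of `x`: the zeroth coordinate of this identity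
says that they sum to one, the others that they represent `x`. -/
lemma sum_simplexDet_update_smul_vecCons (p : Fin (d + 1) → Fin d → R) (x : Fin d → R) :
    ∑ i, simplexDet (update p i x) • Matrix.vecCons 1 (p i) =
      simplexDet p • Matrix.vecCons 1 x := by
  set M := homogeneousMatrix p with hM
  calc
    ∑ i, simplexDet (update p i x) • Matrix.vecCons 1 (p i)
      = ∑ i, M.transpose.cramer (Matrix.vecCons 1 x) i • M i := by
        simp only [Matrix.cramer_transpose_apply, hM, updateRow_homogeneousMatrix]
        rfl
    _ = M.transpose.mulVec (M.transpose.cramer (Matrix.vecCons 1 x)) := by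
        rw [Matrix.mulVec_transpose, Matrix.vecMul_eq_sum]
    _ = simplexDet p • Matrix.vecCons 1 x := by
        rw [Matrix.mulVec_cramer, Matrix.det_transpose, simplexDet]

lemma sum_simplexDet_update (p : Fin (d + 1) → Fin d → R) (x : Fin d → R) :
    ∑ i, simplexDet (update p i x) = simplexDet p := by
  simpa using congrFun (sum_simplexDet_update_smul_vecCons p x) 0

lemma sum_simplexDet_update_smul (p : Fin (d + 1) → Fin d → R) (x : Fin d → R) :
    ∑ i, simplexDet (update p i x) • p i = simplexDet p • x := by
  ext k
  simpa using congrFun (sum_simplexDet_update_smul_vecCons p x) k.succ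

lemma simplexDet_eq_det_sub (p : Fin (d + 1) → Fin d → R) :
    simplexDet p = (Matrix.of fun i j ↦ p i.succ j - p 0 j).det := by
  have hrows : simplexDet p =
      (Matrix.of (Fin.cons (Matrix.vecCons 1 (p 0))
        fun i : Fin d ↦ Matrix.vecCons 0 (p i.succ - p 0))).det := by
    refine Matrix.det_eq_of_forall_row_eq_smul_add_const (fun i ↦ if i = 0 then 0 else 1) 0 rfl
      fun i j ↦ ?_
    cases i using Fin.cases <;> cases j using Fin.cases <;> simp [homogeneousMatrix]
  rw [hrows, Matrix.det_succ_column_zero, Fin.sum_univ_succ]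
  simp only [Matrix.of_apply, Fin.cons_zero, Fin.cons_succ, Matrix.cons_val_zero, mul_zero,
    zero_mul, sum_const_zero, add_zero, Fin.val_zero, pow_zero, mul_one, one_mul,
    Fin.succAbove_zero]
  rfl

lemma affineIndependent_of_simplexDet_ne_zero [IsDomain R] {p : Fin (d + 1) → Fin d → R}
    (hp : simplexDet p ≠ 0) : AffineIndependent R p := by
  rw [affineIndependent_iff_of_fintype]
  intro w hw hwp i
  rw [weightedVSub_eq_linear_combination univ hw] at hwp
  refine congrFun (Matrix.eq_zero_of_vecMul_eq_zero hp (funext fun k ↦ ?_)) i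
  cases k using Fin.cases with
  | zero => simpa [homogeneousMatrix, Matrix.vecMul, dotProduct] using hw
  | succ k => simpa [homogeneousMatrix, Matrix.vecMul, dotProduct] using congrFun hwp k

end CommRing

lemma MemSimplexInterior.mem_convexHull {K : Type*} [Field K] [LinearOrder K]
    [IsStrictOrderedRing K] {p : Fin (d + 1) → Fin d → K} {x : Fin d → K}
    (h : MemSimplexInterior p x) : x ∈ convexHull K (Set.range p) := by
  have hp : simplexDet p ≠ 0 := right_ne_zero_of_mul (h 0).ne'
  have hx : x = ∑ i, (simplexDet (update p i x) / simplexDet p) • p i := by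
    simp_rw [div_eq_inv_mul, mul_smul, ← smul_sum, sum_simplexDet_update_smul]
    rw [inv_smul_smul₀ hp]
  rw [hx]
  refine (convex_convexHull K _).sum_mem (fun i _ ↦ ?_) ?_
    fun i _ ↦ subset_convexHull K _ (Set.mem_range_self i)
  · exact (div_pos_iff.2 (mul_pos_iff.1 (h i))).le
  · rw [← sum_div, sum_simplexDet_update, div_self hp]

end SimplexDet

section Position

variable {d : ℕ}

lemma inGeneralPosition_image_univ {ι : Type*} [Fintype ι] [LinearOrder ι] {q : ι → Fin d → ℝ}
    (hq : Injective q) (h : ∀ v : Fin (d + 1) → ι, StrictMono v → simplexDet (q ∘ v) ≠ 0) :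
    InGeneralPosition d (univ.image q) := by
  intro T hT hcard
  obtain ⟨I, -, rfl⟩ := subset_image_iff.1 hT
  rw [card_image_of_injective _ hq] at hcard
  have hind := affineIndependent_of_simplexDet_ne_zero (h _ (I.orderEmbOfFin hcard).strictMono)
  have hrange : Set.range (q ∘ I.orderEmbOfFin hcard) = I.image q := by
    rw [Set.range_comp, range_orderEmbOfFin, coe_image]
  have hind_range := hind.range
  rw [hrange] at hind_range
  exact hind_range

lemma not_inConvexPosition_of_memSimplexInterior [NeZero d] {X : Finset (Fin d → ℝ)}
    {p : Fin (d + 1) → Fin d → ℝ} {x : Fin d → ℝ} (hx : x ∈ X) (hp : ∀ i, p i ∈ X)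
    (h : MemSimplexInterior p x) : ¬ InConvexPosition d X := fun hX ↦
  hX x hx <| convexHull_mono
    (Set.range_subset_iff.2 fun i ↦ mem_coe.2 (mem_erase.2 ⟨h.ne i, hp i⟩)) h.mem_convexHull

end Position

section Transversal

variable {α : Type*} [DecidableEq α]

/-- Whether no set of at most `k` elements meets all the edges in the list `L`, decided by
branching: such a set contains an element `x` of the first edge, and its other elements meet all the
edges avoiding `x`. -/
def hasNoTransversal : ℕ → List (List α) → Bool
  | _, [] => false
  | 0, _ :: _ => true
  | k + 1, e :: L => e.all fun x ↦ hasNoTransversal k (L.filter (x ∉ ·))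

lemma exists_mem_forall_notMem_of_hasNoTransversal {k : ℕ} {L : List (List α)}
    (h : hasNoTransversal k L = true) {J : Finset α} (hJ : J.card ≤ k) :
    ∃ e ∈ L, ∀ x ∈ e, x ∉ J := by
  induction k, L using hasNoTransversal.induct generalizing J with
  | case1 => simp [hasNoTransversal] at h
  | case2 e L =>
    rw [card_eq_zero.1 (Nat.le_zero.1 hJ)]
    exact ⟨e, by simp, by simp⟩
  | case3 k e L ih =>
    by_cases he : ∀ x ∈ e, x ∉ J
    · exact ⟨e, List.mem_cons_self, he⟩
    push Not at he
    obtain ⟨x, hxe, hxJ⟩ := he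
    rw [hasNoTransversal, List.all_eq_true] at h
    obtain ⟨f, hf, hfJ⟩ := ih x (h x hxe) (J := J.erase x) (by grind [card_erase_of_mem])
    obtain ⟨hfL, hxf⟩ : f ∈ L ∧ x ∉ f := by simpa using hf
    refine ⟨f, List.mem_cons_of_mem e hfL, fun y hy hyJ ↦ hfJ y hy (mem_erase.2 ⟨?_, hyJ⟩)⟩
    rintro rfl
    exact hxf hy

end Transversal

section Witness

/-- The integer coordinates of the 12 points, in the order of `witnessSet`. -/
def witnessPointInt : Fin 12 → Fin 3 → ℤ :=
  ![![526, 446, 232], ![0, 756, 64], ![612, 660, 342], ![708, 638, 193],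
    ![546, 563, 134], ![616, 622, 174], ![414, 0, 370], ![548, 594, 151],
    ![884, 1334, 722], ![452, 668, 180], ![587, 659, 156], ![579, 692, 0]]

/-- The 12 points of `witnessSet` as an indexed family in `ℝ³`. -/
def witnessPoint : Fin 12 → Fin 3 → ℝ :=
  (Int.castRingHom ℝ ∘ ·) ∘ witnessPointInt

lemma witnessPoint_injective : Injective witnessPoint :=
  (Int.cast_injective.comp_left).comp (by decide +kernel)

lemma witnessSet_eq_image_witnessPoint : witnessSet = univ.image witnessPoint := by
  have hcoord (i : Fin 12) :
      witnessPoint i = ![(witnessPointInt i 0 : ℝ), witnessPointInt i 1, witnessPointInt i 2] := by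
    ext k
    fin_cases k <;> rfl
  ext x
  simp [witnessSet, Fin.exists_fin_succ, hcoord, witnessPointInt, eq_comm]

lemma simplexDet_witnessPointInt_ne_zero :
    ∀ i j, i < j → ∀ k, j < k → ∀ l, k < l → simplexDet (witnessPointInt ∘ ![i, j, k, l]) ≠ 0 := by
  simp only [simplexDet_eq_det_sub, Matrix.det_fin_three, Matrix.of_apply]
  decide +kernel

lemma inGeneralPosition_witnessSet : InGeneralPosition 3 witnessSet := by
  rw [witnessSet_eq_image_witnessPoint]
  refine inGeneralPosition_image_univ witnessPoint_injective fun v hv ↦ ?_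
  have hv_eq : v = ![v 0, v 1, v 2, v 3] := by ext i; fin_cases i <;> rfl
  rw [witnessPoint, comp_assoc, simplexDet_map, hv_eq]
  exact Int.cast_ne_zero.2 <| simplexDet_witnessPointInt_ne_zero
    _ _ (hv (by decide)) _ (hv (by decide)) _ (hv (by decide))

/-- Pairs `(x, v)` of indices such that the point with index `x` lies in the interior of the
tetrahedron with vertices indexed by `v`. Not all such pairs are listed: these are enough to find
one inside every seven-point subset. -/
def tetrahedra : List (Fin 12 × (Fin 4 → Fin 12)) :=
  [(0, ![1, 2, 4, 6]), (0, ![1, 2, 5, 6]), (0, ![1, 3, 5, 6]), (0, ![1, 4, 6, 8]),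
   (0, ![2, 3, 6, 7]), (0, ![2, 4, 6, 9]), (0, ![2, 6, 7, 10]), (0, ![3, 6, 7, 8]),
   (0, ![3, 6, 9, 10]), (0, ![5, 6, 7, 8]), (0, ![5, 6, 9, 10]), (0, ![6, 8, 9, 11]),
   (2, ![0, 3, 4, 8]), (2, ![0, 3, 8, 10]), (2, ![0, 4, 5, 8]), (2, ![0, 5, 8, 10]),
   (2, ![0, 5, 8, 11]), (2, ![1, 3, 6, 8]), (2, ![3, 6, 7, 8]), (2, ![3, 6, 8, 9]),
   (2, ![4, 5, 6, 8]), (2, ![5, 6, 7, 8]), (4, ![0, 3, 9, 11]), (4, ![0, 5, 9, 11]),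
   (4, ![0, 6, 7, 11]), (4, ![1, 2, 6, 11]), (4, ![1, 6, 10, 11]), (4, ![2, 6, 9, 11]),
   (5, ![0, 1, 3, 7]), (5, ![0, 3, 4, 10]), (5, ![0, 3, 7, 9]), (5, ![0, 3, 8, 11]),
   (5, ![0, 3, 10, 11]), (5, ![1, 2, 3, 7]), (5, ![1, 3, 4, 8]), (5, ![2, 3, 4, 10]),
   (5, ![2, 3, 4, 11]), (5, ![2, 3, 6, 11]), (5, ![3, 4, 6, 9]), (5, ![3, 6, 7, 10]),
   (5, ![3, 7, 8, 9]), (5, ![3, 7, 8, 11]), (7, ![0, 1, 3, 4]), (7, ![0, 1, 3, 11]),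
   (7, ![0, 1, 4, 5]), (7, ![0, 1, 10, 11]), (7, ![0, 2, 9, 11]), (7, ![1, 2, 4, 10]),
   (7, ![1, 4, 5, 9]), (7, ![1, 4, 6, 10]), (7, ![1, 4, 8, 11]), (7, ![1, 5, 6, 11]),
   (7, ![1, 6, 8, 11]), (7, ![2, 3, 4, 9]), (7, ![2, 4, 9, 10]), (7, ![3, 4, 6, 9]),
   (7, ![4, 5, 9, 11]), (7, ![4, 8, 9, 10]), (9, ![0, 1, 2, 3]), (9, ![0, 1, 3, 8]),
   (9, ![0, 1, 4, 8]), (9, ![0, 1, 7, 8]), (9, ![1, 2, 3, 5]), (9, ![1, 2, 3, 7]),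
   (9, ![1, 2, 4, 8]), (9, ![1, 2, 5, 10]), (9, ![1, 2, 6, 10]), (9, ![1, 2, 7, 11]),
   (9, ![1, 3, 6, 8]), (9, ![1, 5, 6, 8]), (10, ![0, 1, 8, 11]), (10, ![0, 2, 4, 11]),
   (10, ![1, 2, 5, 11]), (10, ![1, 3, 4, 11]), (10, ![1, 3, 5, 11]), (10, ![1, 3, 6, 11]),
   (10, ![2, 3, 9, 11]), (10, ![2, 6, 7, 11]), (10, ![3, 7, 8, 11]), (10, ![4, 5, 8, 11]),
   (10, ![4, 6, 8, 11]), (10, ![5, 8, 9, 11])]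

lemma memSimplexInterior_witnessPointInt :
    ∀ t ∈ tetrahedra, MemSimplexInterior (witnessPointInt ∘ t.2) (witnessPointInt t.1) := by
  -- As `List.Forall`, the goal is decided along the list and not over all of
  -- `Fin 12 × (Fin 4 → Fin 12)`.
  simp only [← List.forall_iff_forall_mem, MemSimplexInterior, simplexDet_eq_det_sub,
    Matrix.det_fin_three, Matrix.of_apply]
  decide +kernel

lemma hasNoTransversal_tetrahedra :
    hasNoTransversal 5 (tetrahedra.map fun t ↦ t.1 :: List.ofFn t.2) = true := by
  decide +kernel

lemma exists_mem_tetrahedra_of_card_eq_seven {I : Finset (Fin 12)} (hI : I.card = 7) :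
    ∃ t ∈ tetrahedra, t.1 ∈ I ∧ ∀ i, t.2 i ∈ I := by
  have hcard : Iᶜ.card ≤ 5 := by rw [card_compl, Fintype.card_fin, hI]
  obtain ⟨e, he, hdisj⟩ :=
    exists_mem_forall_notMem_of_hasNoTransversal hasNoTransversal_tetrahedra hcard
  obtain ⟨t, ht, rfl⟩ := List.mem_map.1 he
  exact ⟨t, ht, by simpa [Fin.forall_fin_succ] using hdisj⟩

lemma not_inConvexPosition_of_card_eq_seven {X : Finset (Fin 3 → ℝ)} (hX : X ⊆ witnessSet)
    (hcard : X.card = 7) : ¬ InConvexPosition 3 X := by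
  rw [witnessSet_eq_image_witnessPoint] at hX
  obtain ⟨I, -, rfl⟩ := subset_image_iff.1 hX
  rw [card_image_of_injective _ witnessPoint_injective] at hcard
  obtain ⟨t, ht, hx, hv⟩ := exists_mem_tetrahedra_of_card_eq_seven hcard
  exact not_inConvexPosition_of_memSimplexInterior (mem_image_of_mem _ hx)
    (fun i ↦ mem_image_of_mem _ (hv i))
    ((memSimplexInterior_witnessPointInt t ht).map Int.cast_strictMono)

end Witness

/-- The 12 listed points in ℝ³ form a set of 12 points in general position which
contains no 7 points in convex position; hence `g⁽³⁾(7) ≥ 13`. -/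
theorem g3_7_ge_13 :
    witnessSet.card = 12 ∧ InGeneralPosition 3 witnessSet ∧
      ¬ ∃ X ⊆ witnessSet, X.card = 7 ∧ InConvexPosition 3 X := by
  refine ⟨?_, inGeneralPosition_witnessSet, ?_⟩
  · rw [witnessSet_eq_image_witnessPoint, card_image_of_injective _ witnessPoint_injective,
      card_univ, Fintype.card_fin]
  · rintro ⟨X, hX, hcard, hconv⟩
    exact not_inConvexPosition_of_card_eq_seven hX hcard hconv
end

section
/- Every set of 13 points in ℝ⁵ in general position contains 9 points in convex position; that is, g⁽⁵⁾(9) ≤ 13. -/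
/-- A *k-hole* in `S` is a `k`-element subset `X ⊆ S` in convex position such that
no point of `S \ X` lies in the convex hull of `X`. -/
def IsHole (d k : ℕ) (S X : Finset (Fin d → ℝ)) : Prop :=
  X ⊆ S ∧ X.card = k ∧ InConvexPosition d X ∧
    ∀ p ∈ S, p ∉ X → p ∉ convexHull ℝ (↑X : Set (Fin d → ℝ))

open Finset Module

/-!
Suppose that 13 points in general position in `ℝ⁵` contain no 9-gon. Their convex hull has at least
six vertices, and it has at most six: a hyperplane through five of the points and missing seven of
the vertices would have at least four of these on one side, giving a 9-gon. Modulo the affine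
dependency `l` of the seven inner points, each vertex has coordinates `l x * a x` with respect to
them, and the numbers `a x` rank the inner points. A 9-gon is absent only if few of the six rankings
place one point above another in prescribed ways: `x` stands above `y` in exactly three of them, and
the signs of `l` split the inner points into two parts subject to further such bounds. These force
each part to have at most four points, and if one part had exactly four, the triples of rankings
placing a point of it above one of the three others would form a `4 × 3` grid that does not fit into
a six-point set. Hence there would be at most 3 + 3 inner points, not seven.
-/

section Triples

variable {ι : Type*} [DecidableEq ι] {A B C V W : Finset ι}

/-- `V` is a triple meeting each of `A`, `B` and `C` in exactly one point. -/
structure IsTransversalTriple (A B C V : Finset ι) : Prop where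
  card_eq : #V = 3
  left : #(V ∩ A) = 1
  middle : #(V ∩ B) = 1
  right : #(V ∩ C) = 1

theorem eq_erase_union_of_card_inter {k : ℕ} {i : ι} (hA : #A = k + 1) (hB : #B = k + 1)
    (hC : #C = k + 1) (hAB : #(A ∩ B) = k) (hCA : #(C ∩ A) = k) (hCB : #(C ∩ B) = k)
    (hiA : i ∈ A) (hiB : i ∈ B) (hiC : i ∉ C) : C = (A ∪ B).erase i := by
  have erase_subset {D : Finset ι} (hD : #D = k + 1) (hCD : #(C ∩ D) = k) (hiD : i ∈ D) :
      D.erase i ⊆ C := by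
    have : C ∩ D = D.erase i :=
      eq_of_subset_of_card_le (by grind) (by rw [card_erase_of_mem hiD]; omega)
    exact this ▸ inter_subset_left
  refine (eq_of_subset_of_card_le ?_ ?_).symm
  · rw [erase_union_distrib]
    exact union_subset (erase_subset hA hCA hiA) (erase_subset hB hCB hiB)
  · have := card_union_add_card_inter A B
    rw [card_erase_of_mem (mem_union_left B hiA)]
    omega

theorem mem_iff_mem_of_card_inter_eq {p q : ι} (hp : A \ B = {p}) (hq : B \ A = {q})
    (hV : #(V ∩ A) = #(V ∩ B)) : p ∈ V ↔ q ∈ V := by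
  have card_inter_sdiff : #(V ∩ (A \ B)) = #(V ∩ (B \ A)) := by
    have hA := card_sdiff_add_card_inter (V ∩ A) B
    have hB := card_sdiff_add_card_inter (V ∩ B) A
    rw [inter_right_comm, inter_sdiff_assoc] at hB
    rw [inter_sdiff_assoc] at hA
    omega
  rw [hp, hq] at card_inter_sdiff
  by_cases hpV : p ∈ V <;> by_cases hqV : q ∈ V <;> simp_all

theorem card_union_sdiff_inter (hA : #A = 3) (hB : #B = 3) (hC : #C = 3) (hAB : #(A ∩ B) = 2)
    (hBC : #(B ∩ C) = 2) (hCA : #(C ∩ A) = 2) : #((A ∪ B ∪ C) \ (A ∩ B ∩ C)) = 3 := by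
  have card_AB := card_union_add_card_inter A B
  have card_ABC := card_union_add_card_inter (A ∪ B) C
  have card_inter := card_union_add_card_inter (A ∩ C) (B ∩ C)
  rw [← union_inter_distrib_right, ← inter_inter_distrib_right, inter_comm A C] at card_inter
  have card_sdiff := card_sdiff_add_card_eq_card
    ((inter_subset_left.trans inter_subset_left).trans
      (subset_union_left.trans subset_union_left) : A ∩ B ∩ C ⊆ A ∪ B ∪ C)
  omega

theorem union_sdiff_inter_subset (A B C : Finset ι) : (A ∪ B ∪ C) \ (A ∩ B ∩ C) ⊆
    A \ B ∪ (B \ A ∪ (C \ A ∪ (A \ C ∪ (B \ C ∪ C \ B)))) := by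
  intro i
  by_cases hiA : i ∈ A <;> by_cases hiB : i ∈ B <;> by_cases hiC : i ∈ C <;> simp [*]

/- Each of `A \ B`, `B \ A`, ... is a singleton, a transversal contains both or neither of the
points of `A \ B` and `B \ A`, and these links connect all of `(A ∪ B ∪ C) \ (A ∩ B ∩ C)`. -/
theorem IsTransversalTriple.subset_or_disjoint (hA : #A = 3) (hB : #B = 3) (hC : #C = 3)
    (hAB : #(A ∩ B) = 2) (hBC : #(B ∩ C) = 2) (hCA : #(C ∩ A) = 2)
    (hV : IsTransversalTriple A B C V) :
    (A ∪ B ∪ C) \ (A ∩ B ∩ C) ⊆ V ∨ Disjoint ((A ∪ B ∪ C) \ (A ∩ B ∩ C)) V := by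
  have exists_sdiff_eq {D E : Finset ι} (hD : #D = 3) (hDE : #(D ∩ E) = 2) : ∃ p, D \ E = {p} := by
    have := card_sdiff_add_card_inter D E
    exact card_eq_one.1 (by omega)
  have linked {D E F : Finset ι} {x y z : ι} (hx : D \ E = {x}) (hy : D \ F = {y})
      (hz : F \ E = {z}) : (y ∈ V ↔ x ∈ V) ∨ (z ∈ V ↔ x ∈ V) := by
    have hxDE := mem_sdiff.1 (hx ▸ mem_singleton_self x)
    by_cases hxF : x ∈ F
    · have : x = z := mem_singleton.1 (hz ▸ mem_sdiff.2 ⟨hxF, hxDE.2⟩)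
      exact .inr (this ▸ Iff.rfl)
    · have : x = y := mem_singleton.1 (hy ▸ mem_sdiff.2 ⟨hxDE.1, hxF⟩)
      exact .inl (this ▸ Iff.rfl)
  obtain ⟨p, hp⟩ := exists_sdiff_eq hA hAB
  obtain ⟨q, hq⟩ := exists_sdiff_eq hB (inter_comm A B ▸ hAB)
  obtain ⟨r, hr⟩ := exists_sdiff_eq hC hCA
  obtain ⟨s, hs⟩ := exists_sdiff_eq hA (inter_comm C A ▸ hCA)
  obtain ⟨t, ht⟩ := exists_sdiff_eq hB hBC
  obtain ⟨u, hu⟩ := exists_sdiff_eq hC (inter_comm B C ▸ hBC)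
  have hpq := mem_iff_mem_of_card_inter_eq hp hq (hV.left.trans hV.middle.symm)
  have hrs := mem_iff_mem_of_card_inter_eq hr hs (hV.right.trans hV.left.symm)
  have htu := mem_iff_mem_of_card_inter_eq ht hu (hV.middle.trans hV.right.symm)
  have hqrt := linked hq ht hr
  have hruq := linked hr hu hq
  have hurp := linked hu hr hp
  have mem_iff : (q ∈ V ↔ p ∈ V) ∧ (r ∈ V ↔ p ∈ V) ∧ (s ∈ V ↔ p ∈ V) ∧ (t ∈ V ↔ p ∈ V) ∧
      (u ∈ V ↔ p ∈ V) := by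
    grind
  have subset_links := union_sdiff_inter_subset A B C
  rw [hp, hq, hr, hs, ht, hu] at subset_links
  by_cases hpV : p ∈ V
  · exact .inl (subset_links.trans (by simp [insert_subset_iff, mem_iff, hpV]))
  · exact .inr (disjoint_of_subset_left subset_links (by simp [mem_iff, hpV]))

variable [Fintype ι]

theorem compl_union_subset_of_card_inter (hι : Fintype.card ι = 6) (hA : #A = 3) (hB : #B = 3)
    (hC : #C = 3) (hAB : #(A ∩ B) = 1) (hCA : #(C ∩ A) = 1) (hCB : #(C ∩ B) = 1) :
    (A ∪ B)ᶜ ⊆ C := by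
  have hU := card_union_add_card_inter A B
  have hCU := card_union_add_card_inter (C ∩ A) (C ∩ B)
  have hUc := card_compl_add_card (A ∪ B)
  have hsd := card_sdiff_add_card_inter C (A ∪ B)
  rw [← inter_union_distrib_left] at hCU
  have : C \ (A ∪ B) = (A ∪ B)ᶜ :=
    eq_of_subset_of_card_le (by simp [sdiff_eq_inter_compl]) (by omega)
  exact this ▸ sdiff_subset

theorem IsTransversalTriple.inter_right_eq (hι : Fintype.card ι = 6) (hA : #A = 3) (hB : #B = 3)
    (hC : IsTransversalTriple A B V C) (hAB : #(A ∩ B) = 1) (hV : IsTransversalTriple A B C V) :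
    V ∩ C = (A ∪ B)ᶜ := by
  have hU := card_union_add_card_inter A B
  refine (eq_of_subset_of_card_le (subset_inter ?_ ?_) ?_).symm
  · exact compl_union_subset_of_card_inter hι hA hB hV.card_eq hAB hV.left hV.middle
  · exact compl_union_subset_of_card_inter hι hA hB hC.card_eq hAB hC.left hC.middle
  · rw [hV.right, card_compl]
    omega

theorem IsTransversalTriple.eq_of_card_inter_eq_one (hι : Fintype.card ι = 6) (hA : #A = 3)
    (hB : #B = 3) (hC : #C = 3) (hAB : #(A ∩ B) = 1) (hBC : #(B ∩ C) = 1) (hCA : #(C ∩ A) = 1)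
    (hV : IsTransversalTriple A B C V) (hW : IsTransversalTriple A B C W) : V = W := by
  have inter_eq {D : Finset ι} (hD : IsTransversalTriple A B C D) :
      D ∩ C = (A ∪ B)ᶜ ∧ D ∩ A = (B ∪ C)ᶜ ∧ D ∩ B = (C ∪ A)ᶜ := by
    obtain ⟨hD, hDA, hDB, hDC⟩ := hD
    refine ⟨inter_right_eq hι hA hB ⟨hC, hCA, ?_, ?_⟩ hAB ⟨hD, hDA, hDB, hDC⟩,
      inter_right_eq hι hB hC ⟨hA, ?_, ?_, ?_⟩ hBC ⟨hD, hDB, hDC, hDA⟩,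
      inter_right_eq hι hC hA ⟨hB, ?_, ?_, ?_⟩ hCA ⟨hD, hDC, hDA, hDB⟩⟩ <;>
    first | assumption | rwa [inter_comm]
  have compl_subset : (A ∪ B)ᶜ ⊆ C :=
    compl_union_subset_of_card_inter hι hA hB hC hAB hCA (inter_comm B C ▸ hBC)
  have union_eq_univ : A ∪ B ∪ C = univ := univ_subset_iff.1 <|
    (union_compl (A ∪ B)).symm.subset.trans (union_subset_union_right compl_subset)
  obtain ⟨hVC, hVA, hVB⟩ := inter_eq hV
  obtain ⟨hWC, hWA, hWB⟩ := inter_eq hW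
  rw [← inter_univ V, ← inter_univ W, ← union_eq_univ]
  simp only [inter_union_distrib_left, hVA, hVB, hVC, hWA, hWB, hWC]

theorem IsTransversalTriple.eq_of_card_inter_eq_two (hι : Fintype.card ι = 6) (hA : #A = 3)
    (hB : #B = 3) (hC : #C = 3) (hAB : #(A ∩ B) = 2) (hBC : #(B ∩ C) = 2) (hCA : #(C ∩ A) = 2)
    (hV : IsTransversalTriple A B C V) (hW : IsTransversalTriple A B C W) : V = W := by
  set D := (A ∪ B ∪ C) \ (A ∩ B ∩ C)
  have card_D : #D = 3 := card_union_sdiff_inter hA hB hC hAB hBC hCA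
  have eq_or_eq_compl {U : Finset ι} (hU : IsTransversalTriple A B C U) : U = D ∨ U = Dᶜ := by
    refine (hU.subset_or_disjoint hA hB hC hAB hBC hCA).imp (fun h => ?_) (fun h => ?_)
    · exact (eq_of_subset_of_card_le h (by rw [hU.card_eq, card_D])).symm
    · exact eq_of_subset_of_card_le (subset_compl_iff_disjoint_left.2 h)
        (by rw [hU.card_eq, card_compl, card_D, hι])
  have card_inter : #(D ∩ A) + #(Dᶜ ∩ A) = 3 := by
    rw [inter_comm D, inter_comm Dᶜ, ← sdiff_eq_inter_compl, card_inter_add_card_sdiff, hA]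
  have hVA := hV.left
  have hWA := hW.left
  obtain rfl | rfl := eq_or_eq_compl hV <;> obtain rfl | rfl := eq_or_eq_compl hW <;>
    first | rfl | omega

end Triples

section Grids

theorem exists_ne_and_ne {α : Type*} [Fintype α] (hα : 2 < Fintype.card α) (a b : α) :
    ∃ c, c ≠ a ∧ c ≠ b := by
  classical
  simpa [not_or] using exists_mem_notMem_of_card_lt_card
    ((card_le_two (a := a) (b := b)).trans_lt (hα.trans_eq card_univ.symm))

theorem exists_ne_and_ne_and_ne {α : Type*} [Fintype α] (hα : 3 < Fintype.card α) (a b c : α) :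
    ∃ d, d ≠ a ∧ d ≠ b ∧ d ≠ c := by
  classical
  simpa [not_or] using exists_mem_notMem_of_card_lt_card
    ((card_le_three (a := a) (b := b) (c := c)).trans_lt (hα.trans_eq card_univ.symm))

variable {ι ρ γ : Type*} [DecidableEq ι]

/-- A grid of three-point sets in which sets in the same row or column differ and sets in different
rows and columns share at most one point. The main theorem reduces to the absence of such a grid,
with four rows and three columns, in a six-point set. -/
structure IsTripleGrid (U : ρ → γ → Finset ι) : Prop where
  card_eq : ∀ x y, #(U x y) = 3
  row_injective : ∀ x, Function.Injective (U x)
  col_injective : ∀ y, Function.Injective fun x => U x y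
  card_inter_le_one : ∀ {x x' y y'}, x ≠ x' → y ≠ y' → #(U x y ∩ U x' y') ≤ 1

namespace IsTripleGrid

variable [Fintype ι] [Fintype ρ] [Fintype γ] {U : ρ → γ → Finset ι}
  (hU : IsTripleGrid U) (hι : Fintype.card ι = 6) (hρ : 4 ≤ Fintype.card ρ)
  (hγ : 3 ≤ Fintype.card γ) {x x' x'' : ρ} {y y' : γ}

include hU hι hρ hγ

theorem card_inter_pos (x x' : ρ) (y y' : γ) : 0 < #(U x y ∩ U x' y') := by
  obtain ⟨z, hz⟩ := exists_ne_and_ne (Nat.lt_of_succ_lt hρ) x x'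
  obtain ⟨w, hw⟩ := exists_ne_and_ne hγ y y'
  have hA := hU.card_inter_le_one hz.1 hw.1
  have hB := hU.card_inter_le_one hz.2 hw.2
  by_contra! h
  have card_union := card_union_add_card_inter (U x y) (U x' y')
  rw [hU.card_eq, hU.card_eq] at card_union
  have union_eq : U x y ∪ U x' y' = univ := (card_eq_iff_eq_univ _).1 (by omega)
  have card_le := card_union_le (U z w ∩ U x y) (U z w ∩ U x' y')
  rw [← inter_union_distrib_left, union_eq, inter_univ, hU.card_eq] at card_le
  omega

theorem card_inter_eq_one (hx : x ≠ x') (hy : y ≠ y') : #(U x y ∩ U x' y') = 1 :=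
  (hU.card_inter_le_one hx hy).antisymm (hU.card_inter_pos hι hρ hγ ..)

theorem card_inter_eq_one_or_two (hx : x ≠ x') (y : γ) :
    #(U x y ∩ U x' y) = 1 ∨ #(U x y ∩ U x' y) = 2 := by
  have := hU.card_inter_pos hι hρ hγ x x' y y
  have : #(U x y ∩ U x' y) ≠ 3 := fun h => hx <| hU.col_injective y <|
    (eq_of_subset_of_card_le inter_subset_left (by rw [h, hU.card_eq])).symm.trans
      (eq_of_subset_of_card_le inter_subset_right (by rw [h, hU.card_eq]))
  have := card_le_card (inter_subset_left : U x y ∩ U x' y ⊆ U x y)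
  have := hU.card_eq x y
  omega

theorem not_pairwise_card_inter_eq_two (h₁₂ : #(U x y ∩ U x' y) = 2)
    (h₂₃ : #(U x' y ∩ U x'' y) = 2) : #(U x'' y ∩ U x y) ≠ 2 := by
  intro h₃₁
  obtain ⟨z, hz⟩ := exists_ne_and_ne_and_ne hρ x x' x''
  obtain ⟨y', hy'⟩ := Fintype.exists_ne_of_one_lt_card (Nat.lt_of_succ_lt hγ) y
  obtain ⟨y'', hy''⟩ := exists_ne_and_ne hγ y y'
  have cross {x : ρ} {w : γ} (hx : z ≠ x) (hw : w ≠ y) : #(U z w ∩ U x y) = 1 :=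
    hU.card_inter_eq_one hι hρ hγ hx hw
  have transversal {w : γ} (hw : w ≠ y) : IsTransversalTriple (U x y) (U x' y) (U x'' y) (U z w) :=
    ⟨hU.card_eq .., cross hz.1 hw, cross hz.2.1 hw, cross hz.2.2 hw⟩
  exact hy''.2 <| hU.row_injective z <| IsTransversalTriple.eq_of_card_inter_eq_two hι
    (hU.card_eq ..) (hU.card_eq ..) (hU.card_eq ..) h₁₂ h₂₃ h₃₁
    (transversal hy''.1) (transversal hy')

theorem card_inter_eq_two_of_card_inter_eq_one (hx : x ≠ x') (h : #(U x y ∩ U x' y) = 1)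
    (hx₁ : x ≠ x'') (hx₂ : x' ≠ x'') (hy : y' ≠ y) : #(U x y' ∩ U x'' y') = 2 := by
  obtain ⟨z, hz⟩ := exists_ne_and_ne_and_ne hρ x x' x''
  obtain ⟨w, hw⟩ := exists_ne_and_ne hγ y y'
  have cross {a a' : ρ} {b b' : γ} (ha : a ≠ a') (hb : b ≠ b') : #(U a b ∩ U a' b') = 1 :=
    hU.card_inter_eq_one hι hρ hγ ha hb
  refine (hU.card_inter_eq_one_or_two hι hρ hγ hx₁ y').resolve_left fun h' => ?_
  exact hy <| hU.row_injective x <| IsTransversalTriple.eq_of_card_inter_eq_one hι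
    (hU.card_eq z w) (hU.card_eq x' y) (hU.card_eq x'' y')
    (cross hz.2.1 hw.1) (cross hx₂ hy.symm) (cross (Ne.symm hz.2.2) (Ne.symm hw.2))
    ⟨hU.card_eq .., cross (Ne.symm hz.1) (Ne.symm hw.2), cross hx hy, h'⟩
    ⟨hU.card_eq .., cross (Ne.symm hz.1) (Ne.symm hw.1), h, cross hx₁ hy.symm⟩

/- If two triples `U x y`, `U x' y` met in a single point, the rows other than `x'` would pairwise
meet in two points in every other column. -/
theorem card_inter_eq_two (hx : x ≠ x') (y : γ) : #(U x y ∩ U x' y) = 2 := by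
  refine (hU.card_inter_eq_one_or_two hι hρ hγ hx y).resolve_left fun h => ?_
  obtain ⟨z, hz⟩ := exists_ne_and_ne (Nat.lt_of_succ_lt hρ) x x'
  obtain ⟨z', hz'⟩ := exists_ne_and_ne_and_ne hρ x x' z
  obtain ⟨y', hy'⟩ := Fintype.exists_ne_of_one_lt_card (Nat.lt_of_succ_lt hγ) y
  obtain ⟨y'', hy''⟩ := exists_ne_and_ne hγ y y'
  have cross {a a' : ρ} {b b' : γ} (ha : a ≠ a') (hb : b ≠ b') : #(U a b ∩ U a' b') = 1 :=
    hU.card_inter_eq_one hι hρ hγ ha hb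
  have card_inter_ne_one : #(U z y' ∩ U z' y') ≠ 1 := fun h' =>
    hy''.2 <| hU.row_injective z' <| IsTransversalTriple.eq_of_card_inter_eq_one hι
      (hU.card_eq x y) (hU.card_eq x' y) (hU.card_eq z y')
      h (cross (Ne.symm hz.2) (Ne.symm hy')) (cross hz.1 hy')
      ⟨hU.card_eq .., cross hz'.1 hy''.1, cross hz'.2.1 hy''.1, cross hz'.2.2 hy''.2⟩
      ⟨hU.card_eq .., cross hz'.1 hy', cross hz'.2.1 hy', inter_comm (U z y') _ ▸ h'⟩
  have card_inter_left {a : ρ} (hax : a ≠ x) (hax' : a ≠ x') : #(U x y' ∩ U a y') = 2 :=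
    hU.card_inter_eq_two_of_card_inter_eq_one hι hρ hγ hx h hax.symm hax'.symm hy'
  exact hU.not_pairwise_card_inter_eq_two hι hρ hγ (card_inter_left hz.1 hz.2)
    ((hU.card_inter_eq_one_or_two hι hρ hγ (Ne.symm hz'.2.2) y').resolve_left card_inter_ne_one)
    (inter_comm (U x y') _ ▸ card_inter_left hz'.1 hz'.2.1)

protected theorem false : False := by
  obtain ⟨x, x', x'', hx, hx', hx''⟩ := Fintype.two_lt_card_iff.1 (by omega : 2 < Fintype.card ρ)
  obtain ⟨y⟩ := Fintype.card_pos_iff.1 (by omega : 0 < Fintype.card γ)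
  exact hU.not_pairwise_card_inter_eq_two hι hρ hγ
    (hU.card_inter_eq_two hι hρ hγ hx y) (hU.card_inter_eq_two hι hρ hγ hx'' y)
    (hU.card_inter_eq_two hι hρ hγ hx'.symm y)

end IsTripleGrid

end Grids

section Rankings

variable {ι κ R : Type*} [Fintype ι] [LinearOrder R] {a : ι → κ → R} {n : ℕ} {P : Finset κ}
  {x x' y y' z : κ}

/-- The set of the rankings `a i` in which `x` stands above `y`. -/
def above (a : ι → κ → R) (x y : κ) : Finset ι := {i | a i y < a i x}

/-- The set of the rankings `a i` in which `x` stands on the side of `y` prescribed by `P`: above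
`y` if `x ∈ P`, and below `y` otherwise. -/
def side [DecidableEq κ] (P : Finset κ) (a : ι → κ → R) (x y : κ) : Finset ι :=
  if x ∈ P then above a x y else above a y x

@[simp]
theorem mem_above {i : ι} : i ∈ above a x y ↔ a i y < a i x := by
  simp [above]

/-- Rankings `a i` of `κ`, one for each vertex `i`, that encode a configuration without `n`-gons
whose inner points `κ` have a Radon partition `(P, Pᶜ)`. The point `w` below lies in the convex hull
of the other points of `T` and `X`; the pairs `(x, y)` are those for which the coefficients of the
resulting affine dependency make `T ⊆ above a x y` impossible. -/
structure RankingSystem (n : ℕ) (P : Finset κ) (a : ι → κ → R) : Prop where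
  injective : ∀ i, Function.Injective (a i)
  exists_not_subset_above : ∀ (T : Finset ι) (X : Finset κ), n ≤ #T + #X → ∃ w ∈ X, ∀ x y,
    (x ∈ X → x ≠ w ∧ x ∈ P) → (y ∈ X → y ≠ w ∧ y ∉ P) → ¬ T ⊆ above a x y

theorem exists_strictMono_comp {s : Finset κ} {k : ℕ} (hs : k ≤ #s) {f : κ → R}
    (hf : Function.Injective f) : ∃ g : Fin k → κ, (∀ j, g j ∈ s) ∧ StrictMono (f ∘ g) := by
  have mem_image (j : Fin k) :=
    orderEmbOfCardLe_mem (s.image f) (by rwa [card_image_of_injective s hf]) j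
  choose g hg hfg using fun j => Finset.mem_image.1 (mem_image j)
  refine ⟨g, hg, fun j j' h => ?_⟩
  simpa only [Function.comp_apply, hfg, OrderEmbedding.lt_iff_lt] using h

namespace RankingSystem

theorem compl_above [DecidableEq ι] (h : RankingSystem n P a) (hxy : x ≠ y) :
    (above a x y)ᶜ = above a y x := by
  ext i
  simpa using ((h.injective i).ne hxy).le_iff_lt

theorem card_above_add_card_lt [Fintype κ] (h : RankingSystem n P a) (hxy : x ≠ y) :
    #(above a x y) + Fintype.card κ < n + 2 := by
  classical
  by_contra! hn
  have := card_compl_add_card {x, y}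
  rw [card_pair hxy] at this
  obtain ⟨w, -, hw⟩ := h.exists_not_subset_above (above a x y) {x, y}ᶜ (by omega)
  exact hw x y (by simp) (by simp) Subset.rfl

theorem card_above [Fintype κ] (h : RankingSystem 9 P a) (hι : Fintype.card ι = 6)
    (hκ : Fintype.card κ = 7) (hxy : x ≠ y) : #(above a x y) = 3 := by
  classical
  have hle := h.card_above_add_card_lt hxy
  have hge := h.card_above_add_card_lt hxy.symm
  have := card_compl_add_card (above a x y)
  rw [h.compl_above hxy] at this
  omega

theorem dual [Fintype κ] [DecidableEq κ] (h : RankingSystem n P a) :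
    RankingSystem n Pᶜ fun i x => OrderDual.toDual (a i x) where
  injective i := OrderDual.toDual.injective.comp (h.injective i)
  exists_not_subset_above T X hn := by
    obtain ⟨w, hwX, hw⟩ := h.exists_not_subset_above T X hn
    exact ⟨w, hwX, fun x y hx hy => hw y x (by simpa using hy) (by simpa using hx)⟩

variable [Fintype κ]

theorem card_side_inter_side_add_card_lt [DecidableEq ι] [DecidableEq κ]
    (h : RankingSystem n P a) (hxx' : x ≠ x') (y : κ) :
    #(side P a x y ∩ side P a x' y) + Fintype.card κ < n + 1 := by
  by_contra! hn
  have := card_compl_add_card {y}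
  rw [card_singleton] at this
  obtain ⟨w, -, hw⟩ := h.exists_not_subset_above (side P a x y ∩ side P a x' y) {y}ᶜ (by omega)
  have not_subset {z : κ} (hzw : z ≠ w) : ¬ side P a x y ∩ side P a x' y ⊆ side P a z y := by
    unfold side at *
    by_cases hz : z ∈ P
    · simpa [hz] using hw z y (by simp [hzw, hz]) (by simp)
    · simpa [hz] using hw y z (by simp) (by simp [hzw, hz])
  obtain rfl | hxw := eq_or_ne x w
  · exact not_subset hxx'.symm inter_subset_right
  · exact not_subset hxw inter_subset_left

theorem card_above_inter_above_add_card_lt [DecidableEq ι] (h : RankingSystem n P a) (hx : x ∈ P)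
    (hx' : x' ∈ P) (hy : y ∉ P) (hy' : y' ∉ P) (hxx' : x ≠ x') (hyy' : y ≠ y') :
    #(above a x y ∩ above a x' y') + Fintype.card κ < n := by
  by_contra! hn
  obtain ⟨w, -, hw⟩ := h.exists_not_subset_above (above a x y ∩ above a x' y') univ hn
  by_cases hxyw : x ≠ w ∧ y ≠ w
  · exact hw x y (fun _ => ⟨hxyw.1, hx⟩) (fun _ => ⟨hxyw.2, hy⟩) inter_subset_left
  · refine hw x' y' (fun _ => ⟨?_, hx'⟩) (fun _ => ⟨?_, hy'⟩) inter_subset_right <;> grind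

/- Each of the three points stands lowest in at most two of the six rankings. -/
theorem card_above_inter_above_of_mem [DecidableEq ι] (h : RankingSystem 9 P a)
    (hι : Fintype.card ι = 6) (hκ : Fintype.card κ = 7) (hx : x ∈ P) (hy : y ∈ P) (hz : z ∈ P)
    (hxy : x ≠ y) (hyz : y ≠ z) (hzx : z ≠ x) : #(above a x y ∩ above a z y) = 2 := by
  classical
  have card_le_two {x z : κ} (hx : x ∈ P) (hz : z ∈ P) (hzx : z ≠ x) (y : κ) :
      #(above a x y ∩ above a z y) ≤ 2 := by
    have := h.card_side_inter_side_add_card_lt hzx.symm y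
    simp only [side, hx, hz, if_true] at this
    omega
  have hLy := card_le_two hx hz hzx y
  have hLz := card_le_two hy hx hxy z
  have hLx := card_le_two hz hy hyz x
  have cover : (univ : Finset ι) ⊆
      above a x y ∩ above a z y ∪ (above a y z ∩ above a x z ∪ above a z x ∩ above a y x) := by
    intro i _
    have := (h.injective i).ne hxy
    have := (h.injective i).ne hyz
    have := (h.injective i).ne hzx
    simp only [mem_union, mem_inter, mem_above]
    grind
  have := card_le_card cover
  rw [card_univ, hι] at this
  have := card_union_le (above a x y ∩ above a z y)
    (above a y z ∩ above a x z ∪ above a z x ∩ above a y x)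
  have := card_union_le (above a y z ∩ above a x z) (above a z x ∩ above a y x)
  omega

/- If `g 0, ..., g 4` increase in one of the rankings, then the triples `above a (g 0) (g 2)` and
`above a (g 1) (g 2)` are determined by the same two triples, hence equal. -/
theorem card_le_four (h : RankingSystem 9 P a) (hι : Fintype.card ι = 6)
    (hκ : Fintype.card κ = 7) : #P ≤ 4 := by
  classical
  by_contra! hP
  obtain ⟨i⟩ := Fintype.card_pos_iff.1 (by omega : 0 < Fintype.card ι)
  obtain ⟨g, hgP, hg⟩ := exists_strictMono_comp hP (h.injective i)
  have hg_inj : Function.Injective g := hg.injective.of_comp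
  have card_triple {k : Fin 5} (hk : k ≠ 2) : #(above a (g k) (g 2)) = 3 :=
    h.card_above hι hκ (hg_inj.ne hk)
  have card_inter {k l : Fin 5} (hk : k ≠ 2) (hl : l ≠ 2) (hkl : k ≠ l) :
      #(above a (g k) (g 2) ∩ above a (g l) (g 2)) = 2 :=
    h.card_above_inter_above_of_mem hι hκ (hgP k) (hgP 2) (hgP l) (hg_inj.ne hk)
      (hg_inj.ne hl.symm) (hg_inj.ne hkl.symm)
  have mem_triple {k : Fin 5} : i ∈ above a (g k) (g 2) ↔ 2 < k := mem_above.trans hg.lt_iff_lt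
  have triple_eq {k : Fin 5} (hk : k < 2) : above a (g k) (g 2) =
      (above a (g 3) (g 2) ∪ above a (g 4) (g 2)).erase i :=
    eq_erase_union_of_card_inter (card_triple (by decide)) (card_triple (by decide))
      (card_triple hk.ne) (card_inter (by decide) (by decide) (by decide))
      (card_inter hk.ne (by decide) (by omega)) (card_inter hk.ne (by decide) (by omega))
      (mem_triple.2 (by decide)) (mem_triple.2 (by decide)) (mem_triple.not.2 hk.not_gt)
  have card_inter_01 := card_inter (k := 0) (l := 1) (by decide) (by decide) (by decide)
  rw [triple_eq (k := 0) (by decide), ← triple_eq (k := 1) (by decide), inter_self,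
    card_triple (by decide)] at card_inter_01
  omega

theorem isTripleGrid [DecidableEq ι] [DecidableEq κ] (h : RankingSystem 9 P a)
    (hι : Fintype.card ι = 6) (hκ : Fintype.card κ = 7) :
    IsTripleGrid fun (x : P) (y : (Pᶜ : Finset κ)) => above a (x : κ) y := by
  have ne {x y : κ} (hx : x ∈ P) (hy : y ∈ Pᶜ) : x ≠ y := fun hxy => mem_compl.1 hy (hxy ▸ hx)
  have card_side_inter_le {x x' : κ} (hxx' : x ≠ x') (y : κ) :
      #(side P a x y ∩ side P a x' y) ≤ 2 := by
    have := h.card_side_inter_side_add_card_lt hxx' y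
    omega
  refine ⟨fun x y => h.card_above hι hκ (ne x.2 y.2), ?_, ?_, ?_⟩
  · rintro ⟨x, hx⟩ ⟨y, hy⟩ ⟨y', hy'⟩ heq
    by_contra hyy'
    have := card_side_inter_le (Subtype.coe_injective.ne hyy') x
    simp only [side, if_neg (mem_compl.1 hy), if_neg (mem_compl.1 hy')] at this heq
    rw [heq, inter_self, h.card_above hι hκ (ne hx hy')] at this
    omega
  · rintro ⟨y, hy⟩ ⟨x, hx⟩ ⟨x', hx'⟩ heq
    by_contra hxx'
    have := card_side_inter_le (Subtype.coe_injective.ne hxx') y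
    simp only [side, if_pos hx, if_pos hx'] at this heq
    rw [heq, inter_self, h.card_above hι hκ (ne hx' hy)] at this
    omega
  · rintro ⟨x, hx⟩ ⟨x', hx'⟩ ⟨y, hy⟩ ⟨y', hy'⟩ hxx' hyy'
    have := h.card_above_inter_above_add_card_lt hx hx' (mem_compl.1 hy) (mem_compl.1 hy')
      (Subtype.coe_injective.ne hxx') (Subtype.coe_injective.ne hyy')
    change #(above a x y ∩ above a x' y') ≤ 1
    omega

theorem card_ne_four (h : RankingSystem 9 P a) (hι : Fintype.card ι = 6)
    (hκ : Fintype.card κ = 7) : #P ≠ 4 := by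
  classical
  intro hP
  have := card_compl_add_card P
  exact (h.isTripleGrid hι hκ).false hι (by simp [hP])
    (by rw [Fintype.card_coe]; omega)

protected theorem false (h : RankingSystem 9 P a) (hι : Fintype.card ι = 6)
    (hκ : Fintype.card κ = 7) : False := by
  classical
  have := card_compl_add_card P
  have := h.card_le_four hι hκ
  have := h.card_ne_four hι hκ
  have := h.dual.card_le_four hι hκ
  have := h.dual.card_ne_four hι hκ
  omega

end RankingSystem

end Rankings

section LinearAlgebra

variable {K W α ι κ : Type*} [Field K] [AddCommGroup W] [Module K W]

/-- Vectors in linear general position: any at most `finrank K W` of them are linearly independent.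
For the homogeneous coordinates `(x, 1)` of points `x` this is affine general position. -/
def InLinearGeneralPosition (K : Type*) [Field K] [Module K W] (u : α → W) : Prop :=
  ∀ N : Finset α, #N ≤ finrank K W → LinearIndepOn K u N

namespace InLinearGeneralPosition

theorem comp_injective {β : Type*} {u : α → W} (hu : InLinearGeneralPosition K u) {f : β → α}
    (hf : Function.Injective f) : InLinearGeneralPosition K (u ∘ f) := by
  intro N hN
  refine LinearIndepOn.comp_of_image ?_ hf.injOn
  simpa using hu (N.map ⟨f, hf⟩) (by rwa [card_map])

theorem eq_zero_of_sum_smul_eq_zero [Fintype α] {u : α → W} (hu : InLinearGeneralPosition K u)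
    {N : Finset α} (hN : #N ≤ finrank K W) {μ : α → K} (hμN : ∀ j ∉ N, μ j = 0)
    (hμ : ∑ j, μ j • u j = 0) : μ = 0 := by
  have sum_eq : ∑ j ∈ N, μ j • u j = 0 := by
    rw [← hμ]
    exact sum_subset (subset_univ N) fun j _ hj => by rw [hμN j hj, zero_smul]
  ext j
  by_cases hj : j ∈ N
  · exact linearIndepOn_finset_iff.1 (hu N hN) μ sum_eq j hj
  · exact hμN j hj

theorem span_image_eq_top [FiniteDimensional K W] {u : α → W}
    (hu : InLinearGeneralPosition K u) {N : Finset α} (hN : #N = finrank K W) :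
    Submodule.span K (u '' N) = ⊤ := by
  rw [Set.image_eq_range]
  exact (hu N hN.le).span_eq_top_of_card_eq_finrank' (by simpa using hN)

theorem exists_dual_eq_zero_iff [FiniteDimensional K W] {u : α → W}
    (hu : InLinearGeneralPosition K u) {Q : Finset α} (hQ : #Q + 1 = finrank K W) :
    ∃ φ : Dual K W, ∀ j, φ (u j) = 0 ↔ j ∈ Q := by
  classical
  have span_lt_top : Submodule.span K (u '' Q) < ⊤ := by
    refine lt_top_iff_ne_top.2 fun h => ?_
    have := finrank_span_finset_le_card (R := K) (Q.image u)
    rw [Set.finrank, coe_image, h, finrank_top] at this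
    have := card_image_le (s := Q) (f := u)
    omega
  obtain ⟨φ, hφ, span_le_ker⟩ := Submodule.exists_le_ker_of_lt_top _ span_lt_top
  have apply_eq_zero {j : α} (hj : j ∈ Q) : φ (u j) = 0 :=
    span_le_ker (Submodule.subset_span (Set.mem_image_of_mem u hj))
  refine ⟨φ, fun j => ⟨fun hφj => ?_, apply_eq_zero⟩⟩
  by_contra hj
  have span_eq_top := hu.span_image_eq_top (N := insert j Q) (by rw [card_insert_of_notMem hj, hQ])
  refine hφ (LinearMap.ext_on span_eq_top ?_)
  rintro _ ⟨k, hk, rfl⟩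
  obtain rfl | hk := mem_insert.1 hk
  exacts [hφj, apply_eq_zero hk]

variable [Fintype κ] {p : κ → W} (hp : InLinearGeneralPosition K p)
  (hκ : Fintype.card κ = finrank K W + 1)

include hp hκ

theorem eq_zero_of_apply_eq_zero {m : κ → K} (hm : ∑ x, m x • p x = 0) {y : κ} (hy : m y = 0) :
    m = 0 := by
  classical
  have := card_compl_add_card {y}
  rw [card_singleton] at this
  exact hp.eq_zero_of_sum_smul_eq_zero (N := {y}ᶜ) (by omega) (by simpa using hy) hm

theorem exists_relation_forall_ne_zero [FiniteDimensional K W] :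
    ∃ l : κ → K, (∀ x, l x ≠ 0) ∧ ∑ x, l x • p x = 0 := by
  have not_indep : ¬ LinearIndependent K p := fun h => by
    have := h.fintype_card_le_finrank
    omega
  obtain ⟨l, hl, x, hx⟩ := Fintype.not_linearIndependent_iff.1 not_indep
  exact ⟨l, fun y hy => hx (congrFun (hp.eq_zero_of_apply_eq_zero hκ hl hy) x), hl⟩

theorem div_eq_div {l m : κ → K} (hl : ∀ x, l x ≠ 0) (hlp : ∑ x, l x • p x = 0)
    (hm : ∑ x, m x • p x = 0) (x y : κ) : m x / l x = m y / l y := by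
  have := hp.eq_zero_of_apply_eq_zero hκ (m := fun z => m z - m y / l y * l z) (y := y)
    (by simp only [sub_smul, mul_smul, sum_sub_distrib, ← smul_sum, hlp, hm, smul_zero, sub_zero])
    (by simp only [div_mul_cancel₀ _ (hl y), sub_self])
  exact (div_eq_iff (hl x)).2 (sub_eq_zero.1 (congrFun this x))

theorem exists_sum_mul_smul_eq [FiniteDimensional K W] {l : κ → K} (hl : ∀ x, l x ≠ 0) (v : W) :
    ∃ a : κ → K, ∑ x, (l x * a x) • p x = v := by
  obtain ⟨N, -, hN⟩ := exists_subset_card_eq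
    (by rw [card_univ]; omega : finrank K W ≤ #(univ : Finset κ))
  have hv : v ∈ Submodule.span K (Set.range p) :=
    Submodule.span_mono (Set.image_subset_range p N) (hp.span_image_eq_top hN ▸ Submodule.mem_top)
  obtain ⟨b, hb⟩ := (Submodule.mem_span_range_iff_exists_fun K).1 hv
  exact ⟨fun x => b x / l x, by simpa only [mul_div_cancel₀ _ (hl _)] using hb⟩

theorem div_sub_div_eq_sum [Fintype ι] {v : ι → W} {l : κ → K} {a : ι → κ → K} (hl : ∀ x, l x ≠ 0)
    (hlp : ∑ x, l x • p x = 0) (ha : ∀ i, ∑ x, (l x * a i x) • p x = v i) {c : ι → K} {m : κ → K}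
    (h : ∑ i, c i • v i + ∑ x, m x • p x = 0) (x y : κ) :
    m x / l x - m y / l y = ∑ i, c i * (a i y - a i x) := by
  have relation : ∑ x, (l x * ∑ i, c i * a i x + m x) • p x = 0 := by
    rw [← h]
    simp only [add_smul, sum_add_distrib, mul_sum, sum_smul, ← ha, smul_sum, smul_smul,
      mul_left_comm]
    rw [sum_comm]
  have := hp.div_eq_div hκ hl hlp relation x y
  simp only [add_div, mul_div_cancel_left₀ _ (hl _)] at this
  simp only [mul_sub, sum_sub_distrib]
  linear_combination this

end InLinearGeneralPosition

/- Otherwise `u (inl i)` would be a combination of the `u (inr z)` with `z ≠ x, y`. -/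
theorem InLinearGeneralPosition.coeff_injective [Fintype κ] {u : ι ⊕ κ → W}
    (hu : InLinearGeneralPosition K u) (hκ : Fintype.card κ = finrank K W + 1) {l a : κ → K}
    (hlp : ∑ x, l x • u (.inr x) = 0) {i : ι} (ha : ∑ x, (l x * a x) • u (.inr x) = u (.inl i)) :
    Function.Injective a := by
  classical
  intro x y hxy
  by_contra hne
  have := card_compl_add_card {x, y}
  rw [card_pair hne] at this
  have relation : ∑ z, (l z * (a z - a x)) • u (.inr z) = u (.inl i) := by
    simp only [mul_sub, sub_smul, sum_sub_distrib, ha]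
    simp only [mul_comm _ (a x), mul_smul, ← smul_sum, hlp, smul_zero, sub_zero]
  have general : InLinearGeneralPosition K (u ∘ Sum.map (fun _ : Unit => i) id) :=
    hu.comp_injective ((Function.injective_of_subsingleton _).sumMap Function.injective_id)
  have := general.eq_zero_of_sum_smul_eq_zero (N := univ.disjSum {x, y}ᶜ)
    (μ := Sum.elim (fun _ => -1) fun z => l z * (a z - a x))
    (by rw [card_disjSum, card_univ, Fintype.card_unit]; omega)
    (by
      rintro (_ | z) hj
      · simp at hj
      · obtain rfl | rfl : z = x ∨ z = y := by simpa [or_iff_not_imp_left] using hj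
        all_goals simp [hxy])
    (by simp [relation])
  simpa using congrFun this (.inl ())

variable [LinearOrder K] [IsStrictOrderedRing K] [Fintype ι] [Fintype κ] {u : ι ⊕ κ → W} {n : ℕ}

theorem InLinearGeneralPosition.eq_zero_of_nonneg_of_nonpos {p : κ → W}
    (hp : InLinearGeneralPosition K p) (hκ : Fintype.card κ = finrank K W + 1) {v : ι → W}
    {l : κ → K} {a : ι → κ → K} (hl : ∀ x, l x ≠ 0) (hlp : ∑ x, l x • p x = 0)
    (ha : ∀ i, ∑ x, (l x * a i x) • p x = v i) {c : ι → K} {m : κ → K}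
    (h : ∑ i, c i • v i + ∑ x, m x • p x = 0) (hc : ∀ i, 0 ≤ c i) {x y : κ}
    (hxy : ∀ i, c i ≠ 0 → a i y < a i x) (hx : 0 ≤ m x / l x) (hy : m y / l y ≤ 0) : m = 0 := by
  have coeff_sub := hp.div_sub_div_eq_sum hκ hl hlp ha h x y
  have term_nonpos (i : ι) (_ : i ∈ univ) : c i * (a i y - a i x) ≤ 0 := by
    obtain hi | hi := eq_or_ne (c i) 0
    · rw [hi, zero_mul]
    · exact mul_nonpos_of_nonneg_of_nonpos (hc i) (sub_neg.2 (hxy i hi)).le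
  have sum_nonpos := Finset.sum_nonpos term_nonpos
  have c_eq_zero (i : ι) : c i = 0 := by
    by_contra hi
    have term_eq_zero := (sum_eq_zero_iff_of_nonpos term_nonpos).1 (by linarith) i (mem_univ i)
    exact (mul_ne_zero hi (sub_neg.2 (hxy i hi)).ne) term_eq_zero
  have hmx : m x = 0 := (div_eq_zero_iff.1 (by linarith : m x / l x = 0)).resolve_right (hl x)
  simp only [c_eq_zero, zero_smul, sum_const_zero, zero_add] at h
  exact hp.eq_zero_of_apply_eq_zero hκ h hmx

/-- Among any `n` of the vectors `u`, one with an index in `κ` is a nonnegative combination of the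
others; `μ` is the resulting linear dependency. For homogeneous coordinates, this holds if the
points contain no `n`-gon and those indexed by `ι` are vertices of their convex hull. -/
def GonFree (K : Type*) [Field K] [LinearOrder K] [Module K W] (n : ℕ) (u : ι ⊕ κ → W) : Prop :=
  ∀ N : Finset (ι ⊕ κ), n ≤ #N → ∃ w, .inr w ∈ N ∧ ∃ μ : ι ⊕ κ → K, μ (.inr w) < 0 ∧
    (∀ j ≠ .inr w, 0 ≤ μ j) ∧ (∀ j ∉ N, μ j = 0) ∧ ∑ j, μ j • u j = 0

namespace GonFree

/- A linear form that is positive on `T` and zero on `Q` kills all coefficients at `T`. -/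
theorem card_add_card_lt (h : GonFree K n u) (hu : InLinearGeneralPosition K u) (φ : Dual K W)
    {T : Finset ι} {Q : Finset (ι ⊕ κ)} (hQ : #Q ≤ finrank K W)
    (hφT : ∀ i ∈ T, 0 < φ (u (.inl i))) (hφQ : ∀ j ∈ Q, φ (u j) = 0) : #T + #Q < n := by
  classical
  by_contra! hn
  have disjoint : Disjoint (T.map .inl) Q := by
    refine disjoint_left.2 fun j hjT hjQ => ?_
    obtain ⟨i, hi, rfl⟩ := mem_map.1 hjT
    exact (hφT i hi).ne' (hφQ _ hjQ)
  obtain ⟨w, -, μ, hμw, μ_nonneg, hμN, hμ⟩ := h (T.map .inl ∪ Q)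
    (by rwa [card_union_of_disjoint disjoint, card_map])
  have sum_eq_zero : ∑ j, μ j * φ (u j) = 0 := by simpa using congrArg φ hμ
  have eq_zero_or (j : ι ⊕ κ) (hj : j ∉ Q) : μ j = 0 ∨ 0 ≤ μ j ∧ 0 < φ (u j) := by
    by_cases hjT : j ∈ T.map .inl
    · obtain ⟨i, hi, rfl⟩ := mem_map.1 hjT
      exact .inr ⟨μ_nonneg _ (by simp), hφT i hi⟩
    · exact .inl (hμN j (by simp [*]))
  have term_nonneg (j : ι ⊕ κ) : 0 ≤ μ j * φ (u j) := by
    by_cases hj : j ∈ Q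
    · rw [hφQ j hj, mul_zero]
    · obtain hμj | ⟨hμj, hφj⟩ := eq_zero_or j hj
      · rw [hμj, zero_mul]
      · exact mul_nonneg hμj hφj.le
  have term_eq_zero := (sum_eq_zero_iff_of_nonneg fun j _ => term_nonneg j).1 sum_eq_zero
  have μ_eq_zero : μ = 0 := hu.eq_zero_of_sum_smul_eq_zero hQ (fun j hj =>
    (eq_zero_or j hj).elim id fun hj' =>
      (mul_eq_zero.1 (term_eq_zero j (mem_univ j))).resolve_right hj'.2.ne') hμ
  exact hμw.ne (congrFun μ_eq_zero _)

theorem card_le_two_mul [FiniteDimensional K W] [Nontrivial W] {s : ℕ}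
    (h : GonFree K (finrank K W + s) u) (hu : InLinearGeneralPosition K u)
    (hcard : finrank K W + 2 * s ≤ Fintype.card (ι ⊕ κ)) : Fintype.card ι ≤ 2 * s := by
  classical
  by_contra! hι
  have := finrank_pos (R := K) (M := W)
  obtain ⟨V, -, hV⟩ := exists_subset_card_eq (show 2 * s + 1 ≤ #(univ : Finset ι) from hι)
  have card_compl := card_compl_add_card (V.map (.inl : ι ↪ ι ⊕ κ))
  rw [card_map] at card_compl
  obtain ⟨Q, hQV, hQ⟩ := exists_subset_card_eq
    (by omega : finrank K W - 1 ≤ #(V.map (.inl : ι ↪ ι ⊕ κ))ᶜ)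
  obtain ⟨φ, hφ⟩ := hu.exists_dual_eq_zero_iff (by omega : #Q + 1 = finrank K W)
  have ne_zero {i : ι} (hi : i ∈ V) : φ (u (.inl i)) ≠ 0 := fun h0 =>
    mem_compl.1 (hQV ((hφ _).1 h0)) (mem_map_of_mem _ hi)
  have card_pos := h.card_add_card_lt hu φ (Q := Q) (T := {i ∈ V | 0 < φ (u (.inl i))}) (by omega)
    (by simp) fun j => (hφ j).2
  have card_neg := h.card_add_card_lt hu (-φ) (Q := Q) (T := {i ∈ V | ¬ 0 < φ (u (.inl i))})
    (by omega)
    (by simpa +contextual using fun i hi hi' => lt_of_le_of_ne hi' (ne_zero hi))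
    fun j hj => by simp [(hφ j).2 hj]
  have := card_filter_add_card_filter_not (s := V) fun i => 0 < φ (u (.inl i))
  omega

theorem exists_rankingSystem [FiniteDimensional K W] (h : GonFree K n u)
    (hu : InLinearGeneralPosition K u) (hκ : Fintype.card κ = finrank K W + 1) :
    ∃ (P : Finset κ) (a : ι → κ → K), RankingSystem n P a := by
  have hp : InLinearGeneralPosition K (u ∘ .inr) := hu.comp_injective Sum.inr_injective
  obtain ⟨l, hl, hlp⟩ := hp.exists_relation_forall_ne_zero hκ
  choose a ha using fun i => hp.exists_sum_mul_smul_eq hκ hl (u (.inl i))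
  refine ⟨univ.filter (0 < l ·), a, fun i => hu.coeff_injective hκ hlp (ha i), fun T X hn => ?_⟩
  obtain ⟨w, hw, μ, hμw, μ_nonneg, hμN, hμ⟩ := h (T.disjSum X) (by rwa [card_disjSum])
  refine ⟨w, inr_mem_disjSum.1 hw, fun x y hx hy hT => ?_⟩
  have relation : ∑ i, μ (.inl i) • u (.inl i) + ∑ z, μ (.inr z) • u (.inr z) = 0 := by
    rwa [← Fintype.sum_sum_type fun j => μ j • u j]
  have left_nonneg (i : ι) : 0 ≤ μ (.inl i) := μ_nonneg _ (by simp)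
  have mem_of_ne_zero (i : ι) (hi : μ (.inl i) ≠ 0) : i ∈ T := by
    simpa using mt (hμN (.inl i)) hi
  have coeff_nonneg : 0 ≤ μ (.inr x) / l x := by
    by_cases hxX : x ∈ X
    · exact div_nonneg (μ_nonneg _ (Sum.inr_injective.ne (hx hxX).1))
        (mem_filter_univ x |>.1 (hx hxX).2).le
    · rw [hμN _ (by simpa using hxX), zero_div]
  have coeff_nonpos : μ (.inr y) / l y ≤ 0 := by
    by_cases hyX : y ∈ X
    · exact div_nonpos_of_nonneg_of_nonpos (μ_nonneg _ (Sum.inr_injective.ne (hy hyX).1))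
        (by simpa using (hy hyX).2)
    · rw [hμN _ (by simpa using hyX), zero_div]
  have inner_eq_zero := hp.eq_zero_of_nonneg_of_nonpos hκ hl hlp ha relation left_nonneg
    (fun i hi => mem_above.1 (hT (mem_of_ne_zero i hi))) coeff_nonneg coeff_nonpos
  exact hμw.ne (congrFun inner_eq_zero w)

end GonFree

end LinearAlgebra

section Geometry

theorem linearIndependent_prodMk_one_of_affineIndependent {K E α : Type*} [Field K] [AddCommGroup E]
    [Module K E] {p : α → E} (hp : AffineIndependent K p) :
    LinearIndependent K fun j => (p j, (1 : K)) := by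
  rw [linearIndependent_iff']
  intro s c hc
  refine affineIndependent_iff.1 hp s c ?_ ?_
  · simpa [Prod.snd_sum] using congrArg Prod.snd hc
  · simpa [Prod.fst_sum] using congrArg Prod.fst hc

theorem notMem_convexHull_erase_of_mem_extremePoints {E : Type*} [AddCommGroup E] [Module ℝ E]
    [DecidableEq E] {A : Set E} {X : Finset E} {x : E} (hx : x ∈ (convexHull ℝ A).extremePoints ℝ)
    (hXA : (X : Set E) ⊆ A) : x ∉ convexHull ℝ (X.erase x : Set E) := by
  rw [(convex_convexHull ℝ A).mem_extremePoints_iff_mem_sdiff_convexHull_sdiff] at hx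
  refine fun hxX => hx.2 (convexHull_mono ?_ hxX)
  rw [coe_erase]
  exact Set.sdiff_subset_sdiff_left (hXA.trans (subset_convexHull ℝ A))

variable {d n : ℕ} {S : Finset (Fin d → ℝ)}

theorem InGeneralPosition.affineIndependent (hS : InGeneralPosition d S) (hcard : d + 1 ≤ #S)
    {T : Finset (Fin d → ℝ)} (hTS : T ⊆ S) (hT : #T ≤ d + 1) :
    AffineIndependent ℝ ((↑) : T → Fin d → ℝ) := by
  obtain ⟨T', hTT', hT'S, hT'⟩ := exists_subsuperset_card_eq hTS hT hcard
  exact (hS T' hT'S hT').mono (coe_subset.2 hTT')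

theorem InGeneralPosition.inLinearGeneralPosition (hS : InGeneralPosition d S) (hcard : d + 1 ≤ #S)
    {α : Type*} {f : α → Fin d → ℝ} (hf : Function.Injective f) (hfS : ∀ j, f j ∈ S) :
    InLinearGeneralPosition ℝ fun j => (f j, (1 : ℝ)) := by
  intro N hN
  have card_le : #(N.image f) ≤ d + 1 := by
    rw [card_image_of_injective N hf]
    simpa using hN
  have image_indep := hS.affineIndependent hcard (image_subset_iff.2 fun j _ => hfS j) card_le
  let e : N ↪ ↥(N.image f) :=
    ⟨fun j => ⟨f j, mem_image_of_mem f j.2⟩, fun j k h => Subtype.ext (hf (congrArg Subtype.val h))⟩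
  exact linearIndependent_prodMk_one_of_affineIndependent (image_indep.comp_embedding e)

theorem InGeneralPosition.lt_card_of_extremePoints_subset (hS : InGeneralPosition d S)
    (hcard : d + 1 ≤ #S) {V : Finset (Fin d → ℝ)}
    (hV : (convexHull ℝ (S : Set (Fin d → ℝ))).extremePoints ℝ ⊆ V) : d < #V := by
  have S_subset : (S : Set (Fin d → ℝ)) ⊆ convexHull ℝ V :=
    calc (S : Set (Fin d → ℝ))
      _ ⊆ convexHull ℝ S := subset_convexHull ℝ _
      _ = closure (convexHull ℝ ((convexHull ℝ (S : Set (Fin d → ℝ))).extremePoints ℝ)) :=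
        (closure_convexHull_extremePoints (S.finite_toSet.isCompact_convexHull ℝ)
          (convex_convexHull ℝ _)).symm
      _ ⊆ convexHull ℝ V :=
        closure_minimal (convexHull_mono hV) (V.finite_toSet.isClosed_convexHull ℝ)
  obtain ⟨T, hTS, hT⟩ := exists_subset_card_eq hcard
  have := (hS T hTS hT).card_le_card_of_subset_affineSpan (t := V) fun x hx =>
    convexHull_subset_affineSpan _ (S_subset (hTS hx))
  omega

theorem gonFree_of_not_inConvexPosition {ι κ : Type*} [Fintype ι] [Fintype κ]
    (hS : ∀ X ⊆ S, #X = n → ¬ InConvexPosition d X) {f : ι ⊕ κ → Fin d → ℝ}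
    (hf : Function.Injective f) (hfS : ∀ j, f j ∈ S)
    (hf_extreme : ∀ i, f (.inl i) ∈ (convexHull ℝ (S : Set (Fin d → ℝ))).extremePoints ℝ) :
    GonFree ℝ n fun j => (f j, (1 : ℝ)) := by
  classical
  intro N hN
  obtain ⟨M, hMN, hM⟩ := exists_subset_card_eq hN
  have image_subset : M.image f ⊆ S := image_subset_iff.2 fun j _ => hfS j
  have not_convex := hS _ image_subset (by rw [card_image_of_injective M hf, hM])
  simp only [InConvexPosition, not_forall, not_not, mem_image] at not_convex
  obtain ⟨_, ⟨i | w, hw, rfl⟩, hull⟩ := not_convex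
  · exact absurd hull
      (notMem_convexHull_erase_of_mem_extremePoints (hf_extreme i) (coe_subset.2 image_subset))
  rw [← image_erase hf, Finset.mem_convexHull'] at hull
  obtain ⟨q, q_nonneg, q_sum, q_center⟩ := hull
  rw [sum_image hf.injOn] at q_sum q_center
  refine ⟨w, hMN hw, fun j => (if j ∈ M.erase (.inr w) then q (f j) else 0) -
    if j = .inr w then 1 else 0, by simp, fun j hj => ?_, fun j hj => ?_, ?_⟩
  · beta_reduce
    rw [if_neg hj, sub_zero]
    split_ifs with hjM
    exacts [q_nonneg _ (mem_image_of_mem f hjM), le_rfl]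
  · have hjM : j ∉ M := fun hjM => hj (hMN hjM)
    beta_reduce
    rw [if_neg fun h => hjM (mem_of_mem_erase h), if_neg (by rintro rfl; exact hjM hw), sub_zero]
  · simp only [sub_smul, ite_smul, zero_smul, one_smul, sum_sub_distrib, sum_ite_mem, univ_inter,
      sum_ite_eq', mem_univ, if_true, sub_eq_zero]
    ext1
    · simpa [Prod.fst_sum] using q_center
    · simpa [Prod.snd_sum] using q_sum

theorem InGeneralPosition.exists_gonFree (hS : InGeneralPosition d S) (hcard : d + 1 ≤ #S)
    (hSn : ∀ X ⊆ S, #X = n → ¬ InConvexPosition d X) :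
    ∃ V ⊆ S, d < #V ∧ ∃ u : V ⊕ ↥(S \ V) → (Fin d → ℝ) × ℝ,
      InLinearGeneralPosition ℝ u ∧ GonFree ℝ n u := by
  classical
  let V := S.filter (· ∈ (convexHull ℝ (S : Set (Fin d → ℝ))).extremePoints ℝ)
  let f : V ⊕ ↥(S \ V) → Fin d → ℝ := Sum.elim (↑) (↑)
  have ne (v : V) (p : ↥(S \ V)) : (v : Fin d → ℝ) ≠ p := fun h =>
    (mem_sdiff.1 p.2).2 (h ▸ v.2)
  have hf : Function.Injective f := Subtype.val_injective.sumElim Subtype.val_injective ne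
  have hfS : ∀ j, f j ∈ S := Sum.rec (fun v => (mem_filter.1 v.2).1) fun p => (mem_sdiff.1 p.2).1
  refine ⟨V, filter_subset _ S, ?_, fun j => (f j, 1), hS.inLinearGeneralPosition hcard hf hfS,
    gonFree_of_not_inConvexPosition hSn hf hfS fun v => (mem_filter.1 v.2).2⟩
  exact hS.lt_card_of_extremePoints_subset hcard fun x hx =>
    mem_filter.2 ⟨extremePoints_convexHull_subset hx, hx⟩

end Geometry

/-- Every set of 13 points in ℝ⁵ in general position contains a 9-gon:
`g⁽⁵⁾(9) ≤ 13`. -/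
theorem g5_9_le_13 (S : Finset (Fin 5 → ℝ)) (hcard : S.card = 13)
    (hgp : InGeneralPosition 5 S) :
    ∃ X ⊆ S, X.card = 9 ∧ InConvexPosition 5 X := by
  by_contra! no_gon
  obtain ⟨V, hVS, hV, u, general, gonFree⟩ := hgp.exists_gonFree (by omega) no_gon
  have finrank_eq : finrank ℝ ((Fin 5 → ℝ) × ℝ) = 6 := by simp
  have card_vertices : Fintype.card V = #V := Fintype.card_coe V
  have card_inner : Fintype.card ↥(S \ V) = 13 - #V := by
    rw [Fintype.card_coe, card_sdiff_of_subset hVS, hcard]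
  have card_le : Fintype.card V ≤ 2 * 3 := GonFree.card_le_two_mul (by rwa [finrank_eq]) general
    (by rw [finrank_eq, Fintype.card_sum]; omega)
  obtain ⟨P, a, rankings⟩ := gonFree.exists_rankingSystem general (by omega)
  exact rankings.false (by omega) (by omega)
end

section
/- Every set of 13 points in ℝ⁵ in general position contains a 9-hole; that is, h⁽⁵⁾(9) ≤ 13. -/
/-! ### Inner and extreme points -/

namespace Holes

section Vertices

variable {E : Type*} [AddCommGroup E] [Module ℝ E]

theorem nonpos_of_mem_convexHull {f : E →ᵃ[ℝ] ℝ} {Y : Set E} (hY : ∀ y ∈ Y, f y ≤ 0) {p : E}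
    (hp : p ∈ convexHull ℝ Y) : f p ≤ 0 :=
  convexHull_min hY ((convex_Iic (0 : ℝ)).affine_preimage f) hp

theorem nonneg_of_mem_convexHull {f : E →ᵃ[ℝ] ℝ} {Y : Set E} (hY : ∀ y ∈ Y, 0 ≤ f y) {p : E}
    (hp : p ∈ convexHull ℝ Y) : 0 ≤ f p :=
  convexHull_min hY ((convex_Ici (0 : ℝ)).affine_preimage f) hp

theorem mem_convexHull_of_nonneg {f : E →ᵃ[ℝ] ℝ} {Y : Set E} (hY : ∀ y ∈ Y, f y ≤ 0) {p : E}
    (hp : p ∈ convexHull ℝ Y) (hfp : 0 ≤ f p) : p ∈ convexHull ℝ {y ∈ Y | f y = 0} := by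
  set Z := convexHull ℝ {y ∈ Y | f y = 0}
  have hZ : ∀ x ∈ Z, f x = 0 := fun x hx => le_antisymm
    (nonpos_of_mem_convexHull (fun y hy => hy.2.le) hx)
    (nonneg_of_mem_convexHull (fun y hy => hy.2.ge) hx)
  have hconvex : Convex ℝ ({x | f x < 0} ∪ Z) := by
    refine convex_iff_forall_pos.2 fun x hx y hy a b ha hb hab => ?_
    simp only [Set.mem_union, Set.mem_ofPred_eq, Convex.combo_affine_apply hab, smul_eq_mul]
    rcases hx with hx | hx <;> rcases hy with hy | hy
    · exact .inl (add_neg (mul_neg_of_pos_of_neg ha hx) (mul_neg_of_pos_of_neg hb hy))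
    · exact .inl (by simpa [hZ y hy] using mul_neg_of_pos_of_neg ha hx)
    · exact .inl (by simpa [hZ x hx] using mul_neg_of_pos_of_neg hb hy)
    · exact .inr (convex_convexHull ℝ _ hx hy ha.le hb.le hab)
  have hsub : Y ⊆ {x | f x < 0} ∪ Z := fun y hy =>
    (hY y hy).lt_or_eq.imp id fun h0 => subset_convexHull ℝ _ ⟨hy, h0⟩
  exact (convexHull_min hsub hconvex hp).resolve_left fun hneg => hneg.not_ge hfp

open Classical in
/-- The points of `S` that are not extreme: those in the convex hull of the others. -/
noncomputable def innerPoints (S : Finset E) : Finset E :=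
  S.filter fun p => p ∈ convexHull ℝ (S \ {p} : Set E)

variable {S T : Finset E} {p : E}

theorem mem_innerPoints : p ∈ innerPoints S ↔ p ∈ S ∧ p ∈ convexHull ℝ (S \ {p} : Set E) := by
  classical
  simp only [innerPoints, Finset.mem_filter]

theorem innerPoints_subset (S : Finset E) : innerPoints S ⊆ S := fun _ hp =>
  (mem_innerPoints.1 hp).1

theorem innerPoints_mono (h : S ⊆ T) : innerPoints S ⊆ innerPoints T := fun _ hp =>
  mem_innerPoints.2 ⟨h (mem_innerPoints.1 hp).1,
    convexHull_mono (Set.sdiff_subset_sdiff_left (mod_cast h)) (mem_innerPoints.1 hp).2⟩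

variable [DecidableEq E]

/-- The extreme points of `S`, that is, the vertices of its convex hull. -/
noncomputable def vertices (S : Finset E) : Finset E :=
  S \ innerPoints S

theorem mem_vertices : p ∈ vertices S ↔ p ∈ S ∧ p ∉ innerPoints S := Finset.mem_sdiff

theorem vertices_subset (S : Finset E) : vertices S ⊆ S := Finset.sdiff_subset

theorem card_vertices_add_card_innerPoints (S : Finset E) :
    (vertices S).card + (innerPoints S).card = S.card :=
  Finset.card_sdiff_add_card_eq_card (innerPoints_subset S)

theorem notMem_convexHull_of_mem_vertices {Y : Finset E} (hp : p ∈ vertices S) (hY : Y ⊆ S) :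
    p ∉ convexHull ℝ (Y.erase p : Set E) := fun hmem =>
  (mem_vertices.1 hp).2 (mem_innerPoints.2 ⟨vertices_subset S hp, convexHull_mono
    (by simpa only [Finset.coe_erase] using Set.sdiff_subset_sdiff_left (mod_cast hY)) hmem⟩)

end Vertices

section NormedSpace

variable {E : Type*} [NormedAddCommGroup E] [NormedSpace ℝ E] [DecidableEq E]

theorem subset_convexHull_vertices (S : Finset E) :
    (S : Set E) ⊆ convexHull ℝ (vertices S : Set E) := by
  have hconv := convex_convexHull ℝ (S : Set E)
  have hsub : (convexHull ℝ (S : Set E)).extremePoints ℝ ⊆ vertices S := by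
    intro p hp
    refine mem_vertices.2 ⟨extremePoints_convexHull_subset hp, fun hin => ?_⟩
    exact (hconv.mem_extremePoints_iff_mem_sdiff_convexHull_sdiff.1 hp).2 (convexHull_mono
      (Set.sdiff_subset_sdiff_left (subset_convexHull ℝ _)) (mem_innerPoints.1 hin).2)
  have hkm := closure_convexHull_extremePoints (S.finite_toSet.isCompact_convexHull ℝ) hconv
  exact ((subset_convexHull ℝ _).trans hkm.ge).trans
    (((vertices S).finite_toSet.isClosed_convexHull ℝ).closure_subset_iff.2 (convexHull_mono hsub))

theorem sdiff_subset_convexHull (S D : Finset E) : (↑(S \ D) : Set E) ⊆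
    convexHull ℝ ((vertices S \ D) ∪ (innerPoints S \ innerPoints (S \ D))) := by
  refine (subset_convexHull_vertices (S \ D)).trans (convexHull_mono fun p hp => ?_)
  obtain ⟨hpD, hpi⟩ := mem_vertices.1 hp
  obtain ⟨hpS, hpD⟩ := Finset.mem_sdiff.1 hpD
  by_cases hpI : p ∈ innerPoints S
  · exact .inr ⟨hpI, hpi⟩
  · exact .inl ⟨mem_vertices.2 ⟨hpS, hpI⟩, hpD⟩

end NormedSpace

end Holes

namespace InGeneralPosition

open Holes

variable {d : ℕ} {S T : Finset (Fin d → ℝ)} {f : (Fin d → ℝ) →ᵃ[ℝ] ℝ} {x p : Fin d → ℝ}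

theorem mono (h : InGeneralPosition d S) (hT : T ⊆ S) : InGeneralPosition d T :=
  fun U hU => h U (hU.trans hT)

theorem affineIndependent_s6 (h : InGeneralPosition d S) (hT : T ⊆ S)
    (hS : d < S.card) (hc : T.card ≤ d + 1) : AffineIndependent ℝ ((↑) : T → (Fin d → ℝ)) := by
  obtain ⟨U, hTU, hUS, hU⟩ := Finset.exists_subsuperset_card_eq hT hc hS
  exact (h U hUS hU).mono (mod_cast hTU : (T : Set (Fin d → ℝ)) ⊆ U)

theorem affineSpan_eq_top (h : InGeneralPosition d S) (hT : T ⊆ S)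
    (hc : T.card = d + 1) : affineSpan ℝ (Set.range ((↑) : T → (Fin d → ℝ))) = ⊤ :=
  (h T hT hc).affineSpan_eq_top_iff_card_eq_finrank_add_one.2 (by simp [hc])

theorem card_zeros_le (h : InGeneralPosition d S) (hT : T ⊆ S)
    (h0 : ∀ q ∈ T, f q = 0) (hx : f x ≠ 0) : T.card ≤ d := by
  by_contra! hc
  obtain ⟨B, hBT, hB⟩ := Finset.exists_subset_card_eq (Nat.succ_le_of_lt hc)
  have heq : Set.EqOn f (0 : (Fin d → ℝ) →ᵃ[ℝ] ℝ)
      (affineSpan ℝ (Set.range ((↑) : B → (Fin d → ℝ)))) :=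
    AffineMap.eqOn_affineSpan (by rintro _ ⟨q, rfl⟩; exact h0 q (hBT q.2))
  rw [h.affineSpan_eq_top (hBT.trans hT) hB] at heq
  exact hx (heq (AffineSubspace.mem_top ℝ _ x))

theorem exists_hyperplane (h : InGeneralPosition d S) (hT : T ⊆ S)
    (hc : T.card = d) (hx : x ∈ S) (hxT : x ∉ T) :
    ∃ f : (Fin d → ℝ) →ᵃ[ℝ] ℝ, f x = 1 ∧ ∀ q ∈ S, f q = 0 ↔ q ∈ T := by
  have hBS := Finset.insert_subset hx hT
  have hB : (insert x T).card = d + 1 := by rw [Finset.card_insert_of_notMem hxT, hc]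
  let b : AffineBasis ↥(insert x T) ℝ (Fin d → ℝ) :=
    ⟨(↑), h _ hBS hB, h.affineSpan_eq_top hBS hB⟩
  let i : ↥(insert x T) := ⟨x, Finset.mem_insert_self x T⟩
  have hfx : b.coord i x = 1 := b.coord_apply_eq i
  have hf0 : ∀ q ∈ T, b.coord i q = 0 := fun q hq =>
    b.coord_apply_ne (j := ⟨q, Finset.mem_insert_of_mem hq⟩) fun hiq =>
      ne_of_mem_of_not_mem hq hxT (Subtype.ext_iff.1 hiq).symm
  refine ⟨b.coord i, hfx, fun q hq => ⟨fun hfq => ?_, hf0 q⟩⟩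
  by_contra hqT
  have hle := h.card_zeros_le (T := insert q T) (Finset.insert_subset hq hT)
    (Finset.forall_mem_insert .. |>.2 ⟨hfq, hf0⟩) (hfx.trans_ne one_ne_zero)
  rw [Finset.card_insert_of_notMem hqT, hc] at hle
  lia

theorem notMem_convexHull (h : InGeneralPosition d S) (hS : d < S.card)
    (hx : f x ≠ 0) (hp : p ∈ S) (hT : T ⊆ S) (hf : ∀ y ∈ T.erase p, f y ≤ 0) (hfp : 0 ≤ f p) :
    p ∉ convexHull ℝ (T.erase p : Set (Fin d → ℝ)) := by
  intro hmem
  have hfp0 : f p = 0 := (nonpos_of_mem_convexHull hf hmem).antisymm hfp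
  let Z := (T.erase p).filter fun y => f y = 0
  have hZS : insert p Z ⊆ S := Finset.insert_subset hp
    ((Finset.filter_subset _ _).trans ((Finset.erase_subset _ _).trans hT))
  have hZ0 : ∀ q ∈ insert p Z, f q = 0 :=
    (Finset.forall_mem_insert ..).2 ⟨hfp0, fun q hq => (Finset.mem_filter.1 hq).2⟩
  have hindep := h.affineIndependent_s6 hZS hS ((h.card_zeros_le hZS hZ0 hx).trans d.le_succ)
  have hpZ : p ∉ Z := fun hmem => Finset.notMem_erase p T (Finset.mem_filter.1 hmem).1
  have hinter := hindep.convexHull_inter (t₁ := {p}) (t₂ := Z) (by simp)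
    (Finset.subset_insert p Z)
  have hpZ' : p ∈ convexHull ℝ (Z : Set (Fin d → ℝ)) :=
    convexHull_mono (fun y hy => Finset.mem_filter.2 hy) (mem_convexHull_of_nonneg hf hmem hfp)
  have : p ∈ convexHull ℝ (({p} : Finset (Fin d → ℝ)) ∩ Z : Set (Fin d → ℝ)) := by
    rw [hinter]
    exact ⟨by simp, hpZ'⟩
  simp [hpZ] at this

theorem lt_card_vertices (h : InGeneralPosition d S) (hS : d < S.card) :
    d < (vertices S).card := by
  by_contra! hle
  obtain ⟨T, hvT, hTS, hT⟩ := Finset.exists_subsuperset_card_eq (vertices_subset S) hle hS.le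
  obtain ⟨x, hxS, hxT⟩ := Finset.exists_mem_notMem_of_card_lt_card (hT.trans_lt hS)
  obtain ⟨f, -, hf⟩ := h.exists_hyperplane hTS hT hxS hxT
  have hx := subset_convexHull_vertices S hxS
  have hf0 : ∀ y ∈ vertices S, f y = 0 := fun y hy => (hf y (vertices_subset S hy)).2 (hvT hy)
  exact hxT ((hf x hxS).1 (le_antisymm (nonpos_of_mem_convexHull (fun y hy => (hf0 y hy).le) hx)
    (nonneg_of_mem_convexHull (fun y hy => (hf0 y hy).ge) hx)))

end InGeneralPosition

namespace Holes

variable {d k m : ℕ} {S D : Finset (Fin d → ℝ)}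

-- The deleted points must stay outside the hull as well: any `k` of the remaining points form a
-- hole of `S`, not merely of `S \ D`.
theorem exists_isHole_of_notMem_convexHull (hS : S.card = k + m) (hD : D.card ≤ m)
    (h : ∀ p ∈ S, p ∉ convexHull ℝ ((S \ D).erase p : Set (Fin d → ℝ))) :
    ∃ X, IsHole d k S X := by
  have hk : k ≤ (S \ D).card := by
    have := Finset.le_card_sdiff D S
    lia
  obtain ⟨X, hX, hXk⟩ := Finset.exists_subset_card_eq hk
  have hXS : X ⊆ S := hX.trans Finset.sdiff_subset
  refine ⟨X, hXS, hXk, fun p hp hmem => ?_, fun p hp hpX hmem => ?_⟩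
  · exact h p (hXS hp) (convexHull_mono (mod_cast Finset.erase_subset_erase p hX) hmem)
  · rw [← Finset.erase_eq_of_notMem hpX] at hmem
    exact h p hp (convexHull_mono (mod_cast Finset.erase_subset_erase p hX) hmem)

end Holes

namespace InGeneralPosition

open Holes

variable {d k m : ℕ} {S T D : Finset (Fin d → ℝ)}

theorem exists_hyperplane_card_pos_le (h : InGeneralPosition d S) (hT : T ⊆ S) (hc : T.card = d)
    (hS : d < S.card) :
    ∃ f : (Fin d → ℝ) →ᵃ[ℝ] ℝ, (∀ q ∈ S, f q = 0 ↔ q ∈ T) ∧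
      2 * ((S \ D).filter fun q => 0 < f q).card ≤ ((S \ D) \ T).card := by
  obtain ⟨x, hxS, hxT⟩ := Finset.exists_mem_notMem_of_card_lt_card (hc.trans_lt hS)
  obtain ⟨f, -, hf⟩ := h.exists_hyperplane hT hc hxS hxT
  have hneg : ∀ q, (-f) q = -f q := fun _ => rfl
  let P := (S \ D).filter fun q => 0 < f q
  let N := (S \ D).filter fun q => 0 < (-f) q
  have hdisj : Disjoint P N := Finset.disjoint_filter.2 fun q _ hpos hneg' => by
    rw [hneg] at hneg'
    linarith
  have hsub : P ∪ N ⊆ (S \ D) \ T := by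
    intro q hq
    simp only [P, N, hneg, ← Finset.filter_or, Finset.mem_filter, neg_pos] at hq
    exact Finset.mem_sdiff.2 ⟨hq.1, fun hqT =>
      hq.2.elim ne_of_gt ne_of_lt ((hf q (Finset.sdiff_subset hq.1)).2 hqT)⟩
  have hcard := Finset.card_le_card hsub
  rw [Finset.card_union_of_disjoint hdisj] at hcard
  rcases le_total P.card N.card with hle | hle
  · exact ⟨f, hf, by lia⟩
  · exact ⟨-f, fun q hq => by rw [hneg, neg_eq_zero, hf q hq], by lia⟩

theorem exists_isHole_of_card_innerPoints_sdiff_le (h : InGeneralPosition d S)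
    (hS : S.card = k + m) (hD : D ⊆ vertices S) (hi : (innerPoints (S \ D)).card ≤ d)
    (hd : d + D.card < S.card) (hk : k + D.card ≤ m + d + 1) : ∃ X, IsHole d k S X := by
  have hDS := hD.trans (vertices_subset S)
  have hcard := Finset.card_sdiff_add_card_eq_card hDS
  obtain ⟨T, hiT, hTS, hT⟩ := Finset.exists_subsuperset_card_eq (innerPoints_subset (S \ D)) hi
    (by lia)
  obtain ⟨f, hf, hfc⟩ := h.exists_hyperplane_card_pos_le (D := D)
    (hTS.trans Finset.sdiff_subset) hT (by lia)
  obtain ⟨x, hxS, hxT⟩ := Finset.exists_mem_notMem_of_card_lt_card (by lia : T.card < S.card)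
  let P := (S \ D).filter fun q => 0 < f q
  have hPD : (P ∪ D).card ≤ m := by
    have := Finset.card_sdiff_add_card_eq_card hTS
    have := Finset.card_union_le P D
    lia
  refine exists_isHole_of_notMem_convexHull hS hPD fun p hp => ?_
  have hsub : S \ (P ∪ D) ⊆ S \ D := Finset.sdiff_subset_sdiff le_rfl Finset.subset_union_right
  by_cases hpD : p ∈ D
  · exact notMem_convexHull_of_mem_vertices (hD hpD) Finset.sdiff_subset
  have hp' : p ∈ S \ D := Finset.mem_sdiff.2 ⟨hp, hpD⟩
  by_cases hpi : p ∈ innerPoints (S \ D)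
  · refine h.notMem_convexHull (by lia) (fun h0 => hxT ((hf x hxS).1 h0)) hp Finset.sdiff_subset
      (fun y hy => ?_) ((hf p hp).2 (hiT hpi)).ge
    have hy := Finset.mem_of_mem_erase hy
    by_contra! hpos
    exact (Finset.mem_sdiff.1 hy).2
      (Finset.mem_union_left _ (Finset.mem_filter.2 ⟨hsub hy, hpos⟩))
  · exact notMem_convexHull_of_mem_vertices (mem_vertices.2 ⟨hp', hpi⟩) hsub

end InGeneralPosition

/-! ### Radon families -/

namespace Holes

/-- `F` is the family of affine functions attached to the Radon partition of the points `p i`: the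
function `F i - F j` vanishes at all of these points except `p i` and `p j`, where its values are
`β i` and `-β j`. For `d + 2` points in general position in `ℝ^d`, the `β i` are, up to a common
factor, the reciprocals of the coefficients of their affine dependence. -/
structure IsRadonFamily {ι E : Type*} [DecidableEq ι] [AddCommGroup E] [Module ℝ E] (p : ι → E)
    (β : ι → ℝ) (F : ι → E →ᵃ[ℝ] ℝ) : Prop where
  ne_zero (i : ι) : β i ≠ 0
  sub_apply (i j k : ι) :
    (F i - F j) (p k) = (if k = i then β i else 0) - if k = j then β j else 0

end Holes

namespace InGeneralPosition

open Holes

variable {d : ℕ} {S : Finset (Fin d → ℝ)} {ι : Type*} [Fintype ι] {p : ι → Fin d → ℝ}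

theorem exists_apply_eq_zero_iff (h : InGeneralPosition d S) (hp : Function.Injective p)
    (hpS : ∀ i, p i ∈ S) (hι : Fintype.card ι = d + 2) {i j : ι} (hij : i ≠ j) :
    ∃ f : (Fin d → ℝ) →ᵃ[ℝ] ℝ, f (p j) = 1 ∧ ∀ q ∈ S, f q = 0 ↔ ∃ k, k ≠ i ∧ k ≠ j ∧ p k = q := by
  classical
  let T := (({i, j} : Finset ι)ᶜ).image p
  have hT : T ⊆ S := Finset.image_subset_iff.2 fun k _ => hpS k
  have hc : T.card = d := by
    rw [Finset.card_image_of_injective _ hp, Finset.card_compl, hι, Finset.card_pair hij]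
    lia
  have hmem : ∀ q, q ∈ T ↔ ∃ k, k ≠ i ∧ k ≠ j ∧ p k = q := by
    simp [T, and_assoc]
  obtain ⟨f, hfj, hf⟩ := h.exists_hyperplane hT hc (hpS j)
    fun hj => by obtain ⟨k, -, hkj, hk⟩ := (hmem _).1 hj; exact hkj (hp hk)
  exact ⟨f, hfj, fun q hq => (hf q hq).trans (hmem q)⟩

theorem exists_isRadonFamily [DecidableEq ι] (h : InGeneralPosition d S) (hp : Function.Injective p)
    (hpS : ∀ i, p i ∈ S) (hι : Fintype.card ι = d + 2) : ∃ β F, IsRadonFamily p β F := by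
  obtain ⟨i₀⟩ : Nonempty ι := Fintype.card_pos_iff.1 (by lia)
  have hex : ∀ i, ∃ f : (Fin d → ℝ) →ᵃ[ℝ] ℝ, i ≠ i₀ → f (p i₀) = 1 ∧
      ∀ q ∈ S, f q = 0 ↔ ∃ k, k ≠ i ∧ k ≠ i₀ ∧ p k = q := fun i => by
    by_cases hi : i = i₀
    · exact ⟨0, fun hi' => (hi' hi).elim⟩
    · obtain ⟨f, hf⟩ := h.exists_apply_eq_zero_iff hp hpS hι hi
      exact ⟨f, fun _ => hf⟩
  choose f hf using hex
  have hfi : ∀ i k, i ≠ i₀ → (f i (p k) = 0 ↔ k ≠ i ∧ k ≠ i₀) := fun i k hi => by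
    rw [(hf i hi).2 _ (hpS k)]
    exact ⟨fun ⟨l, hli, hl, hlk⟩ => hp hlk ▸ ⟨hli, hl⟩, fun ⟨hki, hk⟩ => ⟨k, hki, hk, rfl⟩⟩
  let β := fun i => if i = i₀ then -1 else f i (p i)
  let F := fun i => if i = i₀ then 0 else f i
  have hF : ∀ i k, F i (p k) = (if k = i then β i else 0) + if k = i₀ then 1 else 0 := by
    intro i k
    by_cases hi : i = i₀
    · by_cases hk : k = i₀ <;> simp [F, β, hi, hk]
    by_cases hk : k = i₀
    · simp [F, hi, hk, (hf i hi).1, Ne.symm hi]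
    by_cases hki : k = i
    · simp [F, β, hi, hki]
    · simpa [F, hi, hk, hki] using (hfi i k hi).2 ⟨hki, hk⟩
  refine ⟨β, F, fun i => ?_, fun i j k => ?_⟩
  · by_cases hi : i = i₀
    · simp [β, hi]
    · simpa [β, hi] using (hfi i i hi).not.2 (by simp)
  · change F i (p k) - F j (p k) = _
    rw [hF, hF, add_sub_add_right_eq_sub]

end InGeneralPosition

namespace Holes.IsRadonFamily

variable {d : ℕ} {S : Finset (Fin d → ℝ)} {ι : Type*} [DecidableEq ι] {β : ι → ℝ}

section

variable {E : Type*} [AddCommGroup E] [Module ℝ E] {p : ι → E} {F : ι → E →ᵃ[ℝ] ℝ}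

theorem sub_apply_left (hF : IsRadonFamily p β F) {i j : ι} (hij : i ≠ j) :
    (F i - F j) (p i) = β i := by
  simp [hF.sub_apply, hij]

theorem sub_apply_right (hF : IsRadonFamily p β F) {i j : ι} (hij : i ≠ j) :
    (F i - F j) (p j) = -β j := by
  simp [hF.sub_apply, hij.symm]

theorem sub_apply_of_ne (hF : IsRadonFamily p β F) {i j k : ι} (hki : k ≠ i) (hkj : k ≠ j) :
    (F i - F j) (p k) = 0 := by
  simp [hF.sub_apply, hki, hkj]

-- The simplices opposite to `p i` and `p j` lie on different sides of the hyperplane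
-- `F i - F j = 0`.
theorem apply_eq_of_mem_convexHull (hF : IsRadonFamily p β F) {i j : ι} (hij : i ≠ j)
    (hβ : 0 < β i * β j) {q : E} (hi : q ∈ convexHull ℝ (p '' {i}ᶜ))
    (hj : q ∈ convexHull ℝ (p '' {j}ᶜ)) : F i q = F j q := by
  let g := β i • (F i - F j)
  have hg : ∀ x, g x = β i * (F i - F j) x := fun _ => rfl
  have hle : g q ≤ 0 := by
    refine nonpos_of_mem_convexHull (Set.forall_mem_image.2 fun k hk => ?_) hi
    by_cases hkj : k = j
    · rw [hg, hkj, hF.sub_apply_right hij]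
      linarith
    · rw [hg, hF.sub_apply_of_ne hk hkj, mul_zero]
  have hge : 0 ≤ g q := by
    refine nonneg_of_mem_convexHull (Set.forall_mem_image.2 fun k hk => ?_) hj
    by_cases hki : k = i
    · rw [hg, hki, hF.sub_apply_left hij]
      exact mul_self_nonneg _
    · rw [hg, hF.sub_apply_of_ne hki hk, mul_zero]
  exact sub_eq_zero.1 ((mul_eq_zero.1 (hle.antisymm hge)).resolve_left (hF.ne_zero i))

end

variable [Fintype ι] {p : ι → Fin d → ℝ} {F : ι → (Fin d → ℝ) →ᵃ[ℝ] ℝ}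

theorem injective_apply (hF : IsRadonFamily p β F) (h : InGeneralPosition d S)
    (hp : Function.Injective p) (hpS : ∀ i, p i ∈ S) (hι : Fintype.card ι = d + 2)
    {q : Fin d → ℝ} (hq : q ∈ S) (hqp : ∀ i, p i ≠ q) : Function.Injective fun i => F i q := by
  intro i j heq
  by_contra hij
  let T := (({i, j} : Finset ι)ᶜ).image p
  have hqT : q ∉ T := by simp [T, hqp]
  have hle := h.card_zeros_le (T := insert q T) (f := F i - F j) (x := p i)
    (Finset.insert_subset hq (Finset.image_subset_iff.2 fun k _ => hpS k)) ?_ ?_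
  · rw [Finset.card_insert_of_notMem hqT, Finset.card_image_of_injective _ hp,
      Finset.card_compl, hι, Finset.card_pair hij] at hle
    lia
  · refine (Finset.forall_mem_insert ..).2 ⟨sub_eq_zero.2 heq, Finset.forall_mem_image.2 ?_⟩
    intro k hk
    simp only [Finset.mem_compl, Finset.mem_insert, Finset.mem_singleton, not_or] at hk
    exact hF.sub_apply_of_ne hk.1 hk.2
  · rw [hF.sub_apply_left hij]
    exact hF.ne_zero i

end Holes.IsRadonFamily

/-! ### Exposed inner points -/

namespace Holes

/-- The deletion of `e` from `S` makes the inner point `i`, and no other inner point, extreme. -/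
def Exposes {E : Type*} [AddCommGroup E] [Module ℝ E] [DecidableEq E] (S : Finset E) (e i : E) :
    Prop :=
  i ∈ innerPoints S ∧ innerPoints (S \ {e}) = (innerPoints S).erase i

theorem Exposes.mem_convexHull {E : Type*} [NormedAddCommGroup E] [NormedSpace ℝ E]
    [DecidableEq E] {S : Finset E} {e i q : E} (h : Exposes S e i) (hq : q ∈ S) (hqe : q ≠ e) :
    q ∈ convexHull ℝ (insert i (vertices S \ {e}) : Set E) := by
  have hsub := sdiff_subset_convexHull S {e}
  rw [h.2] at hsub
  refine convexHull_mono (fun y hy => ?_) (hsub (by simp [hq, hqe]))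
  rcases hy with ⟨hyV, hye⟩ | ⟨hyI, hyi⟩
  · exact .inr ⟨hyV, by simpa using hye⟩
  · by_contra hyi'
    exact hyi (Finset.mem_erase.2 ⟨fun hyi => hyi' (.inl hyi), hyI⟩)

end Holes

namespace InGeneralPosition

open Holes

variable {d : ℕ} {S : Finset (Fin d → ℝ)}

theorem exists_innerPoints_sdiff_singleton_ne (h : InGeneralPosition d S) (hd : 0 < d)
    (hv : (vertices S).card = d + 2) (hi : (innerPoints S).Nonempty) :
    ∃ e ∈ vertices S, innerPoints (S \ {e}) ≠ innerPoints S := by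
  by_contra! heq
  obtain ⟨q, hq⟩ := hi
  have hqv : ∀ e : vertices S, ↑e ≠ q := fun e he => (mem_vertices.1 e.2).2 (he ▸ hq)
  have hcard : Fintype.card (vertices S) = d + 2 := by rw [Fintype.card_coe, hv]
  have hVS : ∀ e : vertices S, ↑e ∈ S := fun e => vertices_subset S e.2
  have hconv : ∀ e : vertices S, q ∈ convexHull ℝ ((↑) '' ({e}ᶜ : Set (vertices S))) := by
    intro e
    have hsub := sdiff_subset_convexHull S {↑e}
    rw [heq e e.2, Set.sdiff_self, Set.union_empty] at hsub
    refine convexHull_mono (fun y hy => ?_)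
      (hsub (by simp [innerPoints_subset S hq, (hqv e).symm]))
    exact ⟨⟨y, hy.1⟩, by simpa [Subtype.ext_iff] using hy.2, rfl⟩
  obtain ⟨β, F, hF⟩ := h.exists_isRadonFamily Subtype.val_injective hVS hcard
  obtain ⟨x, y, hxy, hsign⟩ := Fintype.exists_ne_map_eq_of_card_lt (fun e => decide (0 < β e))
    (by rw [Fintype.card_bool, hcard]; lia)
  have hβ : 0 < β x * β y := by
    have hx := hF.ne_zero x
    have hy := hF.ne_zero y
    rw [decide_eq_decide] at hsign
    by_cases hpos : 0 < β x
    · exact mul_pos hpos (hsign.1 hpos)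
    · exact mul_pos_of_neg_of_neg (lt_of_le_of_ne (not_lt.1 hpos) hx)
        (lt_of_le_of_ne (not_lt.1 (hsign.not.1 hpos)) hy)
  exact hxy (hF.injective_apply h Subtype.val_injective hVS hcard (innerPoints_subset S hq) hqv
    (hF.apply_eq_of_mem_convexHull hxy hβ (hconv x) (hconv y)))

theorem exists_exposes (h : InGeneralPosition d S) (hv : (vertices S).card = d + 1)
    (hS : d + 1 < S.card) {e : Fin d → ℝ} (he : e ∈ S)
    (hi : (innerPoints S).card ≤ (innerPoints (S \ {e})).card + 1) : ∃ i, Exposes S e i := by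
  have hsub : innerPoints (S \ {e}) ⊆ innerPoints S := innerPoints_mono Finset.sdiff_subset
  have hcard : (S \ {e}).card + 1 = S.card := by
    rw [Finset.sdiff_singleton_eq_erase, Finset.card_erase_add_one he]
  have hlt := (h.mono Finset.sdiff_subset).lt_card_vertices (S := S \ {e}) (by lia)
  have hsplit := card_vertices_add_card_innerPoints S
  have hsplit' := card_vertices_add_card_innerPoints (S \ {e})
  obtain ⟨i, hiS, hin⟩ := Finset.exists_mem_notMem_of_card_lt_card
    (by lia : (innerPoints (S \ {e})).card < (innerPoints S).card)
  refine ⟨i, hiS, Finset.eq_of_subset_of_card_le (Finset.subset_erase.2 ⟨hsub, hin⟩) ?_⟩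
  rw [Finset.card_erase_of_mem hiS]
  lia

theorem exists_mem_vertices_neg (h : InGeneralPosition d S) (hS : d < S.card)
    {f : (Fin d → ℝ) →ᵃ[ℝ] ℝ} {x i : Fin d → ℝ} (hx : f x ≠ 0) (hi : i ∈ innerPoints S)
    (hfi : f i ≤ 0) : ∃ y ∈ vertices S, f y < 0 := by
  by_contra! hf
  have hiS := innerPoints_subset S hi
  have hiV : i ∉ vertices S := fun hiV => (mem_vertices.1 hiV).2 hi
  refine h.notMem_convexHull (f := -f) hS (neg_ne_zero.2 hx) hiS (vertices_subset S)
    (fun y hy => neg_nonpos.2 (hf y (Finset.mem_of_mem_erase hy))) (neg_nonneg.2 hfi) ?_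
  rw [Finset.erase_eq_of_notMem hiV]
  exact subset_convexHull_vertices S hiS

theorem exists_hyperplane_separating_vertices (h : InGeneralPosition d S)
    (hv : (vertices S).card = d + 1) {e e' i : Fin d → ℝ} (he : e ∈ vertices S)
    (he' : e' ∈ vertices S) (hne : e ≠ e') (hi : i ∈ innerPoints S) :
    ∃ f : (Fin d → ℝ) →ᵃ[ℝ] ℝ, 0 < f e ∧ f e' < 0 ∧
      ∀ q ∈ S, f q = 0 ↔ q = i ∨ q ∈ vertices S \ {e, e'} := by
  have hVS := vertices_subset S
  have hVi : ∀ w ∈ vertices S, w ≠ i := fun w hw hwi => (mem_vertices.1 hw).2 (hwi ▸ hi)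
  let T := insert i (vertices S \ {e, e'})
  have hT : T ⊆ S := Finset.insert_subset (innerPoints_subset S hi) (Finset.sdiff_subset.trans hVS)
  have hTc : T.card = d := by
    rw [Finset.card_insert_of_notMem (by simp [mem_vertices, hi]),
      Finset.card_sdiff_of_subset (by simp [Finset.insert_subset_iff, he, he']),
      Finset.card_pair hne, hv]
    have := Finset.one_lt_card.2 ⟨e, he, e', he', hne⟩
    lia
  obtain ⟨f, hfe, hf⟩ := h.exists_hyperplane hT hTc (hVS he) (by simp [T, hVi e he])
  refine ⟨f, hfe ▸ one_pos, ?_, fun q hq => (hf q hq).trans Finset.mem_insert⟩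
  have hfi := (hf i (innerPoints_subset S hi)).2 (Finset.mem_insert_self ..)
  have hS := Finset.card_le_card hVS
  obtain ⟨y, hy, hfy⟩ := h.exists_mem_vertices_neg (by lia) (hfe.trans_ne one_ne_zero) hi hfi.le
  suffices hye' : y = e' from hye' ▸ hfy
  by_contra hye'
  have hye : y ≠ e := fun hye => by rw [hye, hfe] at hfy; linarith
  exact hfy.ne ((hf y (hVS hy)).2 (Finset.mem_insert_of_mem (by simp [hy, hye, hye'])))

theorem eq_of_exposes (h : InGeneralPosition d S) (hv : (vertices S).card = d + 1)
    (hi : 1 < (innerPoints S).card) {e e' i : Fin d → ℝ} (he : e ∈ vertices S)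
    (he' : e' ∈ vertices S) (hei : Exposes S e i) (hei' : Exposes S e' i) : e = e' := by
  by_contra hne
  obtain ⟨f, hfe, hfe', hf⟩ := h.exists_hyperplane_separating_vertices hv he he' hne hei.1
  have hfi : f i = 0 := (hf i (innerPoints_subset S hei.1)).2 (.inl rfl)
  have hf0 : ∀ w ∈ vertices S, w ≠ e → w ≠ e' → f w = 0 := fun w hw hwe hwe' =>
    (hf w (vertices_subset S hw)).2 (.inr (by simp [hw, hwe, hwe']))
  obtain ⟨j, hj, hji⟩ := Finset.exists_mem_ne hi i
  have hjS := innerPoints_subset S hj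
  have hjV : ∀ w ∈ vertices S, j ≠ w := fun w hw hjw => (mem_vertices.1 hw).2 (hjw ▸ hj)
  have hle : f j ≤ 0 := nonpos_of_mem_convexHull
    (Set.forall_mem_insert.2 ⟨hfi.le, fun w hw => by
      by_cases hwe' : w = e'
      · exact (hwe' ▸ hfe').le
      · exact (hf0 w hw.1 hw.2 hwe').le⟩) (hei.mem_convexHull hjS (hjV e he))
  have hge : 0 ≤ f j := nonneg_of_mem_convexHull
    (Set.forall_mem_insert.2 ⟨hfi.ge, fun w hw => by
      by_cases hwe : w = e
      · exact (hwe ▸ hfe).le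
      · exact (hf0 w hw.1 hwe hw.2).ge⟩) (hei'.mem_convexHull hjS (hjV e' he'))
  obtain hji' | hjV' := (hf j hjS).1 (hle.antisymm hge)
  · exact hji hji'
  · exact hjV j (Finset.mem_sdiff.1 hjV').1 rfl

end InGeneralPosition

namespace Holes

/-! ### Encoding of deletions -/

section Deletion

variable {ι V : Type*}

/-- The pair `h` stands for the affine function `F h.1 - F h.2`, which vanishes on all inner points
except `h.1` and `h.2`; its value at `h.1` has the sign `σ h.1`, its value at `h.2` the sign
opposite to `σ h.2`. `Removes σ h i` says that it is positive at the inner point `i`. -/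
def Removes (σ : ι → Bool) (h : ι × ι) (i : ι) : Prop :=
  (i = h.1 ∧ σ i = true) ∨ (i = h.2 ∧ σ i = false)

/-- The affine function attached to `h`, see `Removes`, is negative at the inner point `i`. -/
def Keeps (σ : ι → Bool) (h : ι × ι) (i : ι) : Prop :=
  (i = h.1 ∧ σ i = false) ∨ (i = h.2 ∧ σ i = true)

/-- The combinatorial data of a deletion that produces a hole. The extreme points are `V`, the
inner points are `Option V`, where `some v` is the inner point exposed by the deletion of `v`, and
`γ v i` is the value of `F i` at `v`. The inner points `DI` and the extreme points `DE`, at most `m`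
in all, are deleted; the functions attached to `h₁` and `h₂` are then nonpositive at all remaining
points, and every inner point where both are negative is exposed by a deleted extreme point. -/
def HasDeletion {R : Type*} [LinearOrder R] (m : ℕ) (σ : Option V → Bool) (γ : V → Option V → R) :
    Prop :=
  ∃ (h₁ h₂ : Option V × Option V) (DI : Finset (Option V)) (DE : Finset V),
    h₁.1 ≠ h₁.2 ∧ h₂.1 ≠ h₂.2 ∧ DI.card + DE.card ≤ m ∧
    (∀ i, Removes σ h₁ i ∨ Removes σ h₂ i → i ∈ DI) ∧
    (∀ i, Keeps σ h₁ i → Keeps σ h₂ i → ∃ v ∈ DE, i = some v) ∧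
    ∀ v ∉ DE, γ v h₁.1 ≤ γ v h₁.2 ∧ γ v h₂.1 ≤ γ v h₂.2

end Deletion

/-- A labelling of the inner points of `S`: `p (some v)` is the inner point exposed by the extreme
point `v`, and `p none` is the only inner point that is not exposed by an extreme point. -/
structure IsLabelling {E : Type*} [AddCommGroup E] [Module ℝ E] [DecidableEq E] (S : Finset E)
    (p : Option (vertices S) → E) : Prop where
  injective : Function.Injective p
  range_eq : Set.range p = innerPoints S
  exposes (v : vertices S) : Exposes S v (p (some v))

namespace IsRadonFamily

variable {ι E : Type*} [DecidableEq ι] [AddCommGroup E] [Module ℝ E] {p : ι → E} {β : ι → ℝ}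
  {F : ι → E →ᵃ[ℝ] ℝ}

theorem sub_apply_nonpos (hF : IsRadonFamily p β F) {h : ι × ι} (hne : h.1 ≠ h.2) {i : ι}
    (hi : ¬Removes (fun i => decide (0 < β i)) h i) : (F h.1 - F h.2) (p i) ≤ 0 := by
  simp only [Removes, decide_eq_true_eq, decide_eq_false_iff_not, not_or, not_and, not_not] at hi
  by_cases h₁ : i = h.1
  · rw [h₁, hF.sub_apply_left hne]
    exact not_lt.1 (h₁ ▸ hi.1 h₁)
  by_cases h₂ : i = h.2
  · rw [h₂, hF.sub_apply_right hne]
    exact neg_nonpos.2 (h₂ ▸ hi.2 h₂).le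
  · exact (hF.sub_apply_of_ne h₁ h₂).le

theorem sub_apply_nonneg (hF : IsRadonFamily p β F) {h : ι × ι} (hne : h.1 ≠ h.2) {i : ι}
    (hi : ¬Keeps (fun i => decide (0 < β i)) h i) : 0 ≤ (F h.1 - F h.2) (p i) := by
  simp only [Keeps, decide_eq_true_eq, decide_eq_false_iff_not, not_or, not_and, not_not] at hi
  by_cases h₁ : i = h.1
  · rw [h₁, hF.sub_apply_left hne]
    exact (h₁ ▸ hi.1 h₁).le
  by_cases h₂ : i = h.2
  · rw [h₂, hF.sub_apply_right hne]
    exact neg_nonneg.2 (not_lt.1 (h₂ ▸ hi.2 h₂))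
  · exact (hF.sub_apply_of_ne h₁ h₂).ge

theorem notMem_convexHull {d : ℕ} {S T : Finset (Fin d → ℝ)} {p : ι → Fin d → ℝ}
    {F : ι → (Fin d → ℝ) →ᵃ[ℝ] ℝ} (hF : IsRadonFamily p β F) (h : InGeneralPosition d S)
    (hd : d < S.card) (hT : T ⊆ S) {l : ι × ι} (hne : l.1 ≠ l.2)
    (hle : ∀ q ∈ T, (F l.1 - F l.2) q ≤ 0) {i : ι} (hi : p i ∈ S)
    (hkeep : ¬Keeps (fun i => decide (0 < β i)) l i) :
    p i ∉ convexHull ℝ (T.erase (p i) : Set (Fin d → ℝ)) := by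
  have hx : (F l.1 - F l.2) (p l.1) ≠ 0 := by
    rw [hF.sub_apply_left hne]
    exact hF.ne_zero _
  exact h.notMem_convexHull hd hx hi hT (fun y hy => hle y (Finset.mem_of_mem_erase hy))
    (hF.sub_apply_nonneg hne hkeep)

end IsRadonFamily

theorem Exposes.notMem_convexHull {E : Type*} [AddCommGroup E] [Module ℝ E] [DecidableEq E]
    {S Y : Finset E} {e i : E} (h : Exposes S e i) (hie : i ≠ e) (hY : Y ⊆ S \ {e}) :
    i ∉ convexHull ℝ (Y.erase i : Set E) := by
  refine notMem_convexHull_of_mem_vertices (mem_vertices.2 ⟨?_, ?_⟩) hY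
  · exact Finset.mem_sdiff.2 ⟨innerPoints_subset S h.1, by simpa using hie⟩
  · rw [h.2]
    exact Finset.notMem_erase _ _

end Holes

namespace InGeneralPosition

open Holes

variable {d : ℕ} {S : Finset (Fin d → ℝ)}

theorem exists_isLabelling (h : InGeneralPosition d S) (hv : (vertices S).card = d + 1)
    (hi : (innerPoints S).card = d + 2)
    (hexp : ∀ e ∈ vertices S, d + 1 ≤ (innerPoints (S \ {e})).card) : ∃ p, IsLabelling S p := by
  have hsplit := card_vertices_add_card_innerPoints S
  have hex : ∀ v : vertices S, ∃ i, Exposes S v i := fun v =>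
    h.exists_exposes hv (by lia) (vertices_subset S v.2) (by have := hexp v v.2; lia)
  choose ι hι using hex
  have hinj : Function.Injective ι := fun v w hvw =>
    Subtype.ext (h.eq_of_exposes hv (by lia) v.2 w.2 (hι v) (hvw ▸ hι w))
  have hcard : Fintype.card (vertices S) = d + 1 := by rw [Fintype.card_coe, hv]
  obtain ⟨z, hz, hzι⟩ := Finset.exists_mem_notMem_of_card_lt_card
    (s := Finset.univ.image ι) (t := innerPoints S) (by
      rw [Finset.card_image_of_injective _ hinj, Finset.card_univ, hcard, hi]
      exact Nat.lt_succ_self _)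
  let p : Option (vertices S) → Fin d → ℝ := fun o => o.elim z ι
  have hpI : ∀ o, p o ∈ innerPoints S := Option.forall.2 ⟨hz, fun v => (hι v).1⟩
  have hpinj : Function.Injective p :=
    Option.injective_iff.2 ⟨hinj, by simpa [p] using hzι⟩
  refine ⟨p, hpinj, ?_, hι⟩
  have himage : Finset.univ.image p = innerPoints S :=
    Finset.eq_of_subset_of_card_le (Finset.image_subset_iff.2 fun o _ => hpI o) (by
      rw [Finset.card_image_of_injective _ hpinj, Finset.card_univ, Fintype.card_option, hcard, hi])
  rw [← himage, Finset.coe_image, Finset.coe_univ, Set.image_univ]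

end InGeneralPosition

namespace Holes.IsLabelling

variable {d k m : ℕ} {S : Finset (Fin d → ℝ)} {p : Option (vertices S) → Fin d → ℝ}
  {β : Option (vertices S) → ℝ} {F : Option (vertices S) → (Fin d → ℝ) →ᵃ[ℝ] ℝ}

theorem mem_innerPoints (hp : IsLabelling S p) (o : Option (vertices S)) : p o ∈ innerPoints S := by
  have := Set.mem_range_self (f := p) o
  rwa [hp.range_eq] at this

theorem forall_mem_iff (hp : IsLabelling S p) {P : (Fin d → ℝ) → Prop} :
    (∀ q ∈ S, P q) ↔ (∀ v : vertices S, P v) ∧ ∀ o, P (p o) := by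
  refine ⟨fun h => ⟨fun v => h v (vertices_subset S v.2),
    fun o => h _ (innerPoints_subset S (hp.mem_innerPoints o))⟩, fun ⟨hv, ho⟩ q hq => ?_⟩
  by_cases hqI : q ∈ innerPoints S
  · obtain ⟨o, rfl⟩ : q ∈ Set.range p := hp.range_eq ▸ hqI
    exact ho o
  · exact hv ⟨q, mem_vertices.2 ⟨hq, hqI⟩⟩

theorem sub_apply_nonpos_of_notMem (hp : IsLabelling S p) (hF : IsRadonFamily p β F)
    {l : Option (vertices S) × Option (vertices S)} (hne : l.1 ≠ l.2)
    {DI : Finset (Option (vertices S))} {DE : Finset (vertices S)}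
    (hDI : ∀ o, Removes (fun o => decide (0 < β o)) l o → o ∈ DI)
    (hDE : ∀ v ∉ DE, F l.1 v ≤ F l.2 v) :
    ∀ q ∈ S, q ∉ DI.image p ∪ DE.image (↑) → (F l.1 - F l.2) q ≤ 0 := by
  refine hp.forall_mem_iff.2 ⟨fun v hv => sub_nonpos.2 (hDE v fun hvE => hv ?_),
    fun o ho => hF.sub_apply_nonpos hne fun hrem => ho ?_⟩
  · exact Finset.mem_union_right _ (Finset.mem_image_of_mem _ hvE)
  · exact Finset.mem_union_left _ (Finset.mem_image_of_mem _ (hDI o hrem))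

theorem exists_isHole_of_hasDeletion (hp : IsLabelling S p) (h : InGeneralPosition d S)
    (hS : S.card = k + m) (hd : d < S.card) (hF : IsRadonFamily p β F)
    (hdel : HasDeletion m (fun o => decide (0 < β o)) fun (v : vertices S) o => F o v) :
    ∃ X, IsHole d k S X := by
  obtain ⟨h₁, h₂, DI, DE, hne₁, hne₂, hcard, hremoves, hkeeps, hvalues⟩ := hdel
  let D := DI.image p ∪ DE.image (↑)
  have hD : D.card ≤ m := (Finset.card_union_le ..).trans
    ((add_le_add Finset.card_image_le Finset.card_image_le).trans hcard)
  have hnear₁ := hp.sub_apply_nonpos_of_notMem hF hne₁ (fun o ho => hremoves o (.inl ho))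
    fun v hv => (hvalues v hv).1
  have hnear₂ := hp.sub_apply_nonpos_of_notMem hF hne₂ (fun o ho => hremoves o (.inr ho))
    fun v hv => (hvalues v hv).2
  refine exists_isHole_of_notMem_convexHull hS hD (hp.forall_mem_iff.2 ⟨fun v =>
    notMem_convexHull_of_mem_vertices v.2 Finset.sdiff_subset, fun o => ?_⟩)
  have hoS := innerPoints_subset S (hp.mem_innerPoints o)
  by_cases hk₁ : Keeps (fun o => decide (0 < β o)) h₁ o
  · by_cases hk₂ : Keeps (fun o => decide (0 < β o)) h₂ o
    · obtain ⟨v, hv, rfl⟩ := hkeeps o hk₁ hk₂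
      refine (hp.exposes v).notMem_convexHull (fun hpv => ?_) (Finset.sdiff_subset_sdiff le_rfl ?_)
      · exact (mem_vertices.1 v.2).2 (hpv ▸ hp.mem_innerPoints (some v))
      · exact Finset.singleton_subset_iff.2
          (Finset.mem_union_right _ (Finset.mem_image_of_mem _ hv))
    · refine hF.notMem_convexHull h hd Finset.sdiff_subset hne₂ (fun q hq => ?_) hoS hk₂
      exact hnear₂ q (Finset.mem_sdiff.1 hq).1 (Finset.mem_sdiff.1 hq).2
  · refine hF.notMem_convexHull h hd Finset.sdiff_subset hne₁ (fun q hq => ?_) hoS hk₁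
    exact hnear₁ q (Finset.mem_sdiff.1 hq).1 (Finset.mem_sdiff.1 hq).2

end Holes.IsLabelling

namespace Holes

/-! ### Linear orders on the inner points -/

section Orders

variable {ι V R : Type*} [LinearOrder R] {m : ℕ} {σ : Option V → Bool}

-- Replacing every `F i` by `-F i` changes all signs and swaps the sides of the hyperplanes.
theorem HasDeletion.of_toDual {γ : V → Option V → R}
    (h : HasDeletion m (fun i => !σ i) fun v i => OrderDual.toDual (γ v i)) :
    HasDeletion m σ γ := by
  obtain ⟨h₁, h₂, DI, DE, hne₁, hne₂, hcard, hrem, hkeep, hle⟩ := h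
  refine ⟨h₁.swap, h₂.swap, DI, DE, hne₁.symm, hne₂.symm, hcard, fun i hi => hrem i ?_,
    fun i k₁ k₂ => hkeep i ?_ ?_, fun v hv => ?_⟩
  · simpa [Removes, or_comm] using hi
  · simpa [Keeps, or_comm] using k₁
  · simpa [Keeps, or_comm] using k₂
  · simpa using hle v hv

variable [Fintype V]

/-- The set `N(i, j)` of the extreme points `v` that rank `i` above `j`. -/
def above (γ : V → ι → R) (i j : ι) : Finset V :=
  Finset.univ.filter fun v => γ v j < γ v i

/-- The set of the extreme points `v` that rank `i` above all other elements of `L`. -/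
def top [DecidableEq ι] (γ : V → ι → R) (L : Finset ι) (i : ι) : Finset V :=
  Finset.univ.filter fun v => ∀ j ∈ L, j ≠ i → γ v j < γ v i

section General

variable {γ : V → ι → R}

theorem mem_above {i j : ι} {v : V} : v ∈ above γ i j ↔ γ v j < γ v i := by
  simp [above]

theorem mem_top [DecidableEq ι] {L : Finset ι} {i : ι} {v : V} :
    v ∈ top γ L i ↔ ∀ j ∈ L, j ≠ i → γ v j < γ v i := by
  simp [top]

theorem compl_above [DecidableEq V] (hγ : ∀ v, Function.Injective (γ v)) {i j : ι} (hij : i ≠ j) :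
    (above γ i j)ᶜ = above γ j i := by
  ext v
  have := (hγ v).ne hij
  simp only [Finset.mem_compl, mem_above, not_lt]
  exact ⟨fun h => h.lt_of_ne this, le_of_lt⟩

theorem card_above_add_card_above (hγ : ∀ v, Function.Injective (γ v)) {i j : ι} (hij : i ≠ j) :
    (above γ i j).card + (above γ j i).card = Fintype.card V := by
  classical
  rw [← compl_above hγ hij, Finset.card_add_card_compl]

theorem card_le_sum_card_top [DecidableEq ι] (hγ : ∀ v, Function.Injective (γ v)) {L : Finset ι}
    (hL : L.Nonempty) : Fintype.card V ≤ ∑ i ∈ L, (top γ L i).card := by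
  classical
  refine (Finset.card_le_card fun v _ => ?_).trans Finset.card_biUnion_le
  obtain ⟨i, hi, hmax⟩ := L.exists_max_image (γ v) hL
  exact Finset.mem_biUnion.2 ⟨i, hi, mem_top.2 fun j hj hji =>
    (hmax j hj).lt_of_ne ((hγ v).ne hji)⟩

theorem top_subset_inter_above [DecidableEq ι] [DecidableEq V] {L : Finset ι} {i j k : ι}
    (hj : j ∈ L) (hk : k ∈ L) (hij : i ≠ j) (hik : i ≠ k) :
    top γ L i ⊆ above γ i j ∩ above γ i k := fun v hv => by
  rw [mem_top] at hv
  simp only [Finset.mem_inter, mem_above]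
  exact ⟨hv j hj hij.symm, hv k hk hik.symm⟩

end General

variable [DecidableEq V] {γ : V → Option V → R}

theorem lt_card_of_not_hasDeletion (h : ¬HasDeletion m σ γ) {h₁ h₂ : Option V × Option V}
    (hne₁ : h₁.1 ≠ h₁.2) (hne₂ : h₂.1 ≠ h₂.2) (DI : Finset (Option V)) (W : Finset V)
    (hrem : ∀ i, Removes σ h₁ i ∨ Removes σ h₂ i → i ∈ DI)
    (hkeep : ∀ i, Keeps σ h₁ i → Keeps σ h₂ i → ∃ v ∈ W, i = some v) :
    m < DI.card + (above γ h₁.1 h₁.2 ∪ above γ h₂.1 h₂.2 ∪ W).card := by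
  by_contra! hle
  refine h ⟨h₁, h₂, DI, _, hne₁, hne₂, hle, hrem, fun i k₁ k₂ => ?_, fun v hv => ?_⟩
  · obtain ⟨v, hv, rfl⟩ := hkeep i k₁ k₂
    exact ⟨v, Finset.mem_union_right _ hv, rfl⟩
  · simpa only [Finset.mem_union, mem_above, not_or, not_lt, and_assoc] using
      (Finset.mem_union.not.1 hv |> not_or.1).1

theorem le_card_insert_above_of_neg (h : ¬HasDeletion m σ γ) {e : V} {j : Option V}
    (hne : some e ≠ j) (he : σ (some e) = false) (hj : σ j = false) :
    m ≤ (insert e (above γ (some e) j)).card := by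
  have := lt_card_of_not_hasDeletion h (h₁ := (some e, j)) (h₂ := (some e, j)) hne hne {j} {e}
    (by grind [Removes]) (by grind [Keeps])
  simp only [Finset.union_self, Finset.card_singleton, Finset.union_singleton] at this
  lia

omit [DecidableEq V] in
theorem lt_card_above_add_two (h : ¬HasDeletion m σ γ) {a x : Option V} (ha : σ a = true)
    (hx : σ x = false) : m < 2 + (above γ a x).card := by
  classical
  have hne : a ≠ x := by grind
  have := lt_card_of_not_hasDeletion h (h₁ := (a, x)) (h₂ := (a, x)) hne hne {a, x} ∅
    (by grind [Removes]) (by grind [Keeps])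
  simpa [hne] using this

theorem lt_card_insert_insert_above (h : ¬HasDeletion m σ γ) {a x : V} (ha : σ (some a) = true)
    (hx : σ (some x) = false) :
    m < (insert a (insert x (above γ (some x) (some a)))).card := by
  have hne : some x ≠ some a := by grind
  have := lt_card_of_not_hasDeletion h (h₁ := (some x, some a)) (h₂ := (some x, some a)) hne hne
    ∅ {a, x} (by grind [Removes]) (by grind [Keeps])
  simpa using this

theorem le_card_above_union_of_neg (h : ¬HasDeletion m σ γ) {x y z : Option V} (hxz : x ≠ z)
    (hyz : y ≠ z) (hxy : x ≠ y) (hx : σ x = false) (hy : σ y = false) (hz : σ z = false) :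
    m ≤ (above γ x z ∪ above γ y z).card := by
  have := lt_card_of_not_hasDeletion h (h₁ := (x, z)) (h₂ := (y, z)) hxz hyz {z} ∅
    (by grind [Removes]) (by grind [Keeps])
  simp only [Finset.card_singleton, Finset.union_empty] at this
  lia

theorem lt_card_above_union (h : ¬HasDeletion m σ γ) {a b x y : Option V} (hab : a ≠ b)
    (hxy : x ≠ y) (ha : σ a = true) (hb : σ b = true) (hx : σ x = false) (hy : σ y = false) :
    m < (above γ x a ∪ above γ y b).card := by
  have := lt_card_of_not_hasDeletion h (h₁ := (x, a)) (h₂ := (y, b)) (by grind) (by grind) ∅ ∅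
    (by grind [Removes]) (by grind [Keeps])
  simpa using this

end Orders

section SixExtremePoints

variable {V R : Type*} [LinearOrder R] [Fintype V] {σ : Option V → Bool} {γ : V → Option V → R}
  (hγ : ∀ v, Function.Injective (γ v)) (hV : Fintype.card V = 6)
  (h : ¬HasDeletion 4 σ γ)
include hγ hV h

theorem card_above_of_neg {x y : V} (hxy : x ≠ y) (hx : σ (some x) = false)
    (hy : σ (some y) = false) : (above γ (some x) (some y)).card = 3 := by
  classical
  have hne : some x ≠ some y := by simpa
  have hadd := card_above_add_card_above hγ hne
  have := (le_card_insert_above_of_neg h hne hx hy).trans (Finset.card_insert_le ..)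
  have := (le_card_insert_above_of_neg h hne.symm hy hx).trans (Finset.card_insert_le ..)
  lia

theorem card_above_of_pos_of_neg {a x : V} (ha : σ (some a) = true) (hx : σ (some x) = false) :
    (above γ (some a) (some x)).card = 3 := by
  classical
  have hadd := card_above_add_card_above hγ (i := some a) (j := some x) (by grind)
  have := lt_card_above_add_two h ha hx
  have := lt_card_insert_insert_above h ha hx
  have := Finset.card_insert_le a (insert x (above γ (some x) (some a)))
  have := Finset.card_insert_le x (above γ (some x) (some a))
  lia

theorem mem_above_of_pos_of_neg {a x : V} (ha : σ (some a) = true) (hx : σ (some x) = false) :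
    a ∈ above γ (some a) (some x) ∧ x ∈ above γ (some a) (some x) := by
  classical
  have hne : some x ≠ some a := by grind
  have hcard := card_above_of_pos_of_neg hγ hV h ha hx
  have hadd := card_above_add_card_above hγ hne
  have hlt := lt_card_insert_insert_above h ha hx
  rw [← compl_above hγ hne, Finset.mem_compl, Finset.mem_compl]
  constructor <;> intro hmem
  · rw [Finset.insert_eq_of_mem (Finset.mem_insert_of_mem hmem)] at hlt
    have := Finset.card_insert_le x (above γ (some x) (some a))
    lia
  · rw [Finset.insert_eq_of_mem hmem] at hlt
    have := Finset.card_insert_le a (above γ (some x) (some a))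
    lia

variable [DecidableEq V]

theorem card_inter_above_le_two {x y z : Option V} (hxy : x ≠ y) (hxz : x ≠ z) (hyz : y ≠ z)
    (hx : σ x = false) (hy : σ y = false) (hz : σ z = false) :
    (above γ z x ∩ above γ z y).card ≤ 2 := by
  have := le_card_above_union_of_neg h hxz hyz hxy hx hy hz
  rw [← compl_above hγ hxz, ← compl_above hγ hyz, ← Finset.compl_union, Finset.card_compl]
  lia

theorem card_inter_above_of_neg {x y z : Option V} (hxy : x ≠ y) (hxz : x ≠ z) (hyz : y ≠ z)
    (hx : σ x = false) (hy : σ y = false) (hz : σ z = false) :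
    (above γ z x ∩ above γ z y).card = 2 := by
  have htop : (Finset.univ : Finset V) ⊆ (above γ z x ∩ above γ z y) ∪
      ((above γ x y ∩ above γ x z) ∪ (above γ y x ∩ above γ y z)) := fun v _ => by
    have := (hγ v).ne hxy
    have := (hγ v).ne hxz
    have := (hγ v).ne hyz
    simp only [Finset.mem_union, Finset.mem_inter, mem_above]
    grind
  have := (Finset.card_le_card htop).trans (Finset.card_union_le ..)
  have := Finset.card_union_le (above γ x y ∩ above γ x z) (above γ y x ∩ above γ y z)
  have := card_inter_above_le_two hγ hV h hxy hxz hyz hx hy hz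
  have := card_inter_above_le_two hγ hV h hyz hxy.symm hxz.symm hy hz hx
  have := card_inter_above_le_two hγ hV h hxz hxy hyz.symm hx hz hy
  have := Finset.card_univ (α := V)
  lia

theorem card_inter_above_le_one {a b x y : Option V} (hab : a ≠ b) (hxy : x ≠ y)
    (ha : σ a = true) (hb : σ b = true) (hx : σ x = false) (hy : σ y = false) :
    (above γ a x ∩ above γ b y).card ≤ 1 := by
  have := lt_card_above_union h hab hxy ha hb hx hy
  rw [← compl_above hγ (i := x) (j := a) (by grind),
    ← compl_above hγ (i := y) (j := b) (by grind), ← Finset.compl_union, Finset.card_compl]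
  lia

theorem card_above_and_card_inter_above {a b c x y z : Option V} (hab : a ≠ b) (hac : a ≠ c)
    (hbc : b ≠ c) (hxy : x ≠ y) (hxz : x ≠ z) (hyz : y ≠ z) (ha : σ a = true) (hb : σ b = true)
    (hc : σ c = true) (hx : σ x = false) (hy : σ y = false) (hz : σ z = false) :
    (above γ a x).card = 3 ∧ (above γ a x ∩ above γ b y).card = 1 := by
  have := lt_card_above_add_two h ha hx
  have := lt_card_above_add_two h hb hy
  have := lt_card_above_add_two h hc hz
  have := card_inter_above_le_one hγ hV h hab hxy ha hb hx hy
  have := card_inter_above_le_one hγ hV h hac hxz ha hc hx hz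
  have := card_inter_above_le_one hγ hV h hbc hyz hb hc hy hz
  have := Finset.card_union_add_card_inter (above γ a x) (above γ b y)
  have hunion := Finset.card_union_add_card_inter (above γ a x ∪ above γ b y) (above γ c z)
  rw [Finset.union_inter_distrib_right] at hunion
  have := Finset.card_union_le (above γ a x ∩ above γ c z) (above γ b y ∩ above γ c z)
  have := Finset.card_le_univ (above γ a x ∪ above γ b y ∪ above γ c z)
  lia

end SixExtremePoints

section FiveEqualSigns

variable {V R : Type*} [LinearOrder R] [Fintype V] [DecidableEq V] {σ : Option V → Bool}
  {γ : V → Option V → R}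

theorem card_add_sum_card_sdiff_le {ι : Type*} {s : Finset ι} {B : ι → Finset V} {K : Finset V}
    (hB : ∀ i ∈ s, ∀ j ∈ s, i ≠ j → B i ∩ B j = K) :
    K.card + ∑ i ∈ s, (B i \ K).card ≤ Fintype.card V := by
  rw [← Finset.card_biUnion, ← Finset.card_union_of_disjoint]
  · exact Finset.card_le_univ _
  · simp [Finset.disjoint_biUnion_right, Finset.disjoint_sdiff]
  · intro i hi j hj hij
    refine Finset.disjoint_left.2 fun v hvi hvj => ?_
    rw [Finset.mem_sdiff] at hvi hvj
    exact hvi.2 (hB i hi j hj hij ▸ Finset.mem_inter.2 ⟨hvi.1, hvj.1⟩)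

omit [Fintype V] [DecidableEq V] in
theorem exists_lt_lt_lt_of_card_eq_four {g : V → R} (hg : Function.Injective g) {Q : Finset V}
    (hQ : Q.card = 4) :
    ∃ u ∈ Q, ∃ x ∈ Q, ∃ y ∈ Q, ∃ w ∈ Q, y ≠ w ∧ g y < g x ∧ g w < g x ∧ g x < g u := by
  classical
  obtain ⟨u, hu, hmaxu⟩ := Q.exists_max_image g (Finset.card_pos.1 (by lia))
  have hcardu : (Q.erase u).card = 3 := by rw [Finset.card_erase_of_mem hu, hQ]
  obtain ⟨x, hx, hmaxx⟩ := (Q.erase u).exists_max_image g (Finset.card_pos.1 (by lia))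
  obtain ⟨y, hy, w, hw, hyw⟩ := Finset.one_lt_card.1
    (by rw [Finset.card_erase_of_mem hx, hcardu]; lia : 1 < ((Q.erase u).erase x).card)
  simp only [Finset.mem_erase] at hx hy hw hmaxx
  exact ⟨u, hu, x, hx.2, y, hy.2.2, w, hw.2.2, hyw, (hmaxx y hy.2).lt_of_ne (hg.ne hy.1),
    (hmaxx w hw.2).lt_of_ne (hg.ne hw.1), (hmaxu x hx.2).lt_of_ne (hg.ne hx.1)⟩

variable (hγ : ∀ v, Function.Injective (γ v)) (hV : Fintype.card V = 6) (h : ¬HasDeletion 4 σ γ)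
include hγ hV h

section Top

variable {L : Finset (Option V)} (hL : ∀ i ∈ L, σ i = false)
include hL

theorem card_top_le_two {i j k : Option V} (hi : i ∈ L) (hj : j ∈ L) (hk : k ∈ L) (hij : i ≠ j)
    (hik : i ≠ k) (hjk : j ≠ k) : (top γ L i).card ≤ 2 :=
  (Finset.card_le_card (top_subset_inter_above hj hk hij hik)).trans_eq
    (card_inter_above_of_neg hγ hV h hjk hij.symm hik.symm (hL j hj) (hL k hk) (hL i hi))

theorem above_inter_above_eq_top {i j k : Option V} (hi : i ∈ L) (hj : j ∈ L) (hk : k ∈ L)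
    (hij : i ≠ j) (hik : i ≠ k) (hjk : j ≠ k) (hcard : 2 ≤ (top γ L i).card) :
    above γ i j ∩ above γ i k = top γ L i := by
  refine (Finset.eq_of_subset_of_card_le (top_subset_inter_above hj hk hij hik) ?_).symm
  rwa [card_inter_above_of_neg hγ hV h hjk hij.symm hik.symm (hL j hj) (hL k hk) (hL i hi)]

-- Otherwise the sets `insert x N(x, j)`, `j ∈ L`, form a sunflower with too large petals.
theorem card_top_some_le_one (hcard : L.card = 5) {x : V} (hx : some x ∈ L) :
    (top γ L (some x)).card ≤ 1 := by
  by_contra! htwo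
  set J := L.erase (some x)
  have hJ : ∀ j ∈ J, j ∈ L ∧ some x ≠ j := by simp +contextual [J, eq_comm]
  have hJcard : J.card = 4 := by rw [Finset.card_erase_of_mem hx, hcard]
  obtain ⟨i, hi, j, hj, hij⟩ := Finset.one_lt_card.1 (by lia : 1 < J.card)
  have hle := card_top_le_two hγ hV h hL hx (hJ i hi).1 (hJ j hj).1 (hJ i hi).2 (hJ j hj).2 hij
  have hflower := card_add_sum_card_sdiff_le (s := J) (K := insert x (top γ L (some x)))
    (B := fun j => insert x (above γ (some x) j)) fun i hi j hj hij => by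
      rw [← above_inter_above_eq_top hγ hV h hL hx (hJ i hi).1 (hJ j hj).1 (hJ i hi).2 (hJ j hj).2
        hij htwo, Finset.insert_inter_distrib]
  have hpetal : ∀ j ∈ J, 4 - (insert x (top γ L (some x))).card ≤
      (insert x (above γ (some x) j) \ insert x (top γ L (some x))).card := fun j hj =>
    (Nat.sub_le_sub_right
      (le_card_insert_above_of_neg h (hJ j hj).2 (hL _ hx) (hL j (hJ j hj).1)) _).trans
      (Finset.le_card_sdiff _ _)
  have hsum := Finset.card_nsmul_le_sum J _ _ hpetal
  have := Finset.card_insert_le x (top γ L (some x))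
  rw [hJcard, smul_eq_mul] at hsum
  lia

end Top

section CommonIntersection

variable {Q K : Finset V} (hQ : ∀ x ∈ Q, σ (some x) = false) (hz : σ none = false)
  (hK : ∀ x ∈ Q, ∀ y ∈ Q, x ≠ y → above γ none (some x) ∩ above γ none (some y) = K)
include hQ hz hK

theorem card_above_inter_eq_one {x y : V} (hx : x ∈ Q) (hy : y ∈ Q) (hxy : x ≠ y) :
    (above γ (some x) (some y) ∩ K).card = 1 := by
  have hcard := card_above_of_neg hγ hV h hxy (hQ x hx) (hQ y hy)
  have htwo := card_inter_above_of_neg hγ hV h (by simp) (by simpa using hxy.symm) (by simp)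
    (hQ y hy) hz (hQ x hx)
  have heq : above γ (some x) (some y) \ K =
      above γ (some x) (some y) ∩ above γ (some x) none := by
    ext v
    have := (hγ v).ne (Option.some_ne_none x)
    simp only [← hK x hx y hy hxy, Finset.mem_sdiff, Finset.mem_inter, mem_above]
    grind
  have := Finset.card_sdiff_add_card_inter (above γ (some x) (some y)) K
  rw [heq] at this
  lia

theorem above_sdiff_eq {x y u : V} (hx : x ∈ Q) (hy : y ∈ Q) (hu : u ∈ Q) (hxy : x ≠ y)
    (hxu : x ≠ u) (hyu : y ≠ u)
    (hdisj : Disjoint (above γ (some x) (some y) ∩ above γ (some x) (some u)) K) :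
    above γ (some x) (some y) \ K = above γ (some x) (some u) \ K := by
  have hcard : ∀ w ∈ Q, x ≠ w → (above γ (some x) (some w) \ K).card = 2 := fun w hw hxw => by
    have := Finset.card_sdiff_add_card_inter (above γ (some x) (some w)) K
    rw [card_above_of_neg hγ hV h hxw (hQ x hx) (hQ w hw),
      card_above_inter_eq_one hγ hV h hQ hz hK hx hw hxw] at this
    lia
  have htwo := card_inter_above_of_neg hγ hV h (x := some y) (y := some u) (z := some x)
    (by simpa) (by simpa using hxy.symm) (by simpa using hxu.symm) (hQ y hy) (hQ u hu) (hQ x hx)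
  rw [← Finset.eq_of_subset_of_card_le (Finset.subset_sdiff.2 ⟨Finset.inter_subset_left, hdisj⟩)
      (by rw [hcard y hy hxy, htwo]),
    ← Finset.eq_of_subset_of_card_le (Finset.subset_sdiff.2 ⟨Finset.inter_subset_right, hdisj⟩)
      (by rw [hcard u hu hxu, htwo])]

-- If `k` ranks `x` between `u` and `y, w`, then `N(x, y)` and `N(x, w)` both meet `K` in `{k}`,
-- and outside `K` both agree with `N(x, u)`.
theorem not_lt_of_mem_of_lt_of_lt {x y u w k : V} (hx : x ∈ Q) (hy : y ∈ Q) (hu : u ∈ Q)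
    (hw : w ∈ Q) (hyw : y ≠ w) (hk : k ∈ K) (hyx : γ k (some y) < γ k (some x))
    (hwx : γ k (some w) < γ k (some x)) : ¬γ k (some x) < γ k (some u) := by
  intro hxu
  have hne : x ≠ y ∧ x ≠ w ∧ x ≠ u ∧ y ≠ u ∧ w ≠ u := by grind
  obtain ⟨hxy, hxw, hxu', hyu, hwu⟩ := hne
  have hku : k ∉ above γ (some x) (some u) := fun hmem => (mem_above.1 hmem).not_gt hxu
  have hinter : ∀ t ∈ Q, x ≠ t → k ∈ above γ (some x) (some t) →
      above γ (some x) (some t) ∩ K = {k} := fun t ht hxt hkt =>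
    (Finset.eq_of_subset_of_card_le (by simp [hk, hkt]) (by
      rw [card_above_inter_eq_one hγ hV h hQ hz hK hx ht hxt, Finset.card_singleton])).symm
  have hsdiff : ∀ t ∈ Q, x ≠ t → t ≠ u → k ∈ above γ (some x) (some t) →
      above γ (some x) (some t) \ K = above γ (some x) (some u) \ K := fun t ht hxt htu hkt =>
    above_sdiff_eq hγ hV h hQ hz hK hx ht hu hxt hxu' htu <| by
      rw [Finset.disjoint_iff_inter_eq_empty, Finset.inter_right_comm, hinter t ht hxt hkt,
        Finset.singleton_inter_of_notMem hku]
  have heq : above γ (some x) (some y) = above γ (some x) (some w) := by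
    have hky := mem_above.2 hyx
    have hkw := mem_above.2 hwx
    rw [← Finset.sdiff_union_inter (above γ _ (some y)) K,
      ← Finset.sdiff_union_inter (above γ _ (some w)) K, hsdiff y hy hxy hyu hky,
      hsdiff w hw hxw hwu hkw, hinter y hy hxy hky, hinter w hw hxw hkw]
  have htwo := card_inter_above_of_neg hγ hV h (x := some y) (y := some w) (z := some x)
    (by simpa) (by simpa using hxy.symm) (by simpa using hxw.symm) (hQ y hy) (hQ w hw) (hQ x hx)
  rw [← heq, Finset.inter_self, card_above_of_neg hγ hV h hxy (hQ x hx) (hQ y hy)] at htwo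
  lia

end CommonIntersection

omit [DecidableEq V] in
theorem false_of_five_neg {L : Finset (Option V)} (hL : ∀ i ∈ L, σ i = false)
    (hcard : L.card = 5) : False := by
  classical
  have hsum := card_le_sum_card_top hγ (L := L) (Finset.card_pos.1 (by lia))
  have hle : ∑ i ∈ L.erase none, (top γ L i).card ≤ ∑ i ∈ L.erase none, 1 := by
    refine Finset.sum_le_sum fun i hi => ?_
    obtain ⟨x, rfl⟩ := Option.ne_none_iff_exists'.1 (Finset.ne_of_mem_erase hi)
    exact card_top_some_le_one hγ hV h hL hcard (Finset.mem_of_mem_erase hi)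
  rw [Finset.sum_const, smul_eq_mul, mul_one] at hle
  have hnone : none ∈ L := by
    by_contra hnone
    rw [Finset.erase_eq_of_notMem hnone] at hle
    lia
  rw [← Finset.add_sum_erase _ _ hnone] at hsum
  rw [Finset.card_erase_of_mem hnone] at hle
  have hQ : ∀ x ∈ L.eraseNone, some x ∈ L := fun x => Finset.mem_eraseNone.1
  have hK : ∀ x ∈ L.eraseNone, ∀ y ∈ L.eraseNone, x ≠ y →
      above γ none (some x) ∩ above γ none (some y) = top γ L none := fun x hx y hy hxy =>
    above_inter_above_eq_top hγ hV h hL hnone (hQ x hx) (hQ y hy) (by simp) (by simp)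
      (by simpa using hxy) (by lia)
  obtain ⟨k, hk⟩ := Finset.card_pos.1 (by lia : 0 < (top γ L none).card)
  obtain ⟨u, hu, x, hx, y, hy, w, hw, hyw, hyx, hwx, hxu⟩ := exists_lt_lt_lt_of_card_eq_four
    ((hγ k).comp (Option.some_injective V)) (Q := L.eraseNone)
    (by rw [Finset.card_eraseNone_of_mem hnone, hcard])
  exact not_lt_of_mem_of_lt_of_lt hγ hV h (fun x hx => hL _ (hQ x hx)) (hL _ hnone) hK hx hy hu hw
    hyw hk hyx hwx hxu

end FiveEqualSigns

section Parity

variable {V R : Type*} [LinearOrder R] [DecidableEq V] {σ : Option V → Bool} {γ : V → Option V → R}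

omit [DecidableEq V] in
theorem mem_iff_notMem_of_card_eq_two {T : Finset V} {a b c : V} (hT : T.card = 2) (ha : a ∈ T)
    (hab : a ≠ b) (hac : a ≠ c) (hbc : b ≠ c) (hsub : ∀ v ∈ T, v = a ∨ v = b ∨ v = c) :
    b ∈ T ↔ c ∉ T := by
  classical
  obtain ⟨u, v, huv, rfl⟩ := Finset.card_eq_two.1 hT
  have hu := hsub u (by simp)
  have hv := hsub v (by simp)
  simp only [Finset.mem_insert, Finset.mem_singleton] at ha ⊢
  grind

variable [Fintype V] (hγ : ∀ v, Function.Injective (γ v)) (hV : Fintype.card V = 6)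
  (h : ¬HasDeletion 4 σ γ)
include hγ hV h

-- Each of the three intersections is a pair that contains one of `p, q, r` and exactly one of the
-- other two; going around the cycle gives a parity contradiction.
theorem false_of_cyclic {p q r : V} {z : Option V} (hpq : p ≠ q) (hpr : p ≠ r) (hqr : q ≠ r)
    (hzp : z ≠ some p) (hzq : z ≠ some q) (hzr : z ≠ some r) (hp : σ (some p) = false)
    (hq : σ (some q) = false) (hr : σ (some r) = false) (hz : σ z = false)
    (hbelow : ∀ v, v ≠ p → v ≠ q → v ≠ r → v ∈ above γ (some p) z ∧ v ∈ above γ (some q) z)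
    (hvp : p ∈ above γ z (some p) ∩ above γ z (some r))
    (hvq : q ∈ above γ z (some p) ∩ above γ z (some q))
    (hvr : r ∈ above γ z (some q) ∩ above γ z (some r)) : False := by
  have hcard : ∀ x y, x ≠ y → z ≠ some x → z ≠ some y → σ (some x) = false → σ (some y) = false →
      (above γ z (some x) ∩ above γ z (some y)).card = 2 := fun x y hxy hzx hzy hx hy =>
    card_inter_above_of_neg hγ hV h (by simpa) hzx.symm hzy.symm hx hy hz
  have hsub : ∀ x y, (x = p ∨ x = q) ∨ (y = p ∨ y = q) →
      ∀ v ∈ above γ z (some x) ∩ above γ z (some y), v = p ∨ v = q ∨ v = r := by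
    intro x y hxy v hv
    by_contra! hne
    have := hbelow v hne.1 hne.2.1 hne.2.2
    simp only [mem_above, Finset.mem_inter] at hv this
    grind
  have hpq' := mem_iff_notMem_of_card_eq_two (hcard p q hpq hzp hzq hp hq) hvq hpq.symm hqr hpr
    (by grind)
  have hpr' := mem_iff_notMem_of_card_eq_two (hcard p r hpr hzp hzr hp hr) hvp hpq hpr hqr
    (by grind)
  have hqr' := mem_iff_notMem_of_card_eq_two (hcard q r hqr hzq hzr hq hr) hvr hpr.symm hqr.symm
    hpq (by grind)
  simp only [Finset.mem_inter] at hvp hvq hvr hpq' hpr' hqr'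
  tauto

end Parity

/-! ### Signs split three to four -/

section Crossing

variable {V R : Type*} [LinearOrder R] [Fintype V] {σ : Option V → Bool} {γ : V → Option V → R}

/-- For `a` of positive and `x` of negative sign, `f a x` is the third element of the set
`N(a, x)`, which has three elements and contains `a` and `x`. The last field says that
`N(i, j)` meets `N(b, y)` in a single element if `i`, `b` and also `j`, `y` are distinct. -/
structure IsCrossing (σ : Option V → Bool) (γ : V → Option V → R) (f : V → V → V) : Prop where
  ne_left {a x : V} : σ (some a) = true → σ (some x) = false → f a x ≠ a
  ne_right {a x : V} : σ (some a) = true → σ (some x) = false → f a x ≠ x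
  mem_above_iff {a x : V} : σ (some a) = true → σ (some x) = false →
    ∀ v, v ∈ above γ (some a) (some x) ↔ v = a ∨ v = x ∨ v = f a x
  card_above {i j : Option V} : σ i = true → σ j = false → (above γ i j).card = 3
  exactly_one {i j : Option V} {b y : V} : σ i = true → σ j = false → σ (some b) = true →
    σ (some y) = false → i ≠ some b → j ≠ some y →
    (b ∈ above γ i j ∧ y ∉ above γ i j ∧ f b y ∉ above γ i j) ∨
    (b ∉ above γ i j ∧ y ∈ above γ i j ∧ f b y ∉ above γ i j) ∨
    (b ∉ above γ i j ∧ y ∉ above γ i j ∧ f b y ∈ above γ i j)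

theorem IsCrossing.meets {f : V → V → V} (hf : IsCrossing σ γ f) {a b x y : V}
    (ha : σ (some a) = true) (hb : σ (some b) = true) (hx : σ (some x) = false)
    (hy : σ (some y) = false) (hab : a ≠ b) (hxy : x ≠ y) :
    (f a x = b ∨ f a x = y ∨ f b y = a ∨ f b y = x ∨ f a x = f b y) ∧
      (f a x = b ∨ f a x = y → f b y ≠ a ∧ f b y ≠ x) := by
  have hone := hf.exactly_one ha hx hb hy (by simpa using hab) (by simpa using hxy)
  have hne : a ≠ y ∧ b ≠ x := by grind
  simp only [hf.mem_above_iff ha hx, hab.symm, hxy.symm, hne.1.symm, hne.2, false_or] at hone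
  grind

theorem exactly_one_mem_of_card_inter_eq_one {α : Type*} [DecidableEq α] {s : Finset α}
    {a b c : α} (hab : a ≠ b) (hac : a ≠ c) (hbc : b ≠ c)
    (hs : (s ∩ {a, b, c}).card = 1) :
    (a ∈ s ∧ b ∉ s ∧ c ∉ s) ∨ (a ∉ s ∧ b ∈ s ∧ c ∉ s) ∨ (a ∉ s ∧ b ∉ s ∧ c ∈ s) := by
  by_cases ha : a ∈ s <;> by_cases hb : b ∈ s <;> by_cases hc : c ∈ s <;>
    simp_all [Finset.inter_insert_of_mem, Finset.inter_insert_of_notMem]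

variable [DecidableEq V] (hγ : ∀ v, Function.Injective (γ v)) (hV : Fintype.card V = 6)
  (h : ¬HasDeletion 4 σ γ)
include hγ hV h

theorem exists_above_eq_insert {a x : V} (ha : σ (some a) = true) (hx : σ (some x) = false) :
    ∃ t, t ≠ a ∧ t ≠ x ∧ above γ (some a) (some x) = {a, x, t} := by
  have hax : ({a, x} : Finset V) ⊆ above γ (some a) (some x) := by
    simpa [Finset.insert_subset_iff] using mem_above_of_pos_of_neg hγ hV h ha hx
  have hne : a ≠ x := by grind
  obtain ⟨t, ht, heq⟩ := Finset.exists_eq_insert_iff.2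
    ⟨hax, by rw [card_above_of_pos_of_neg hγ hV h ha hx, Finset.card_pair hne]⟩
  simp only [Finset.mem_insert, Finset.mem_singleton, not_or] at ht
  exact ⟨t, ht.1, ht.2, by rw [← heq, Finset.insert_comm t, Finset.pair_comm t]⟩

omit [DecidableEq V] in
theorem exists_isCrossing (hpos : ∀ i j, ∃ k, σ k = true ∧ k ≠ i ∧ k ≠ j)
    (hneg : ∀ i j, ∃ k, σ k = false ∧ k ≠ i ∧ k ≠ j) : ∃ f, IsCrossing σ γ f := by
  classical
  have hcard : ∀ i j i' j', σ i = true → σ j = false → σ i' = true → σ j' = false → i ≠ i' →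
      j ≠ j' → (above γ i j).card = 3 ∧ (above γ i j ∩ above γ i' j').card = 1 := by
    intro i j i' j' hi hj hi' hj' hii' hjj'
    obtain ⟨k, hk, hki, hki'⟩ := hpos i i'
    obtain ⟨l, hl, hlj, hlj'⟩ := hneg j j'
    exact card_above_and_card_inter_above hγ hV h hii' hki.symm hki'.symm hjj' hlj.symm hlj'.symm
      hi hi' hk hj hj' hl
  have hthird : ∀ a x, ∃ t, σ (some a) = true → σ (some x) = false →
      t ≠ a ∧ t ≠ x ∧ above γ (some a) (some x) = {a, x, t} := by
    intro a x
    by_cases hax : σ (some a) = true ∧ σ (some x) = false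
    · obtain ⟨t, ht⟩ := exists_above_eq_insert hγ hV h hax.1 hax.2
      exact ⟨t, fun _ _ => ht⟩
    · exact ⟨a, fun ha hx => (hax ⟨ha, hx⟩).elim⟩
  choose f hf using hthird
  refine ⟨f, ⟨fun ha hx => (hf _ _ ha hx).1, fun ha hx => (hf _ _ ha hx).2.1, fun ha hx v => by
    simp [(hf _ _ ha hx).2.2], fun {i j} hi hj => ?_, fun {i j b y} hi hj hb hy hib hjy => ?_⟩⟩
  · obtain ⟨k, hk, hki, -⟩ := hpos i i
    obtain ⟨l, hl, hlj, -⟩ := hneg j j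
    exact (hcard i j k l hi hj hk hl hki.symm hlj.symm).1
  · obtain ⟨hfb, hfy, heq⟩ := hf b y hb hy
    have hinter := (hcard i j _ _ hi hj hb hy hib hjy).2
    rw [heq] at hinter
    exact exactly_one_mem_of_card_inter_eq_one (by grind) hfb.symm hfy.symm hinter

end Crossing

section SplitsThreeThree

/-- The six extreme points are `a, b, c` with positive and `p, q, r` with negative sign. -/
structure SplitsThreeThree {V : Type*} (σ : Option V → Bool) (a b c p q r : V) : Prop where
  pos_iff : ∀ v, σ (some v) = true ↔ v = a ∨ v = b ∨ v = c
  neg_iff : ∀ v, σ (some v) = false ↔ v = p ∨ v = q ∨ v = r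
  ne_pos : a ≠ b ∧ a ≠ c ∧ b ≠ c
  ne_neg : p ≠ q ∧ p ≠ r ∧ q ≠ r

namespace SplitsThreeThree

variable {V : Type*} {σ : Option V → Bool} {a b c p q r : V} (hS : SplitsThreeThree σ a b c p q r)
include hS

theorem swap_ab : SplitsThreeThree σ b a c p q r :=
  ⟨by grind [hS.pos_iff], hS.neg_iff, by grind [hS.ne_pos], hS.ne_neg⟩

theorem swap_bc : SplitsThreeThree σ a c b p q r :=
  ⟨by grind [hS.pos_iff], hS.neg_iff, by grind [hS.ne_pos], hS.ne_neg⟩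

theorem swap_pq : SplitsThreeThree σ a b c q p r :=
  ⟨hS.pos_iff, by grind [hS.neg_iff], hS.ne_pos, by grind [hS.ne_neg]⟩

theorem swap_qr : SplitsThreeThree σ a b c p r q :=
  ⟨hS.pos_iff, by grind [hS.neg_iff], hS.ne_pos, by grind [hS.ne_neg]⟩

theorem signs : σ (some a) = true ∧ σ (some b) = true ∧ σ (some c) = true ∧
    σ (some p) = false ∧ σ (some q) = false ∧ σ (some r) = false := by
  simp [hS.pos_iff, hS.neg_iff]

theorem cases (v : V) : (v = a ∨ v = b ∨ v = c) ∨ (v = p ∨ v = q ∨ v = r) := by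
  rw [← hS.pos_iff, ← hS.neg_iff]
  simp

end SplitsThreeThree

variable {V R : Type*} [LinearOrder R] [Fintype V] {σ : Option V → Bool} {γ : V → Option V → R}

/-- The set `N(a, z)`, where `z` is the inner point `none`, is `{a, p, q}`. This is used for `a` of
positive and `p`, `q` of negative sign, when `N(a, z)` contains labels of both signs. -/
def IsMixed (γ : V → Option V → R) (a p q : V) : Prop :=
  ∀ v, v ∈ above γ (some a) none ↔ v = a ∨ v = p ∨ v = q

theorem IsMixed.symm {a p q : V} (h : IsMixed γ a p q) : IsMixed γ a q p := fun v => by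
  rw [h v, or_comm (a := v = p)]

variable {f : V → V → V} {a b c p q r : V} (hf : IsCrossing σ γ f) (hz : σ none = false)

include hf hz in
theorem third_neg_of_above_none_eq_pos {i j x : V} (hi : σ (some i) = true)
    (hj : σ (some j) = true) (hx : σ (some x) = false) (hij : i ≠ j)
    (hZ : ∀ v, v ∈ above γ (some j) none ↔ σ (some v) = true) : σ (some (f i x)) = false := by
  have := hf.exactly_one hj hz hi hx (by simpa using hij.symm) (by simp)
  simp only [hZ] at this
  grind

variable (hS : SplitsThreeThree σ a b c p q r)
include hf hz hS

theorem third_eq_pos_of_isMixed (hZ : IsMixed γ a p q) : f b r = a ∧ f c r = a := by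
  obtain ⟨ha, hb, hc, hp, hq, hr⟩ := hS.signs
  obtain ⟨hab, hac, hbc⟩ := hS.ne_pos
  obtain ⟨hpq, hpr, hqr⟩ := hS.ne_neg
  have hmem : ∀ j x, σ (some j) = true → j ≠ a → x = p ∨ x = q →
      f j x = b ∨ f j x = c ∨ f j x = r := by
    intro j x hj hja hx
    have hσx : σ (some x) = false := by grind
    have hone := hf.exactly_one ha hz hj hσx (by simpa using hja.symm) (by simp)
    rw [hZ, hZ, hZ] at hone
    have := hS.cases (f j x)
    grind
  have hnotMem : ∀ j, σ (some j) = true → j ≠ a → f j r = a ∨ f j r = p ∨ f j r = q := by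
    intro j hj hja
    have hone := hf.exactly_one ha hz hj hr (by simpa using hja.symm) (by simp)
    rw [hZ, hZ, hZ] at hone
    grind
  have hbp := hmem b p hb hab.symm (by simp)
  have hbq := hmem b q hb hab.symm (by simp)
  have hcp := hmem c p hc hac.symm (by simp)
  have hcq := hmem c q hc hac.symm (by simp)
  have hbr := hnotMem b hb hab.symm
  have hcr := hnotMem c hc hac.symm
  have := hf.ne_left hb hp
  have := hf.ne_left hb hq
  have := hf.ne_left hc hp
  have := hf.ne_left hc hq
  have := hf.meets hb hc hp hr hbc hpr
  have := hf.meets hb hc hq hr hbc hqr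
  have := hf.meets hc hb hp hr hbc.symm hpr
  have := hf.meets hc hb hq hr hbc.symm hqr
  clear hmem hnotMem hS hf hZ
  grind

theorem third_eq_neg_of_isMixed (hZ : IsMixed γ a p q) : f a p = q := by
  obtain ⟨ha, hb, hc, hp, -, hr⟩ := hS.signs
  obtain ⟨hab, hac, -⟩ := hS.ne_pos
  obtain ⟨-, hpr, -⟩ := hS.ne_neg
  obtain ⟨hbr, hcr⟩ := third_eq_pos_of_isMixed hf hz hS hZ
  have := hf.meets hb ha hr hp hab.symm hpr.symm
  have := hf.meets hc ha hr hp hac.symm hpr.symm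
  have := hf.ne_left ha hp
  have := hf.ne_right ha hp
  have := hS.cases (f a p)
  clear hS hf hZ
  grind

theorem false_of_isMixed_of_isMixed (hZ : IsMixed γ a p q)
    (hZb : IsMixed γ b p r ∨ IsMixed γ b q r) : False := by
  have hsigns := hS.signs
  have hap := third_eq_neg_of_isMixed hf hz hS hZ
  have haq := third_eq_neg_of_isMixed hf hz hS.swap_pq hZ.symm
  rcases hZb with hZb | hZb
  · have haq' := (third_eq_pos_of_isMixed hf hz hS.swap_ab.swap_qr hZb).1
    grind
  · have hap' := (third_eq_pos_of_isMixed hf hz hS.swap_ab.swap_pq.swap_qr hZb).1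
    grind

theorem above_none_cases :
    (∀ v, v ∈ above γ (some a) none ↔ σ (some v) = true) ∨
    (∀ v, v ∈ above γ (some a) none ↔ σ (some v) = false) ∨
    IsMixed γ a p q ∨ IsMixed γ a p r ∨ IsMixed γ a q r := by
  classical
  obtain ⟨ha, hb, hc, hp, hq, hr⟩ := hS.signs
  obtain ⟨hab, hac, -⟩ := hS.ne_pos
  obtain ⟨hpq, hpr, hqr⟩ := hS.ne_neg
  simp only [hS.pos_iff, hS.neg_iff, IsMixed]
  have hcard := hf.card_above ha hz
  by_cases hmem : b ∈ above γ (some a) none ∨ c ∈ above γ (some a) none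
  · left
    have hsub : above γ (some a) none ⊆ {a, b, c} := fun v hv => by
      have := fun j hj hja hσv => hf.exactly_one (b := j) (y := v) ha hz hj hσv
        (by simpa using hja) (by simp)
      have := hS.neg_iff v
      have := hS.cases v
      grind
    simp [Finset.eq_of_subset_of_card_le hsub (hcard ▸ Finset.card_le_three)]
  · right
    have hsub : above γ (some a) none ⊆ {a, p, q, r} := fun v hv => by
      have := hS.cases v
      grind
    have hne : a ≠ p ∧ a ≠ q ∧ a ≠ r := by grind
    obtain ⟨e, he, heq⟩ := Finset.exists_eq_insert_iff.2 ⟨hsub, by simp [*]⟩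
    have hmem := Finset.ext_iff.1 heq
    simp only [Finset.mem_insert, Finset.mem_singleton] at hmem
    rcases (hmem e).1 (.inl rfl) with rfl | rfl | rfl | rfl
    · exact .inl fun v => by grind
    · exact .inr (.inr (.inr fun v => by grind))
    · exact .inr (.inr (.inl fun v => by grind))
    · exact .inr (.inl fun v => by grind)

theorem false_of_isMixed (hZ : IsMixed γ a p q) : False := by
  obtain ⟨ha, hb, hc, hp, hq, hr⟩ := hS.signs
  obtain ⟨hab, -, hbc⟩ := hS.ne_pos
  have hone := hf.exactly_one hb hz ha hp (by simpa using hab.symm) (by simp)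
  have hone' := hf.exactly_one hb hz hc hr (by simpa) (by simp)
  rw [third_eq_neg_of_isMixed hf hz hS hZ] at hone
  rw [(third_eq_pos_of_isMixed hf hz hS hZ).2] at hone'
  refine false_of_isMixed_of_isMixed hf hz hS hZ ?_
  rcases above_none_cases hf hz hS.swap_ab with h | h | h | h | h
  · simp only [h _] at hone hone'
    grind
  · simp only [h _] at hone hone'
    grind
  · simp only [h _] at hone hone'
    grind
  · exact .inl h
  · exact .inr h

theorem above_none_eq_pos_or_eq_neg :
    (∀ v, v ∈ above γ (some a) none ↔ σ (some v) = true) ∨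
    ∀ v, v ∈ above γ (some a) none ↔ σ (some v) = false := by
  rcases above_none_cases hf hz hS with h | h | h | h | h
  · exact .inl h
  · exact .inr h
  · exact (false_of_isMixed hf hz hS h).elim
  · exact (false_of_isMixed hf hz hS.swap_qr h).elim
  · exact (false_of_isMixed hf hz hS.swap_pq.swap_qr h).elim

theorem false_of_above_none_eq_pos_of_eq_neg
    (hZa : ∀ v, v ∈ above γ (some a) none ↔ σ (some v) = true)
    (hZb : ∀ v, v ∈ above γ (some b) none ↔ σ (some v) = false) : False := by
  obtain ⟨ha, hb, hc, hp, -, -⟩ := hS.signs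
  have hcp := third_neg_of_above_none_eq_pos hf hz hc ha hp hS.ne_pos.2.1.symm hZa
  have hone := hf.exactly_one hb hz hc hp (by simpa using hS.ne_pos.2.2) (by simp)
  simp only [hZb] at hone
  grind

theorem forall_above_none_eq_pos_or_forall_eq_neg :
    (∀ i, σ (some i) = true → ∀ v, v ∈ above γ (some i) none ↔ σ (some v) = true) ∨
    ∀ i, σ (some i) = true → ∀ v, v ∈ above γ (some i) none ↔ σ (some v) = false := by
  have hS' := hS.swap_bc.swap_ab
  have hB := above_none_eq_pos_or_eq_neg hf hz hS.swap_ab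
  have hC := above_none_eq_pos_or_eq_neg hf hz hS'
  simp only [hS.pos_iff _, forall_eq_or_imp, forall_eq]
  simp only [← hS.pos_iff]
  rcases above_none_eq_pos_or_eq_neg hf hz hS with hA | hA
  · exact .inl ⟨hA, hB.resolve_right (false_of_above_none_eq_pos_of_eq_neg hf hz hS hA),
      hC.resolve_right (false_of_above_none_eq_pos_of_eq_neg hf hz hS.swap_bc hA)⟩
  · exact .inr ⟨hA,
      hB.resolve_left fun h => false_of_above_none_eq_pos_of_eq_neg hf hz hS.swap_ab h hA,
      hC.resolve_left fun h => false_of_above_none_eq_pos_of_eq_neg hf hz hS' h hA⟩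

theorem third_eq_of_forall_above_none_eq_pos
    (hZ : ∀ i, σ (some i) = true → ∀ v, v ∈ above γ (some i) none ↔ σ (some v) = true)
    (hap : f a p = q) : f a q = r ∧ f a r = p := by
  obtain ⟨ha, hb, -, hp, hq, hr⟩ := hS.signs
  have hab := hS.ne_pos.1
  obtain ⟨hpq, hpr, hqr⟩ := hS.ne_neg
  have hthird : ∀ i j x, σ (some i) = true → σ (some j) = true → σ (some x) = false → i ≠ j →
      f i x = p ∨ f i x = q ∨ f i x = r := fun i j x hi hj hx hij =>
    (hS.neg_iff _).1 (third_neg_of_above_none_eq_pos hf hz hi hj hx hij (hZ j hj))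
  have := hthird a b q ha hb hq hab
  have := hthird a b r ha hb hr hab
  have := hthird b a p hb ha hp hab.symm
  have := hthird b a q hb ha hq hab.symm
  have := hthird b a r hb ha hr hab.symm
  have := hf.ne_right ha hq
  have := hf.ne_right ha hr
  have := hf.ne_right hb hp
  have := hf.ne_right hb hq
  have := hf.ne_right hb hr
  have := hf.meets ha hb hp hq hab hpq
  have := hf.meets ha hb hp hr hab hpr
  have := hf.meets ha hb hq hr hab hqr
  have := hf.meets ha hb hq hp hab hpq.symm
  have := hf.meets ha hb hr hp hab hpr.symm
  have := hf.meets ha hb hr hq hab hqr.symm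
  clear hZ hS hf hthird
  grind

section Contradiction

variable (hγ : ∀ v, Function.Injective (γ v)) (hV : Fintype.card V = 6) (h : ¬HasDeletion 4 σ γ)
include hγ hV h

theorem false_of_forall_above_none_eq_neg
    (hZ : ∀ i, σ (some i) = true → ∀ v, v ∈ above γ (some i) none ↔ σ (some v) = false) :
    False := by
  classical
  obtain ⟨-, -, -, hp, hq, -⟩ := hS.signs
  obtain ⟨hab, hac, hbc⟩ := hS.ne_pos
  have hsub : {a, b, c} ⊆ above γ none (some p) ∩ above γ none (some q) := by
    intro i hi
    have hi : σ (some i) = true := (hS.pos_iff i).2 (by simpa using hi)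
    have hle : γ i (some i) ≤ γ i none :=
      not_lt.1 (mt mem_above.2 (mt (hZ i hi i).1 (by simp [hi])))
    have hlt : ∀ x, σ (some x) = false → γ i (some x) < γ i (some i) := fun x hx =>
      mem_above.1 ((hf.mem_above_iff hi hx i).2 (.inl rfl))
    exact Finset.mem_inter.2
      ⟨mem_above.2 ((hlt p hp).trans_le hle), mem_above.2 ((hlt q hq).trans_le hle)⟩
  have hcard := card_inter_above_of_neg hγ hV h (x := some p) (y := some q) (z := none)
    (by simpa using hS.ne_neg.1) (by simp) (by simp) hp hq hz
  have hthree : ({a, b, c} : Finset V).card = 3 :=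
    Finset.card_eq_three.2 ⟨a, b, c, hab, hac, hbc, rfl⟩
  have := Finset.card_le_card hsub
  lia

theorem false_of_forall_above_none_eq_pos
    (hZ : ∀ i, σ (some i) = true → ∀ v, v ∈ above γ (some i) none ↔ σ (some v) = true)
    (hap : f a p = q) : False := by
  classical
  obtain ⟨ha, hb, hc, hp, hq, hr⟩ := hS.signs
  obtain ⟨-, -, hbc⟩ := hS.ne_pos
  obtain ⟨hpq, hpr, hqr⟩ := hS.ne_neg
  obtain ⟨haq, har⟩ := third_eq_of_forall_above_none_eq_pos hf hz hS hZ hap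
  have habove : ∀ v x, σ (some v) = false → σ (some x) = false → v = x ∨ v = f a x →
      v ∈ above γ none (some x) := fun v x hv hx hvx =>
    mem_above.2 ((mem_above.1 ((hf.mem_above_iff ha hx v).2 (.inr hvx))).trans_le
      (not_lt.1 (mt mem_above.2 (mt (hZ a ha v).1 (by simp [hv])))))
  have hbelow : ∀ v x, σ (some v) = true → σ (some x) = false → v ∈ above γ (some x) none := by
    intro v x hv hx
    obtain ⟨i, hi, hiv⟩ : ∃ i, σ (some i) = true ∧ i ≠ v := by grind
    have hneg := third_neg_of_above_none_eq_pos hf hz hi hv hx hiv (hZ v hv)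
    have hle : v ∉ above γ (some i) (some x) := by
      rw [hf.mem_above_iff hi hx]
      grind
    exact mem_above.2 ((mem_above.1 ((hZ i hi v).2 hv)).trans_le (not_lt.1 (mt mem_above.2 hle)))
  refine false_of_cyclic hγ hV h hpq hpr hqr (by simp) (by simp) (by simp) hp hq hr hz
    (fun v hvp hvq hvr => ?_)
    (Finset.mem_inter.2 ⟨habove p p hp hp (.inl rfl), habove p r hp hr (.inr har.symm)⟩)
    (Finset.mem_inter.2 ⟨habove q p hq hp (.inr hap.symm), habove q q hq hq (.inl rfl)⟩)
    (Finset.mem_inter.2 ⟨habove r q hr hq (.inr haq.symm), habove r r hr hr (.inl rfl)⟩)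
  have hv : σ (some v) = true := (hS.pos_iff v).2 ((hS.cases v).resolve_right (by tauto))
  exact ⟨hbelow v p hv hp, hbelow v q hv hq⟩

theorem false_of_splitsThreeThree : False := by
  obtain ⟨ha, hb, -, hp, -, -⟩ := hS.signs
  rcases forall_above_none_eq_pos_or_forall_eq_neg hf hz hS with hZ | hZ
  · have hap := third_neg_of_above_none_eq_pos hf hz ha hb hp hS.ne_pos.1 (hZ b hb)
    rcases (hS.neg_iff _).1 hap with hap | hap | hap
    · exact hf.ne_right ha hp hap
    · exact false_of_forall_above_none_eq_pos hf hz hS hγ hV h hZ hap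
    · exact false_of_forall_above_none_eq_pos hf hz hS.swap_qr hγ hV h hZ hap
  · exact false_of_forall_above_none_eq_neg hf hz hS hγ hV h hZ

end Contradiction

end SplitsThreeThree

section SplitsTwoFour

/-- The six extreme points are `a, b` with positive and `p, q, r, s` with negative sign. -/
structure SplitsTwoFour {V : Type*} (σ : Option V → Bool) (a b p q r s : V) : Prop where
  pos_iff : ∀ v, σ (some v) = true ↔ v = a ∨ v = b
  neg_iff : ∀ v, σ (some v) = false ↔ v = p ∨ v = q ∨ v = r ∨ v = s
  ne_pos : a ≠ b
  ne_neg : p ≠ q ∧ p ≠ r ∧ p ≠ s ∧ q ≠ r ∧ q ≠ s ∧ r ≠ s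

namespace SplitsTwoFour

variable {V : Type*} {σ : Option V → Bool} {a b p q r s : V} (hS : SplitsTwoFour σ a b p q r s)
include hS

theorem swap_pq : SplitsTwoFour σ a b q p r s :=
  ⟨hS.pos_iff, by grind [hS.neg_iff], hS.ne_pos, by grind [hS.ne_neg]⟩

theorem swap_qr : SplitsTwoFour σ a b p r q s :=
  ⟨hS.pos_iff, by grind [hS.neg_iff], hS.ne_pos, by grind [hS.ne_neg]⟩

theorem swap_rs : SplitsTwoFour σ a b p q s r :=
  ⟨hS.pos_iff, by grind [hS.neg_iff], hS.ne_pos, by grind [hS.ne_neg]⟩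

theorem signs : σ (some a) = true ∧ σ (some b) = true ∧ σ (some p) = false ∧
    σ (some q) = false ∧ σ (some r) = false ∧ σ (some s) = false := by
  simp [hS.pos_iff, hS.neg_iff]

end SplitsTwoFour

variable {V R : Type*} [LinearOrder R] [Fintype V] {σ : Option V → Bool} {γ : V → Option V → R}

/-- The set `N(z, x)`, where `z` is the inner point `none`, consists of `x` and of the labels of
positive sign. -/
def IsFull (σ : Option V → Bool) (γ : V → Option V → R) (x : V) : Prop :=
  ∀ v, v ∈ above γ none (some x) ↔ σ (some v) = true ∨ v = x

/-- The set `N(z, x)`, where `z` is the inner point `none`, consists of the labels of negative sign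
other than the label `t`, which has negative sign, too. -/
structure Omits (σ : Option V → Bool) (γ : V → Option V → R) (x t : V) : Prop where
  neg : σ (some t) = false
  mem_iff : ∀ v, v ∈ above γ none (some x) ↔ σ (some v) = false ∧ v ≠ t

variable {f : V → V → V} {a b p q r s : V} (hf : IsCrossing σ γ f) (hz : σ none = true)

include hf hz in
theorem IsFull.third_neg_and_ne (hfull : IsFull σ γ p) (hp : σ (some p) = false) {i w : V}
    (hi : σ (some i) = true) (hw : σ (some w) = false) (hwp : w ≠ p) :
    σ (some (f i w)) = false ∧ f i w ≠ p := by
  have hone := hf.exactly_one hz hp hi hw (by simp) (by simpa using hwp.symm)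
  simp only [hfull _] at hone
  grind

variable (hS : SplitsTwoFour σ a b p q r s)

include hf hS in
theorem third_ne_of_third_eq {w x : V} (hw : σ (some w) = false) (hx : σ (some x) = false)
    (hwx : w ≠ x) (h : f a w = b) : f b x ≠ a :=
  ((hf.meets hS.signs.1 hS.signs.2.1 hw hx hS.ne_pos hwx).2 (.inl h)).1

include hf hz hS

theorem isFull_of_pos_mem {i x : V} (hi : σ (some i) = true) (hx : σ (some x) = false)
    (hix : i ∈ above γ none (some x)) : IsFull σ γ x := by
  classical
  have hsub : above γ none (some x) ⊆ {a, b, x} := fun v hv => by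
    by_contra hne
    simp only [Finset.mem_insert, Finset.mem_singleton, ← or_assoc, ← hS.pos_iff, not_or] at hne
    have := hf.exactly_one hz hx hi (by simpa using hne.1) (by simp) (by simpa using Ne.symm hne.2)
    tauto
  intro v
  rw [Finset.eq_of_subset_of_card_le hsub (hf.card_above hz hx ▸ Finset.card_le_three), hS.pos_iff]
  simp [or_assoc]

theorem isFull_or_exists_omits {x : V} (hx : σ (some x) = false) :
    IsFull σ γ x ∨ ∃ t, Omits σ γ x t := by
  classical
  by_cases hpos : ∃ i, σ (some i) = true ∧ i ∈ above γ none (some x)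
  · obtain ⟨i, hi, hix⟩ := hpos
    exact .inl (isFull_of_pos_mem hf hz hS hi hx hix)
  have hmem : ∀ v, v ∈ ({p, q, r, s} : Finset V) ↔ σ (some v) = false := by simp [hS.neg_iff]
  have hsub : above γ none (some x) ⊆ {p, q, r, s} := fun v hv =>
    (hmem v).2 (by simpa using fun hσ => hpos ⟨v, hσ, hv⟩)
  obtain ⟨t, ht, heq⟩ := Finset.exists_eq_insert_iff.2
    ⟨hsub, by obtain ⟨_, _, _, _, _, _⟩ := hS.ne_neg; simp [hf.card_above hz hx, *]⟩
  refine .inr ⟨t, (hmem t).1 (heq ▸ Finset.mem_insert_self ..), fun v => ?_⟩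
  rw [← hmem, ← heq, Finset.mem_insert]
  grind

theorem not_omits_self {x : V} (hx : σ (some x) = false) : ¬Omits σ γ x x := by
  rintro ⟨-, hZ⟩
  obtain ⟨ha, hb, -⟩ := hS.signs
  have hab := hS.ne_pos
  have hne : ∀ w, σ (some w) = false → w ≠ x → f a x ≠ b ∧ f a x ≠ w := by
    intro w hw hwx
    have hone := hf.exactly_one hz hx hb hw (by simp) (by simpa using hwx.symm)
    have hmeet := hf.meets ha hb hx hw hab hwx.symm
    simp only [hZ] at hone
    have := hS.pos_iff (f b w)
    have := hf.ne_left hb hw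
    clear hZ hf hS
    grind
  obtain ⟨w, hw, hwx⟩ : ∃ w, σ (some w) = false ∧ w ≠ x := by
    have := hS.signs
    have := hS.ne_neg
    grind
  cases hax : σ (some (f a x))
  · exact (hne (f a x) hax (hf.ne_right ha hx)).2 rfl
  · exact ((hS.pos_iff _).1 hax).elim (hf.ne_left ha hx) (hne w hw hwx).1

theorem Omits.ne {x t : V} (ht : Omits σ γ x t) (hx : σ (some x) = false) : t ≠ x := by
  rintro rfl
  exact not_omits_self hf hz hS hx ht

theorem Omits.third_eq {x t : V} (ht : Omits σ γ x t) (hx : σ (some x) = false) {w : V}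
    (hw : σ (some w) = false) (hwx : w ≠ x) (hwt : w ≠ t) :
    (f a w = b ∨ f a w = t) ∧ (f b w = a ∨ f b w = t) := by
  obtain ⟨ha, hb, -⟩ := hS.signs
  have hone := hf.exactly_one hz hx ha hw (by simp) (by simpa using hwx.symm)
  have hone' := hf.exactly_one hz hx hb hw (by simp) (by simpa using hwx.symm)
  simp only [ht.mem_iff] at hone hone'
  have := hS.pos_iff (f a w)
  have := hS.pos_iff (f b w)
  have := hf.ne_left ha hw
  have := hf.ne_left hb hw
  clear hf hS
  grind

theorem third_eq_of_omits_of_omits {w x y t u : V} (hw : σ (some w) = false)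
    (hx : σ (some x) = false) (hy : σ (some y) = false) (hxt : Omits σ γ x t)
    (hyu : Omits σ γ y u) (hwx : w ≠ x) (hwy : w ≠ y) (htu : t ≠ u) (hwt : w ≠ t) (hwu : w ≠ u) :
    f a w = b ∧ f b w = a := by
  have := hxt.third_eq hf hz hS hx hw hwx hwt
  have := hyu.third_eq hf hz hS hy hw hwy hwu
  grind

-- At least two of the labels `w` admit distinct labels `x, y ≠ w` such that `t x` and `t y` are
-- distinct and different from `w`. Then `f a w = b` and `f b w = a`, which cannot hold for two
-- labels `w`.
theorem false_of_forall_omits {t : V → V} (ht : ∀ x, σ (some x) = false → Omits σ γ x (t x)) :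
    False := by
  have hne := hS.ne_neg
  obtain ⟨-, -, hp, hq, hr, hs⟩ := hS.signs
  have hthird : ∀ w x y, σ (some w) = false → σ (some x) = false → σ (some y) = false →
      w ≠ x → w ≠ y → t x ≠ t y → w ≠ t x → w ≠ t y → f a w = b ∧ f b w = a :=
    fun w x y hw hx hy => third_eq_of_omits_of_omits hf hz hS hw hx hy (ht x hx) (ht y hy)
  have hmem : ∀ x, σ (some x) = false → (t x = p ∨ t x = q ∨ t x = r ∨ t x = s) ∧ t x ≠ x :=
    fun x hx => ⟨(hS.neg_iff _).1 (ht x hx).neg, (ht x hx).ne hf hz hS hx⟩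
  have := hmem p hp
  have := hmem q hq
  have := hmem r hr
  have := hmem s hs
  have := hthird p q r hp hq hr
  have := hthird p q s hp hq hs
  have := hthird p r s hp hr hs
  have := hthird q p r hq hp hr
  have := hthird q p s hq hp hs
  have := hthird q r s hq hr hs
  have := hthird r p q hr hp hq
  have := hthird r p s hr hp hs
  have := hthird r q s hr hq hs
  have := hthird s p q hs hp hq
  have := hthird s p r hs hp hr
  have := hthird s q r hs hq hr
  have := third_ne_of_third_eq hf hS hp hq
  have := third_ne_of_third_eq hf hS hp hr
  have := third_ne_of_third_eq hf hS hp hs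
  have := third_ne_of_third_eq hf hS hq hr
  have := third_ne_of_third_eq hf hS hq hs
  have := third_ne_of_third_eq hf hS hr hs
  clear hf hz hS ht hmem hthird
  grind

theorem false_of_isFull_of_isFull (hp : IsFull σ γ p) (hq : IsFull σ γ q) : False := by
  obtain ⟨-, hpr, hps, hqr, hqs, hrs⟩ := hS.ne_neg
  obtain ⟨ha, hb, hσp, hσq, hσr, hσs⟩ := hS.signs
  have hthird : ∀ i w, σ (some i) = true → σ (some w) = false → w ≠ p → w ≠ q →
      f i w = r ∨ f i w = s := by
    intro i w hi hw hwp hwq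
    obtain ⟨hneg, hfp⟩ := hp.third_neg_and_ne hf hz hσp hi hw hwp
    have hfq := (hq.third_neg_and_ne hf hz hσq hi hw hwq).2
    have := (hS.neg_iff _).1 hneg
    tauto
  have har : f a r = s := (hthird a r ha hσr hpr.symm hqr.symm).resolve_left (hf.ne_right ha hσr)
  have hbs : f b s = r := (hthird b s hb hσs hps.symm hqs.symm).resolve_right (hf.ne_right hb hσs)
  exact ((hf.meets ha hb hσr hσs hS.ne_pos hrs).2 (.inr har)).2 hbs

theorem cycle_of_isFull (hfull : IsFull σ γ p) {t : V → V}
    (ht : ∀ x, σ (some x) = false → x ≠ p → Omits σ γ x (t x)) :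
    (t q = r ∧ t r = s ∧ t s = q) ∨ (t q = s ∧ t s = r ∧ t r = q) := by
  have hne := hS.ne_neg
  obtain ⟨ha, -, hp, hq, hr, hs⟩ := hS.signs
  have hnot : ∀ w, σ (some w) = false → w ≠ p → f a w ≠ b ∧ f a w ≠ p := fun w hw hwp =>
    have hthird := hfull.third_neg_and_ne hf hz hp ha hw hwp
    ⟨fun hfb => by simp [hfb, hS.signs.2.1] at hthird, hthird.2⟩
  have heq : ∀ w x, σ (some w) = false → σ (some x) = false → w ≠ p → x ≠ p → w ≠ x →
      w ≠ t x → f a w = t x := fun w x hw hx hwp hxp hwx hwt =>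
    ((ht x hx hxp).third_eq hf hz hS hx hw hwx hwt).1.resolve_left (hnot w hw hwp).1
  have hmem : ∀ x, σ (some x) = false → x ≠ p →
      (t x = p ∨ t x = q ∨ t x = r ∨ t x = s) ∧ t x ≠ x := fun x hx hxp =>
    ⟨(hS.neg_iff _).1 (ht x hx hxp).neg, (ht x hx hxp).ne hf hz hS hx⟩
  have := hmem q hq
  have := hmem r hr
  have := hmem s hs
  have := heq q r hq hr
  have := heq q s hq hs
  have := heq r q hr hq
  have := heq r s hr hs
  have := heq s q hs hq
  have := heq s r hs hr
  have := hnot q hq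
  have := hnot r hr
  have := hnot s hs
  clear hf hz hS ht hnot heq hmem hfull
  grind

section Contradiction

variable (hγ : ∀ v, Function.Injective (γ v)) (hV : Fintype.card V = 6) (h : ¬HasDeletion 4 σ γ)
include hγ hV h

theorem false_of_isFull_of_cycle {t : V → V} (hfull : IsFull σ γ p)
    (ht : ∀ x, σ (some x) = false → x ≠ p → Omits σ γ x (t x))
    (hcycle : t q = r ∧ t r = s ∧ t s = q) : False := by
  classical
  obtain ⟨hpq, hpr, hps, hqr, hqs, hrs⟩ := hS.ne_neg
  obtain ⟨ha, -, hp, hq, hr, hs⟩ := hS.signs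
  obtain ⟨htq, htr, hts⟩ := hcycle
  have hbelow : ∀ v, σ (some v) = true ∨ v = p → ∀ x, σ (some x) = false → x ≠ p →
      v ∈ above γ (some x) (some p) := by
    intro v hv x hx hxp
    have hfx := (hfull.third_neg_and_ne hf hz hp ha hx hxp).2
    rcases hv with hv | rfl
    · have hlt := mem_above.1 ((hfull v).2 (.inl hv))
      have hle := mt ((ht x hx hxp).mem_iff v).1 (by simp [hv])
      exact mem_above.2 (hlt.trans_le (not_lt.1 (mt mem_above.2 hle)))
    · have hlt := mem_above.1 ((hf.mem_above_iff ha hp v).2 (by simp))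
      have hle := mt (hf.mem_above_iff ha hx v).1 (by grind)
      exact mem_above.2 (hlt.trans_le (not_lt.1 (mt mem_above.2 hle)))
  have habove : ∀ v, σ (some v) = false → v ≠ p → ∀ x, σ (some x) = false → x ≠ p → v ≠ t x →
      v ∈ above γ (some p) (some x) := by
    intro v hv hvp x hx hxp hvt
    have hle := mt (hfull v).1 (by simp [hv, hvp])
    have hlt := mem_above.1 (((ht x hx hxp).mem_iff v).2 ⟨hv, hvt⟩)
    exact mem_above.2 (hlt.trans_le (not_lt.1 (mt mem_above.2 hle)))
  refine false_of_cyclic hγ hV h (p := q) (q := s) (r := r) (z := some p) hqs hqr hrs.symm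
    (by simpa) (by simpa) (by simpa) hq hs hr hp (fun v hvq hvs hvr => ?_)
    (Finset.mem_inter.2 ⟨habove q hq hpq.symm q hq hpq.symm (htq ▸ hqr),
      habove q hq hpq.symm r hr hpr.symm (htr ▸ hqs)⟩)
    (Finset.mem_inter.2 ⟨habove s hs hps.symm q hq hpq.symm (htq ▸ hrs.symm),
      habove s hs hps.symm s hs hps.symm (hts ▸ hqs.symm)⟩)
    (Finset.mem_inter.2 ⟨habove r hr hpr.symm s hs hps.symm (hts ▸ hqr.symm),
      habove r hr hpr.symm r hr hpr.symm (htr ▸ hrs)⟩)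
  have hv : σ (some v) = true ∨ v = p := by
    have := hS.neg_iff v
    grind
  exact ⟨hbelow v hv q hq hpq.symm, hbelow v hv s hs hps.symm⟩

theorem false_of_isFull (hfull : IsFull σ γ p) : False := by
  have hne : ∀ x, σ (some x) = false → x ≠ p → ¬IsFull σ γ x := by
    intro x hx hxp hx'
    rcases (hS.neg_iff x).1 hx with rfl | rfl | rfl | rfl
    · exact hxp rfl
    · exact false_of_isFull_of_isFull hf hz hS hfull hx'
    · exact false_of_isFull_of_isFull hf hz hS.swap_qr hfull hx'
    · exact false_of_isFull_of_isFull hf hz hS.swap_rs.swap_qr hfull hx'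
  have homits : ∀ x, ∃ t, σ (some x) = false → x ≠ p → Omits σ γ x t := by
    intro x
    by_cases hx : σ (some x) = false ∧ x ≠ p
    · obtain ⟨t, ht⟩ := (isFull_or_exists_omits hf hz hS hx.1).resolve_left (hne x hx.1 hx.2)
      exact ⟨t, fun _ _ => ht⟩
    · exact ⟨x, fun hσ hxp => (hx ⟨hσ, hxp⟩).elim⟩
  choose t ht using homits
  rcases cycle_of_isFull hf hz hS hfull ht with hcycle | hcycle
  · exact false_of_isFull_of_cycle hf hz hS hγ hV h hfull ht hcycle
  · exact false_of_isFull_of_cycle hf hz hS.swap_rs hγ hV h hfull ht hcycle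

theorem false_of_splitsTwoFour : False := by
  by_cases hfull : ∃ x, σ (some x) = false ∧ IsFull σ γ x
  · obtain ⟨x, hx, hfull⟩ := hfull
    rcases (hS.neg_iff x).1 hx with rfl | rfl | rfl | rfl
    · exact false_of_isFull hf hz hS hγ hV h hfull
    · exact false_of_isFull hf hz hS.swap_pq hγ hV h hfull
    · exact false_of_isFull hf hz hS.swap_qr.swap_pq hγ hV h hfull
    · exact false_of_isFull hf hz hS.swap_rs.swap_qr.swap_pq hγ hV h hfull
  · have homits : ∀ x, ∃ t, σ (some x) = false → Omits σ γ x t := fun x => by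
      cases hx : σ (some x)
      · obtain ⟨t, ht⟩ := (isFull_or_exists_omits hf hz hS hx).resolve_left fun hx' =>
          hfull ⟨x, hx, hx'⟩
        exact ⟨t, fun _ => ht⟩
      · exact ⟨x, by simp⟩
    choose t ht using homits
    exact false_of_forall_omits hf hz hS ht

end Contradiction

end SplitsTwoFour

section Main

variable {V R : Type*} [LinearOrder R] [Fintype V] {σ : Option V → Bool} {γ : V → Option V → R}

theorem exists_mem_ne_ne_of_two_lt_card {ι : Type*} {s : Finset ι} (hs : 2 < s.card) (i j : ι) :
    ∃ k ∈ s, k ≠ i ∧ k ≠ j := by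
  classical
  obtain ⟨k, hk, hk'⟩ := Finset.exists_mem_notMem_of_card_lt_card
    (Finset.card_le_two.trans_lt hs : ({i, j} : Finset ι).card < s.card)
  exact ⟨k, hk, by simpa using hk'⟩

theorem card_filter_option {ι : Type*} [Fintype ι] (P : Option ι → Prop) [DecidablePred P] :
    (Finset.univ.filter P).card =
      (if P none then 1 else 0) + (Finset.univ.filter fun v => P (some v)).card := by
  rw [Finset.card_filter, Fintype.sum_option, Finset.card_filter]

theorem card_filter_true_add_card_filter_false {ι : Type*} [Fintype ι] (σ : ι → Bool) :
    (Finset.univ.filter fun i => σ i = true).card +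
      (Finset.univ.filter fun i => σ i = false).card = Fintype.card ι := by
  simpa using Finset.card_filter_add_card_filter_not (s := Finset.univ) fun i => σ i = true

theorem exists_splitsThreeThree (hpos : (Finset.univ.filter fun v => σ (some v) = true).card = 3)
    (hneg : (Finset.univ.filter fun v => σ (some v) = false).card = 3) :
    ∃ a b c p q r, SplitsThreeThree σ a b c p q r := by
  classical
  obtain ⟨a, b, c, hab, hac, hbc, hP⟩ := Finset.card_eq_three.1 hpos
  obtain ⟨p, q, r, hpq, hpr, hqr, hQ⟩ := Finset.card_eq_three.1 hneg
  refine ⟨a, b, c, p, q, r, fun v => ?_, fun v => ?_, ⟨hab, hac, hbc⟩, hpq, hpr, hqr⟩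
  · simpa using Finset.ext_iff.1 hP v
  · simpa using Finset.ext_iff.1 hQ v

theorem exists_splitsTwoFour (hpos : (Finset.univ.filter fun v => σ (some v) = true).card = 2)
    (hneg : (Finset.univ.filter fun v => σ (some v) = false).card = 4) :
    ∃ a b p q r s, SplitsTwoFour σ a b p q r s := by
  classical
  obtain ⟨a, b, hab, hP⟩ := Finset.card_eq_two.1 hpos
  obtain ⟨p, t, hpt, hQ, ht⟩ := Finset.card_eq_succ.1 hneg
  obtain ⟨q, r, s, hqr, hqs, hrs, rfl⟩ := Finset.card_eq_three.1 ht
  simp only [Finset.mem_insert, Finset.mem_singleton, not_or] at hpt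
  refine ⟨a, b, p, q, r, s, fun v => ?_, fun v => ?_, hab, hpt.1, hpt.2.1, hpt.2.2, hqr, hqs, hrs⟩
  · simpa using Finset.ext_iff.1 hP v
  · simpa using Finset.ext_iff.1 hQ.symm v

variable (hγ : ∀ v, Function.Injective (γ v)) (hV : Fintype.card V = 6)
include hγ hV

theorem false_of_three_pos_of_four_neg (h : ¬HasDeletion 4 σ γ)
    (hpos : (Finset.univ.filter fun i => σ i = true).card = 3)
    (hneg : (Finset.univ.filter fun i => σ i = false).card = 4) : False := by
  have hpos' : 2 < (Finset.univ.filter fun i => σ i = true).card := by lia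
  have hneg' : 2 < (Finset.univ.filter fun i => σ i = false).card := by lia
  obtain ⟨f, hf⟩ := exists_isCrossing hγ hV h
    (fun i j => by simpa using exists_mem_ne_ne_of_two_lt_card hpos' i j)
    (fun i j => by simpa using exists_mem_ne_ne_of_two_lt_card hneg' i j)
  rw [card_filter_option] at hpos hneg
  cases hz : σ none <;> simp only [hz, reduceIte, reduceCtorEq] at hpos hneg
  · obtain ⟨a, b, c, p, q, r, hS⟩ := exists_splitsThreeThree (σ := σ) (by lia) (by lia)
    exact false_of_splitsThreeThree hf hz hS hγ hV h
  · obtain ⟨a, b, p, q, r, s, hS⟩ := exists_splitsTwoFour (σ := σ) (by lia) (by lia)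
    exact false_of_splitsTwoFour hf hz hS hγ hV h

theorem hasDeletion_of_four_le_card_neg
    (hneg : 4 ≤ (Finset.univ.filter fun i => σ i = false).card) : HasDeletion 4 σ γ := by
  by_contra h
  rcases hneg.lt_or_eq with hlt | heq
  · obtain ⟨L, hL, hcard⟩ := Finset.exists_subset_card_eq hlt
    exact false_of_five_neg hγ hV h (fun i hi => by simpa using hL hi) hcard
  · refine false_of_three_pos_of_four_neg hγ hV h ?_ heq.symm
    have := card_filter_true_add_card_filter_false σ
    rw [Fintype.card_option] at this
    lia

theorem hasDeletion_of_card_eq_six : HasDeletion 4 σ γ := by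
  by_cases hneg : 4 ≤ (Finset.univ.filter fun i => σ i = false).card
  · exact hasDeletion_of_four_le_card_neg hγ hV hneg
  · refine HasDeletion.of_toDual (hasDeletion_of_four_le_card_neg
      (fun v => OrderDual.toDual.injective.comp (hγ v)) hV ?_)
    have := card_filter_true_add_card_filter_false σ
    rw [Fintype.card_option] at this
    simp only [Bool.not_eq_false']
    lia

end Main

end Holes

theorem InGeneralPosition.exists_isHole_of_card_innerPoints_eq_seven
    {S : Finset (Fin 5 → ℝ)} (h : InGeneralPosition 5 S)
    (hv : (Holes.vertices S).card = 6) (hi : (Holes.innerPoints S).card = 7)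
    (hexp : ∀ e ∈ Holes.vertices S, 6 ≤ (Holes.innerPoints (S \ {e})).card) :
    ∃ X, IsHole 5 9 S X := by
  have hsplit := Holes.card_vertices_add_card_innerPoints S
  have hV : Fintype.card (Holes.vertices S) = 6 := by rw [Fintype.card_coe, hv]
  obtain ⟨p, hp⟩ := h.exists_isLabelling hv hi hexp
  have hpS : ∀ o, p o ∈ S := fun o => Holes.innerPoints_subset S (hp.mem_innerPoints o)
  have hcard : Fintype.card (Option (Holes.vertices S)) = 5 + 2 := by rw [Fintype.card_option, hV]
  obtain ⟨β, F, hF⟩ := h.exists_isRadonFamily hp.injective hpS hcard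
  have hinj : ∀ v : Holes.vertices S, Function.Injective fun o => F o v := fun v =>
    hF.injective_apply h hp.injective hpS hcard (Holes.vertices_subset S v.2) fun o hov =>
      (Holes.mem_vertices.1 v.2).2 (hov ▸ hp.mem_innerPoints o)
  exact hp.exists_isHole_of_hasDeletion h (by lia) (by lia) hF
    (Holes.hasDeletion_of_card_eq_six hinj hV)

/-- Every set of 13 points in ℝ⁵ in general position contains a 9-hole:
`h⁽⁵⁾(9) ≤ 13`. -/
theorem h5_9_le_13 (S : Finset (Fin 5 → ℝ)) (hcard : S.card = 13)
    (hgp : InGeneralPosition 5 S) :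
    ∃ X : Finset (Fin 5 → ℝ), IsHole 5 9 S X := by
  by_contra hno
  have hsplit := Holes.card_vertices_add_card_innerPoints S
  have hvertices := hgp.lt_card_vertices (by lia)
  have hall : ∀ D ⊆ Holes.vertices S, D.card ≤ 1 → 6 ≤ (Holes.innerPoints (S \ D)).card := by
    intro D hD hc
    by_contra! hlt
    exact hno (hgp.exists_isHole_of_card_innerPoints_sdiff_le (m := 4) hcard hD (by lia) (by lia)
      (by lia))
  have hinner : 6 ≤ (Holes.innerPoints S).card := by simpa using hall ∅ (by simp) (by simp)
  have hdelete : ∀ e ∈ Holes.vertices S, 6 ≤ (Holes.innerPoints (S \ {e})).card := fun e he =>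
    hall {e} (by simpa using he) (by simp)
  obtain hi | hi : (Holes.innerPoints S).card = 6 ∨ (Holes.innerPoints S).card = 7 := by lia
  · obtain ⟨e, he, hne⟩ := hgp.exists_innerPoints_sdiff_singleton_ne (by lia) (by lia)
      (Finset.card_pos.1 (by lia))
    exact hne (Finset.eq_of_subset_of_card_le (Holes.innerPoints_mono Finset.sdiff_subset)
      (hi.trans_le (hdelete e he)))
  · exact hno (hgp.exists_isHole_of_card_innerPoints_eq_seven (by lia) hi hdelete)
end
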